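/- Let G be an n-vertex planar graph with no Theta graph on 6 vertices as a subgraph, and suppose G contains a block B on n_b vertices with e(B) ≤ (18/7)n_b - 48/7. Then e(G) ≤ (18/7)n - 48/7. -/

import Mathlib

open SimpleGraph

/-- `H` is a minor of `G`: there is an assignment of disjoint connected branch sets
of `G` to the vertices of `H` realizing all edges of `H`. -/
def HasMinor {V : Type*} {W : Type*} (G : SimpleGraph V) (H : SimpleGraph W) : Prop :=
  ∃ f : V → Option W,
    (∀ w : W, ∃ v, f v = some w) ∧
    (∀ w : W, (G.induce {v | f v = some w}).Preconnected) ∧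
    (∀ w₁ w₂ : W, H.Adj w₁ w₂ →
      ∃ v₁ v₂, f v₁ = some w₁ ∧ f v₂ = some w₂ ∧ G.Adj v₁ v₂)

/-- Planarity, via Wagner's theorem: no `K₅` minor and no `K₃,₃` minor. -/
def IsPlanar {V : Type*} (G : SimpleGraph V) : Prop :=
  ¬ HasMinor G (completeGraph (Fin 5)) ∧
    ¬ HasMinor G (completeBipartiteGraph (Fin 3) (Fin 3))

/-- `G` contains a Theta graph on 6 vertices: a 6-cycle together with a chord
joining two non-consecutive vertices of the cycle. -/
def HasTheta6 {V : Type*} (G : SimpleGraph V) : Prop :=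
  ∃ v : Fin 6 → V, Function.Injective v ∧
    (∀ i : Fin 6, G.Adj (v i) (v (i + 1))) ∧
    ∃ i j : Fin 6, i ≠ j ∧ j ≠ i + 1 ∧ i ≠ j + 1 ∧ G.Adj (v i) (v j)

/-- A set of vertices inducing a connected subgraph which stays connected
(in the weak sense of `Preconnected`) after deleting any one of its vertices. -/
def IsTwoConnSet {V : Type*} (G : SimpleGraph V) (B : Set V) : Prop :=
  B.Nonempty ∧ (G.induce B).Preconnected ∧
    ∀ v ∈ B, (G.induce (B \ {v})).Preconnected

/-- A block of `G`: a maximal subgraph without a cut vertex, described by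
its vertex set. -/
def IsBlock {V : Type*} (G : SimpleGraph V) (B : Set V) : Prop :=
  IsTwoConnSet G B ∧ ∀ C : Set V, IsTwoConnSet G C → B ⊆ C → B = C


open SimpleGraph Finset

namespace ML6

set_option linter.unusedSectionVars false
set_option linter.unusedSimpArgs false
set_option linter.unusedVariables false
set_option linter.unnecessarySimpa false
set_option linter.style.longLine false

/-- Edge vectors over the field with two elements. -/
abbrev EV (V : Type*) := Sym2 V → ZMod 2

theorem zz (a : ZMod 2) : a + a = 0 := CharTwo.add_self_eq_zero a

theorem z01 (a : ZMod 2) : a = 0 ∨ a = 1 := by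
  revert a; decide

theorem z1 {a : ZMod 2} (h : a ≠ 0) : a = 1 := (z01 a).resolve_left h

section base
variable {V : Type*} [Fintype V] [DecidableEq V]

/-- The unit vector of an edge. -/
def sg (a b : V) : EV V := Pi.single s(a, b) 1

theorem sg_comm (a b : V) : sg a b = sg b a := by
  unfold sg; rw [Sym2.eq_swap]

/-- Boundary map. -/
def bd : EV V →ₗ[ZMod 2] (V → ZMod 2) where
  toFun z v := ∑ w, z s(v, w)
  map_add' x y := by ext v; simp [Finset.sum_add_distrib]
  map_smul' c x := by ext v; simp [Finset.mul_sum]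

theorem bd_apply (z : EV V) (v : V) : bd z v = ∑ w, z s(v, w) := rfl

theorem bd_sg {a b : V} (h : a ≠ b) :
    bd (sg a b) = Pi.single a 1 + Pi.single b 1 := by
  ext v
  rw [bd_apply]
  simp only [sg, Pi.add_apply, Pi.single_apply]
  by_cases hva : v = a
  · subst hva
    rw [Finset.sum_eq_single b]
    · simp [h]
    · intro w _ hw
      rw [if_neg]
      intro h'
      rw [Sym2.eq_iff] at h'
      rcases h' with h' | h'
      · exact hw h'.2
      · exact h h'.1
    · simp
  · by_cases hvb : v = b
    · subst hvb
      rw [Finset.sum_eq_single a]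
      · simp [hva, Sym2.eq_swap]
      · intro w _ hw
        rw [if_neg]
        intro h'
        rw [Sym2.eq_iff] at h'
        rcases h' with h' | h'
        · exact hva h'.1
        · exact hw h'.2
      · simp
    · rw [Finset.sum_eq_zero]
      · simp [hva, hvb]
      · intro w _
        rw [if_neg]
        intro h'
        rw [Sym2.eq_iff] at h'
        rcases h' with h' | h'
        · exact hva h'.1
        · exact hvb h'.1

/-- The cycle space of a graph. -/
def Cyc (G : SimpleGraph V) : Submodule (ZMod 2) (EV V) where
  carrier := {z | (∀ e, e ∉ G.edgeSet → z e = 0) ∧ bd z = 0}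
  add_mem' := by
    rintro x y ⟨h1, h2⟩ ⟨h3, h4⟩
    refine ⟨fun e he => by simp [h1 e he, h3 e he], by simp [h2, h4]⟩
  zero_mem' := ⟨fun _ _ => rfl, by simp⟩
  smul_mem' := by
    rintro c x ⟨h1, h2⟩
    refine ⟨fun e he => by simp [h1 e he], by simp [h2]⟩

theorem mem_Cyc {G : SimpleGraph V} {z : EV V} :
    z ∈ Cyc G ↔ (∀ e, e ∉ G.edgeSet → z e = 0) ∧ bd z = 0 := Iff.rfl

theorem Cyc_adj {G : SimpleGraph V} {z : EV V} (h : z ∈ Cyc G) {u w : V}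
    (hz : z s(u, w) ≠ 0) : G.Adj u w := by
  by_contra hc
  exact hz (h.1 _ (by simpa using hc))

theorem Cyc_mono {G H : SimpleGraph V} (h : G ≤ H) : Cyc G ≤ Cyc H := by
  intro z hz
  exact ⟨fun e he => hz.1 e (fun h' => he (SimpleGraph.edgeSet_mono h h')), hz.2⟩

theorem Cyc_bd {G : SimpleGraph V} {z : EV V} (h : z ∈ Cyc G) (v : V) :
    ∑ w, z s(v, w) = 0 := congrFun h.2 v

theorem sg_apply_ne {a b : V} {e : Sym2 V} (h : e ≠ s(a, b)) : sg a b e = 0 := by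
  simp [sg, h]

@[simp] theorem sg_apply_self (a b : V) : sg a b s(a, b) = 1 := by simp [sg]

/-- The vector of a walk. -/
def wv {G : SimpleGraph V} : {u v : V} → G.Walk u v → EV V
  | _, _, .nil => 0
  | u, _, .cons (v := w) _ p => sg u w + wv p

theorem bd_wv {G : SimpleGraph V} {u v : V} (p : G.Walk u v) :
    bd (wv p) = Pi.single u 1 + Pi.single v 1 := by
  induction p with
  | nil => ext w; simp [wv, zz]
  | @cons u v w h p ih =>
    simp only [wv, map_add, ih, bd_sg h.ne]
    ext x
    simp only [Pi.add_apply]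
    have := zz ((Pi.single v 1 : V → ZMod 2) x)
    linear_combination this

theorem wv_notMem {G : SimpleGraph V} {u v : V} (p : G.Walk u v) {e : Sym2 V}
    (h : e ∉ p.edges) : wv p e = 0 := by
  induction p with
  | nil => rfl
  | @cons u v w hh p ih =>
    simp only [Walk.edges_cons, List.mem_cons, not_or] at h
    simp [wv, ih h.2, sg_apply_ne h.1]

theorem wv_mem {G : SimpleGraph V} {u v : V} (p : G.Walk u v) (hp : p.IsTrail) {e : Sym2 V}
    (h : e ∈ p.edges) : wv p e = 1 := by
  induction p with
  | nil => simp at h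
  | @cons u v w hh p ih =>
    rw [Walk.isTrail_cons] at hp
    simp only [Walk.edges_cons, List.mem_cons] at h
    by_cases he : e = s(u, v)
    · subst he
      simp [wv, wv_notMem p hp.2]
    · simp [wv, sg_apply_ne he, ih hp.1 (h.resolve_left he)]

theorem wv_supp {G : SimpleGraph V} {u v : V} (p : G.Walk u v) {e : Sym2 V}
    (h : e ∉ G.edgeSet) : wv p e = 0 :=
  wv_notMem p (fun he => h (p.edges_subset_edgeSet he))

/-- Covering number of an edge. -/
def cov {ι : Type} [Fintype ι] (b : ι → EV V) (e : Sym2 V) : ℕ :=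
  (univ.filter (fun i => b i e ≠ 0)).card

/-- A spanning family of the cycle space covering every edge at most twice. -/
structure Fam (G : SimpleGraph V) {ι : Type} [Fintype ι] (b : ι → EV V) : Prop where
  mem : ∀ i, b i ∈ Cyc G
  span : ∀ z ∈ Cyc G, ∃ c : ι → ZMod 2, z = ∑ i, c i • b i
  cov_le : ∀ e, cov b e ≤ 2

/-- MacLane's condition. -/
def ML (G : SimpleGraph V) : Prop :=
  ∃ (ι : Type) (_ : Fintype ι) (b : ι → EV V), Fam G b

theorem sum_eq_card {ι : Type} (s : Finset ι) (b : ι → EV V) (e : Sym2 V) :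
    ∑ i ∈ s, b i e = ((s.filter (fun i => b i e ≠ 0)).card : ZMod 2) := by
  rw [Finset.card_filter, Nat.cast_sum]
  refine Finset.sum_congr rfl fun i _ => ?_
  rcases z01 (b i e) with h | h <;> simp [h]

theorem ML.complete {G : SimpleGraph V} (h : ML G) :
    ∃ (ι : Type) (_ : Fintype ι) (b : ι → EV V), Fam G b ∧ ∑ i, b i = 0 := by
  obtain ⟨ι, _, b, hb⟩ := h
  refine ⟨Option ι, inferInstance, fun o => o.elim (∑ i, b i) b, ⟨?_, ?_, ?_⟩, ?_⟩
  · rintro (_ | i)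
    · exact Submodule.sum_mem _ fun i _ => hb.mem i
    · exact hb.mem i
  · intro z hz
    obtain ⟨c, hc⟩ := hb.span z hz
    refine ⟨fun o => o.elim 0 c, ?_⟩
    simp [Fintype.sum_option, hc]
  · intro e
    have h1 := hb.cov_le e
    have h2 := sum_eq_card univ b e
    have h3 : cov (fun o : Option ι => o.elim (∑ i, b i) b) e =
        (if (∑ i, b i) e ≠ 0 then 1 else 0) + cov b e := by
      unfold cov
      rw [Finset.card_filter, Finset.card_filter, Fintype.sum_option]
      simp only [Option.elim]
      rfl
    have h4 : (∑ i, b i) e = ((cov b e : ℕ) : ZMod 2) := by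
      rw [Finset.sum_apply]; exact h2
    rw [h3, h4]
    generalize cov b e = k at *
    interval_cases k
    · simp
    · simp
    · have : ((2 : ℕ) : ZMod 2) = 0 := by decide
      rw [this]; simp
  · rw [Fintype.sum_option]
    ext e
    simp [zz]

theorem cov_eq_sum {ι : Type} [Fintype ι] (b : ι → EV V) (e : Sym2 V) :
    cov b e = ∑ i, if b i e ≠ 0 then 1 else 0 := by
  unfold cov; rw [Finset.card_filter]

/-- Dropping one member of a complete family. -/
theorem Fam.drop {G : SimpleGraph V} {ι : Type} [Fintype ι] [DecidableEq ι] {b : ι → EV V}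
    (h : Fam G b) (hs : ∑ i, b i = 0) (i0 : ι) :
    Fam G (fun i => if i = i0 then 0 else b i) ∧
      (∀ e, b i0 e ≠ 0 → cov (fun i => if i = i0 then 0 else b i) e ≤ 1) ∧
      (∀ e, cov (fun i => if i = i0 then 0 else b i) e ≤ cov b e) := by
  have hle : ∀ e, cov (fun i => if i = i0 then 0 else b i) e ≤ cov b e := by
    intro e
    apply Finset.card_le_card
    intro i
    simp only [Finset.mem_filter, Finset.mem_univ, true_and]
    by_cases hi : i = i0 <;> simp [hi]
  refine ⟨⟨?_, ?_, fun e => (hle e).trans (h.cov_le e)⟩, ?_, hle⟩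
  · intro i
    by_cases hi : i = i0
    · simp only [hi, if_true]; exact Submodule.zero_mem _
    · simp only [hi, if_false]; exact h.mem i
  · intro z hz
    obtain ⟨c, hc⟩ := h.span z hz
    refine ⟨fun i => c i - c i0, ?_⟩
    have h1 : z = ∑ i, (c i - c i0) • b i := by
      simp only [sub_smul, Finset.sum_sub_distrib, ← Finset.smul_sum, hs, smul_zero, sub_zero]
      exact hc
    rw [h1]
    refine Finset.sum_congr rfl fun i _ => ?_
    by_cases hi : i = i0 <;> simp [hi]
  · intro e he
    have h2 := h.cov_le e
    have : cov (fun i => if i = i0 then 0 else b i) e < cov b e := by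
      apply Finset.card_lt_card
      rw [Finset.ssubset_iff_of_subset]
      · exact ⟨i0, by simp [he], by simp⟩
      · intro i
        simp only [Finset.mem_filter, Finset.mem_univ, true_and]
        by_cases hi : i = i0 <;> simp [hi]
    omega

theorem cov_pos {ι : Type} [Fintype ι] {b : ι → EV V} {e : Sym2 V} (h : cov b e ≠ 0) :
    ∃ i, b i e ≠ 0 := by
  unfold cov at h
  obtain ⟨i, hi⟩ := Finset.card_pos.mp (Nat.pos_of_ne_zero h)
  exact ⟨i, by simpa using hi⟩

theorem ML.cov_one {G : SimpleGraph V} (h : ML G) (e : Sym2 V) :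
    ∃ (ι : Type) (_ : Fintype ι) (b : ι → EV V), Fam G b ∧ cov b e ≤ 1 := by
  classical
  obtain ⟨ι, _, b, hb, hs⟩ := h.complete
  by_cases h0 : cov b e = 0
  · exact ⟨ι, _, b, hb, by omega⟩
  · obtain ⟨i, hi⟩ := cov_pos h0
    exact ⟨ι, _, _, (hb.drop hs i).1, (hb.drop hs i).2.1 e hi⟩

theorem cov_sum {ι κ : Type} [Fintype ι] [Fintype κ] (a : ι → EV V) (b : κ → EV V) (e : Sym2 V) :
    cov (Sum.elim a b) e = cov a e + cov b e := by
  simp only [cov_eq_sum, Fintype.sum_sum_type, Sum.elim_inl, Sum.elim_inr]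
  rfl

theorem cov_zero_of {G : SimpleGraph V} {ι : Type} [Fintype ι] {b : ι → EV V}
    (h : Fam G b) {e : Sym2 V} (he : e ∉ G.edgeSet) : cov b e = 0 := by
  by_contra hc
  obtain ⟨i, hi⟩ := cov_pos hc
  exact hi ((h.mem i).1 e he)

/-- Union of two families. -/
theorem Fam.union {G : SimpleGraph V} {ι κ : Type} [Fintype ι] [Fintype κ]
    {a : ι → EV V} {b : κ → EV V} (ha : ∀ i, a i ∈ Cyc G) (hb : ∀ i, b i ∈ Cyc G)
    (hsp : ∀ z ∈ Cyc G, ∃ (c : ι → ZMod 2) (d : κ → ZMod 2), z = ∑ i, c i • a i + ∑ i, d i • b i)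
    (hc : ∀ e, cov a e + cov b e ≤ 2) : ML G := by
  refine ⟨ι ⊕ κ, inferInstance, Sum.elim a b, ⟨?_, ?_, ?_⟩⟩
  · rintro (i | i)
    · exact ha i
    · exact hb i
  · intro z hz
    obtain ⟨c, d, h⟩ := hsp z hz
    exact ⟨Sum.elim c d, by simpa using h⟩
  · intro e; rw [cov_sum]; exact hc e

end base
end ML6

open SimpleGraph Finset

namespace ML6

set_option linter.unusedSectionVars false
set_option linter.unusedSimpArgs false
set_option linter.unusedVariables false
set_option linter.unnecessarySimpa false
set_option linter.style.longLine false

theorem HasMinor_mono {V W : Type*} {G H : SimpleGraph V} {K : SimpleGraph W} (h : G ≤ H)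
    (hm : HasMinor G K) : HasMinor H K := by
  obtain ⟨f, h1, h2, h3⟩ := hm
  refine ⟨f, h1, fun w => (h2 w).mono ?_, fun a b hab => ?_⟩
  · intro a b hab
    exact h hab
  · obtain ⟨v1, v2, e1, e2, e3⟩ := h3 a b hab
    exact ⟨v1, v2, e1, e2, h e3⟩

theorem IsPlanar_mono {V : Type*} {G H : SimpleGraph V} (h : G ≤ H) (hH : IsPlanar H) :
    IsPlanar G :=
  ⟨fun hm => hH.1 (HasMinor_mono h hm), fun hm => hH.2 (HasMinor_mono h hm)⟩

/-- Contraction of the edge `xy` into `x` (the vertex `y` stays as an isolated vertex). -/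
def contr {V : Type*} (G : SimpleGraph V) (x y : V) : SimpleGraph V where
  Adj u w := u ≠ w ∧ u ≠ y ∧ w ≠ y ∧ (G.Adj u w ∨ (u = x ∧ G.Adj y w) ∨ (w = x ∧ G.Adj u y))
  symm := ⟨by
    rintro u w ⟨h1, h2, h3, h4⟩
    refine ⟨h1.symm, h3, h2, ?_⟩
    rcases h4 with h | ⟨h, h'⟩ | ⟨h, h'⟩
    · exact Or.inl h.symm
    · exact Or.inr (Or.inr ⟨h, h'.symm⟩)
    · exact Or.inr (Or.inl ⟨h, h'.symm⟩)⟩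
  loopless := ⟨by rintro u ⟨h1, _⟩; exact h1 rfl⟩

theorem HasMinor_contr {V W : Type*} {G : SimpleGraph V} {K : SimpleGraph W}
    (hK : ∀ w, ∃ w', K.Adj w w') {x y : V} (hxy : G.Adj x y)
    (hm : HasMinor (contr G x y) K) : HasMinor G K := by
  classical
  obtain ⟨f, h1, h2, h3⟩ := hm
  have hne := hxy.ne
  let g : V → Option W := fun v => if v = y then f x else f v
  have gy : g y = f x := by simp [g]
  have gx : g x = f x := by simp [g]
  have gv : ∀ v, v ≠ y → g v = f v := fun v hv => by simp [g, hv]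
  have key : ∀ w : W, ∀ a b : {v | f v = some w}, (Walk (G := (contr G x y).induce {v | f v = some w}) a b) →
      ∀ (ha : a.1 ≠ y), ∃ hb : b.1 ≠ y, (G.induce {v | g v = some w}).Reachable
        ⟨a.1, (gv _ ha).trans a.2⟩ ⟨b.1, (gv _ hb).trans b.2⟩ := by
    intro w a b p
    induction p with
    | nil => intro ha; exact ⟨ha, Reachable.refl _⟩
    | @cons a c b hac p ih =>
      intro ha
      have hc : (contr G x y).Adj a.1 c.1 := hac
      obtain ⟨e1, e2, e3, e4⟩ := hc
      obtain ⟨hb, hr⟩ := ih e3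
      refine ⟨hb, Reachable.trans ?_ hr⟩
      rcases e4 with h | ⟨h, h'⟩ | ⟨h, h'⟩
      · exact Adj.reachable (by simpa using h)
      · have hy : g y = some w := by rw [gy, ← h]; exact a.2
        have r1 : (G.induce {v | g v = some w}).Adj ⟨a.1, (gv _ ha).trans a.2⟩ ⟨y, hy⟩ := by
          simpa [h] using hxy
        have r2 : (G.induce {v | g v = some w}).Adj ⟨y, hy⟩ ⟨c.1, (gv _ e3).trans c.2⟩ := by
          simpa using h'
        exact r1.reachable.trans r2.reachable
      · have hy : g y = some w := by rw [gy, ← h]; exact c.2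
        have r1 : (G.induce {v | g v = some w}).Adj ⟨a.1, (gv _ ha).trans a.2⟩ ⟨y, hy⟩ := by
          simpa [h] using h'
        have r2 : (G.induce {v | g v = some w}).Adj ⟨y, hy⟩ ⟨c.1, (gv _ e3).trans c.2⟩ := by
          simpa [h] using hxy.symm
        exact r1.reachable.trans r2.reachable
  refine ⟨g, ?_, ?_, ?_⟩
  · intro w
    obtain ⟨w', hw⟩ := hK w
    obtain ⟨v1, v2, e1, e2, e3⟩ := h3 w w' hw
    exact ⟨v1, by rw [gv v1 e3.2.1, e1]⟩
  · intro w
    have main : ∀ (a b : V) (ha : g a = some w) (hb : g b = some w), a ≠ y → b ≠ y →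
        (G.induce {v | g v = some w}).Reachable ⟨a, ha⟩ ⟨b, hb⟩ := by
      intro a b ha hb hay hby
      obtain ⟨p⟩ := h2 w ⟨a, (gv a hay).symm.trans ha⟩ ⟨b, (gv b hby).symm.trans hb⟩
      obtain ⟨_, hr⟩ := key w _ _ p hay
      exact hr
    have toy : ∀ (hy : g y = some w),
        (G.induce {v | g v = some w}).Reachable ⟨y, hy⟩ ⟨x, by simpa [gx, gy] using hy⟩ := by
      intro hy
      exact Adj.reachable (by simpa using hxy.symm)
    rintro ⟨a, ha⟩ ⟨b, hb⟩
    have ha' : g a = some w := ha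
    have hb' : g b = some w := hb
    by_cases hay : a = y
    · subst hay
      by_cases hby : b = a
      · subst hby; exact Reachable.refl _
      · exact (toy ha').trans (main _ _ _ _ hne hby)
    · by_cases hby : b = y
      · subst hby
        exact (main _ _ _ _ hay hne).trans (toy hb').symm
      · exact main _ _ _ _ hay hby
  · intro w1 w2 hw
    obtain ⟨v1, v2, e1, e2, e3⟩ := h3 w1 w2 hw
    obtain ⟨_, n1, n2, h | ⟨h, h'⟩ | ⟨h, h'⟩⟩ := e3
    · exact ⟨v1, v2, by rw [gv _ n1, e1], by rw [gv _ n2, e2], h⟩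
    · exact ⟨y, v2, by rw [gy, ← h, e1], by rw [gv _ n2, e2], h'⟩
    · exact ⟨v1, y, by rw [gv _ n1, e1], by rw [gy, ← h, e2], h'⟩

theorem IsPlanar_contr {V : Type*} {G : SimpleGraph V} {x y : V} (hxy : G.Adj x y)
    (hG : IsPlanar G) : IsPlanar (contr G x y) := by
  refine ⟨fun hm => hG.1 (HasMinor_contr ?_ hxy hm), fun hm => hG.2 (HasMinor_contr ?_ hxy hm)⟩
  · intro w
    exact ⟨w + 1, by revert w; simp [completeGraph]⟩
  · rintro (w | w)
    · exact ⟨Sum.inr 0, by simp⟩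
    · exact ⟨Sum.inl 0, by simp⟩

section base
variable {V : Type*} [Fintype V] [DecidableEq V]

theorem contr_card {G : SimpleGraph V} {x y : V} (hxy : G.Adj x y) :
    (contr G x y).edgeSet.ncard < G.edgeSet.ncard := by
  have h1 : (contr G x y).edgeSet ⊆
      Set.image (Sym2.map (fun v => if v = y then x else v)) (G.edgeSet \ {s(x, y)}) := by
    intro e
    induction e using Sym2.ind with
    | _ u w =>
    rintro ⟨h1, h2, h3, h | ⟨h, h'⟩ | ⟨h, h'⟩⟩ <;> simp only at h h1 h2 h3
    · refine ⟨s(u, w), ⟨h, ?_⟩, by simp [h2, h3]⟩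
      intro hh
      rcases Sym2.eq_iff.mp hh with hh | hh
      · exact h3 hh.2
      · exact h2 hh.1
    · refine ⟨s(y, w), ⟨h', ?_⟩, by simp [h3, h]⟩
      intro hh
      rcases Sym2.eq_iff.mp hh with hh | hh
      · exact h3 hh.2
      · exact h1 (h.trans hh.2.symm)
    · refine ⟨s(u, y), ⟨h', ?_⟩, by simp [h2, h]⟩
      intro hh
      rcases Sym2.eq_iff.mp hh with hh | hh
      · exact h1 (hh.1.trans h.symm)
      · exact h2 hh.1
  calc (contr G x y).edgeSet.ncard
      ≤ (Set.image (Sym2.map (fun v => if v = y then x else v)) (G.edgeSet \ {s(x, y)})).ncard :=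
        Set.ncard_le_ncard h1 (Set.toFinite _)
    _ ≤ (G.edgeSet \ {s(x, y)}).ncard := Set.ncard_image_le (Set.toFinite _)
    _ < G.edgeSet.ncard := by
        apply Set.ncard_lt_ncard _ (Set.toFinite _)
        refine ⟨Set.sdiff_subset, fun h => ?_⟩
        exact (h (show s(x, y) ∈ G.edgeSet from hxy)).2 rfl

/-- A minimal counterexample to MacLane's criterion. -/
structure MinC (G : SimpleGraph V) : Prop where
  planar : IsPlanar G
  notML : ¬ ML G
  ih : ∀ H : SimpleGraph V, IsPlanar H → H.edgeSet.ncard < G.edgeSet.ncard → ML H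

theorem MinC.sub {G : SimpleGraph V} (h : MinC G) {H : SimpleGraph V} (hle : H ≤ G)
    {a b : V} (hab : G.Adj a b) (hn : ¬ H.Adj a b) : ML H := by
  refine h.ih H (IsPlanar_mono hle h.planar) ?_
  apply Set.ncard_lt_ncard _ (Set.toFinite _)
  refine ⟨SimpleGraph.edgeSet_mono hle, fun hh => hn ?_⟩
  exact hh (show s(a, b) ∈ G.edgeSet from hab)

theorem MinC.con {G : SimpleGraph V} (h : MinC G) {a b : V} (hab : G.Adj a b) :
    ML (contr G a b) :=
  h.ih _ (IsPlanar_contr hab h.planar) (contr_card hab)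

/-- Deleting two vertices (that is, all the edges at them). -/
def del (G : SimpleGraph V) (x y : V) : SimpleGraph V where
  Adj u w := G.Adj u w ∧ u ≠ x ∧ u ≠ y ∧ w ≠ x ∧ w ≠ y
  symm := ⟨by rintro u w ⟨h, h1, h2, h3, h4⟩; exact ⟨h.symm, h3, h4, h1, h2⟩⟩
  loopless := ⟨by rintro u ⟨h, _⟩; exact h.ne rfl⟩

theorem del_le (G : SimpleGraph V) (x y : V) : del G x y ≤ G := fun _ _ h => h.1

theorem symm_sum_zero (f : V → V → ZMod 2) (h1 : ∀ v w, f v w = f w v) (h2 : ∀ v, f v v = 0) :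
    ∑ v, ∑ w, f v w = 0 := by
  rw [← Finset.sum_product']
  refine Finset.sum_involution (fun p _ => (p.2, p.1)) ?_ ?_ ?_ ?_
  · rintro ⟨a, b⟩ _
    simp only
    rw [h1 b a]; exact zz _
  · rintro ⟨a, b⟩ _ hne heq
    simp only [Prod.mk.injEq] at heq
    obtain ⟨rfl, _⟩ := heq
    exact hne (h2 _)
  · simp
  · simp

theorem handshake (z : EV V) (h : ∀ v, z s(v, v) = 0) : ∑ v, bd z v = 0 := by
  simp only [bd_apply]
  exact symm_sum_zero (fun v w => z s(v, w)) (fun v w => by rw [Sym2.eq_swap]) h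

theorem Cyc_diag {G : SimpleGraph V} {z : EV V} (h : z ∈ Cyc G) (v : V) : z s(v, v) = 0 :=
  h.1 _ (by simp)

theorem mem_Cyc' {G : SimpleGraph V} {z : EV V} (h1 : ∀ u w, ¬ G.Adj u w → z s(u, w) = 0)
    (h2 : bd z = 0) : z ∈ Cyc G := by
  refine ⟨fun e => ?_, h2⟩
  induction e using Sym2.ind with
  | _ u w => exact fun h => h1 u w h

theorem Cyc_zero {G : SimpleGraph V} {z : EV V} (h : z ∈ Cyc G) {u w : V} (hn : ¬ G.Adj u w) :
    z s(u, w) = 0 := h.1 _ hn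

/-- Triangle vector. -/
def tri (a b c : V) : EV V := sg a b + sg a c + sg b c

theorem bd_tri {a b c : V} (h1 : a ≠ b) (h2 : a ≠ c) (h3 : b ≠ c) : bd (tri a b c) = 0 := by
  simp only [tri, map_add, bd_sg h1, bd_sg h2, bd_sg h3]
  ext v
  simp only [Pi.add_apply, Pi.zero_apply]
  have ha := zz ((Pi.single a 1 : V → ZMod 2) v)
  have hb := zz ((Pi.single b 1 : V → ZMod 2) v)
  have hc := zz ((Pi.single c 1 : V → ZMod 2) v)
  linear_combination ha + hb + hc

theorem tri_mem {G : SimpleGraph V} {a b c : V} (h1 : G.Adj a b) (h2 : G.Adj a c)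
    (h3 : G.Adj b c) : tri a b c ∈ Cyc G := by
  refine ⟨fun e he => ?_, bd_tri h1.ne h2.ne h3.ne⟩
  have e1 : e ≠ s(a, b) := by rintro rfl; exact he h1
  have e2 : e ≠ s(a, c) := by rintro rfl; exact he h2
  have e3 : e ≠ s(b, c) := by rintro rfl; exact he h3
  simp [tri, sg_apply_ne e1, sg_apply_ne e2, sg_apply_ne e3]

end base
end ML6

open SimpleGraph Finset

namespace ML6

set_option linter.unusedSectionVars false
set_option linter.unusedSimpArgs false
set_option linter.unusedVariables false
set_option linter.unnecessarySimpa false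
set_option linter.style.longLine false

section base
variable {V : Type*} [Fintype V] [DecidableEq V]

theorem sg_off {a b u w : V} (h1 : ¬ (u = a ∧ w = b)) (h2 : ¬ (u = b ∧ w = a)) :
    sg a b s(u, w) = 0 := by
  apply sg_apply_ne
  intro h
  rcases Sym2.eq_iff.mp h with h | h
  · exact h1 h
  · exact h2 h

theorem MinC.glue {G : SimpleGraph V} (h : MinC G) {x y : V} (hxy : G.Adj x y) {w1 w2 : V}
    (h1x : w1 ≠ x) (h1y : w1 ≠ y) (h2x : w2 ≠ x) (h2y : w2 ≠ y)
    (a1 : G.Adj x w1 ∨ G.Adj y w1) (a2 : G.Adj x w2 ∨ G.Adj y w2) :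
    (del G x y).Reachable w1 w2 := by
  classical
  by_contra hnr
  set Q : Set V := {v | (del G x y).Reachable w1 v} with hQ
  have iso : ∀ v, (del G x y).Reachable w1 v → v ≠ x ∧ v ≠ y := by
    rintro v ⟨p⟩
    have : ∀ {a b : V}, (del G x y).Walk a b → a ≠ x → a ≠ y → b ≠ x ∧ b ≠ y := by
      intro a b p
      induction p with
      | nil => intro h1 h2; exact ⟨h1, h2⟩
      | cons hh p ih => intro _ _; exact ih hh.2.2.2.1 hh.2.2.2.2
    exact this p h1x h1y
  have hxQ : x ∉ Q := fun hh => (iso x hh).1 rfl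
  have hyQ : y ∉ Q := fun hh => (iso y hh).2 rfl
  have h1Q : w1 ∈ Q := Reachable.refl _
  have h2Q : w2 ∉ Q := hnr
  have ext : ∀ u w, u ∈ Q → G.Adj u w → w ≠ x → w ≠ y → w ∈ Q := by
    intro u w hu huw hwx hwy
    have hh := iso u hu
    exact Reachable.trans hu (Adj.reachable ⟨huw, hh.1, hh.2, hwx, hwy⟩)
  let G1 : SimpleGraph V :=
    { Adj := fun u w => G.Adj u w ∧ (u ∈ Q ∨ u = x ∨ u = y) ∧ (w ∈ Q ∨ w = x ∨ w = y)
      symm := ⟨fun u w hh => ⟨hh.1.symm, hh.2.2, hh.2.1⟩⟩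
      loopless := ⟨fun u hh => hh.1.ne rfl⟩ }
  let G2 : SimpleGraph V :=
    { Adj := fun u w => G.Adj u w ∧ u ∉ Q ∧ w ∉ Q
      symm := ⟨fun u w hh => ⟨hh.1.symm, hh.2.2, hh.2.1⟩⟩
      loopless := ⟨fun u hh => hh.1.ne rfl⟩ }
  have le1 : G1 ≤ G := fun _ _ hh => hh.1
  have le2 : G2 ≤ G := fun _ _ hh => hh.1
  have ml1 : ML G1 := by
    have hn : ∀ u, ¬ G1.Adj u w2 := fun u hh => by
      rcases hh.2.2 with h' | h' | h'
      · exact h2Q h'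
      · exact h2x h'
      · exact h2y h'
    rcases a2 with a2 | a2
    · exact h.sub le1 a2 (hn _)
    · exact h.sub le1 a2 (hn _)
  have ml2 : ML G2 := by
    have hn : ∀ u, ¬ G2.Adj u w1 := fun u hh => hh.2.2 h1Q
    rcases a1 with a1 | a1
    · exact h.sub le2 a1 (hn _)
    · exact h.sub le2 a1 (hn _)
  obtain ⟨ι, _, a, ha, hca⟩ := ml1.cov_one s(x, y)
  obtain ⟨κ, _, b, hb, hcb⟩ := ml2.cov_one s(x, y)
  apply h.notML
  refine Fam.union (fun i => Cyc_mono le1 (ha.mem i)) (fun i => Cyc_mono le2 (hb.mem i)) ?_ ?_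
  · intro z hz
    let z1 : EV V := fun e => if ∃ v ∈ e, v ∈ Q then z e else 0
    have z1a : ∀ u w, (u ∈ Q ∨ w ∈ Q) → z1 s(u, w) = z s(u, w) := by
      intro u w huw
      have : ∃ v ∈ s(u, w), v ∈ Q := by
        rcases huw with h' | h'
        · exact ⟨u, by simp, h'⟩
        · exact ⟨w, by simp, h'⟩
      simp only [z1, this, if_true]
    have z1b : ∀ u w, u ∉ Q → w ∉ Q → z1 s(u, w) = 0 := by
      intro u w hu hw
      have : ¬ ∃ v ∈ s(u, w), v ∈ Q := by
        rintro ⟨v, hv, hvQ⟩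
        rcases Sym2.mem_iff.mp hv with rfl | rfl
        · exact hu hvQ
        · exact hw hvQ
      simp only [z1, this, if_false]
    have z1c : ∀ u w, ¬ G.Adj u w → z1 s(u, w) = 0 := by
      intro u w huw
      simp only [z1]
      split
      · exact Cyc_zero hz huw
      · rfl
    have hbd : ∀ v, v ≠ x → v ≠ y → bd z1 v = 0 := by
      intro v hvx hvy
      rw [bd_apply]
      by_cases hv : v ∈ Q
      · rw [← Cyc_bd hz v]
        exact Finset.sum_congr rfl fun w _ => z1a v w (Or.inl hv)
      · apply Finset.sum_eq_zero
        intro w _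
        by_cases hw : w ∈ Q
        · apply z1c
          intro hvw
          exact hv (ext w v hw hvw.symm hvx hvy)
        · exact z1b v w hv hw
    have hs := handshake z1 (fun v => z1c v v (by simp))
    have hsum : bd z1 x + bd z1 y = 0 := by
      rw [← Finset.sum_subset (Finset.subset_univ {x, y}), Finset.sum_pair hxy.ne] at hs
      · exact hs
      · intro v _ hv
        simp only [Finset.mem_insert, Finset.mem_singleton, not_or] at hv
        exact hbd v hv.1 hv.2
    have hbd' : bd (z1 + bd z1 x • sg x y) = 0 := by
      rw [map_add, map_smul, bd_sg hxy.ne]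
      ext v
      simp only [Pi.add_apply, Pi.smul_apply, smul_eq_mul, Pi.zero_apply]
      by_cases hvx : v = x
      · subst hvx
        simp [hxy.ne, zz]
      · by_cases hvy : v = y
        · subst hvy
          simp [hvx]
          rw [add_comm]; exact hsum
        · simp [hvx, hvy, hbd]
    have sgx : ∀ u w, u ∈ Q ∨ w ∈ Q → sg x y s(u, w) = 0 := by
      rintro u w hu
      apply sg_off
      · rintro ⟨rfl, rfl⟩
        rcases hu with h' | h'
        · exact hxQ h'
        · exact hyQ h'
      · rintro ⟨rfl, rfl⟩
        rcases hu with h' | h'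
        · exact hyQ h'
        · exact hxQ h'
    have sgn : ∀ u w, ¬ G.Adj u w → sg x y s(u, w) = 0 := by
      rintro u w hu
      apply sg_off
      · rintro ⟨rfl, rfl⟩; exact hu hxy
      · rintro ⟨rfl, rfl⟩; exact hu hxy.symm
    have m1 : z1 + bd z1 x • sg x y ∈ Cyc G1 := by
      refine mem_Cyc' ?_ hbd'
      intro u w huw
      simp only [Pi.add_apply, Pi.smul_apply, smul_eq_mul]
      by_cases hG : G.Adj u w
      · by_cases hu : u ∈ Q
        · exfalso
          apply huw
          refine ⟨hG, Or.inl hu, ?_⟩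
          by_contra hc
          simp only [not_or] at hc
          exact hc.1 (ext u w hu hG hc.2.1 hc.2.2)
        · by_cases hw : w ∈ Q
          · exfalso
            apply huw
            refine ⟨hG, ?_, Or.inl hw⟩
            by_contra hc
            simp only [not_or] at hc
            exact hc.1 (ext w u hw hG.symm hc.2.1 hc.2.2)
          · rw [z1b u w hu hw, sg_off]
            · simp
            · rintro ⟨rfl, rfl⟩; exact huw ⟨hG, by simp, by simp⟩
            · rintro ⟨rfl, rfl⟩; exact huw ⟨hG, by simp, by simp⟩
      · rw [z1c u w hG, sgn u w hG]; simp
    have m2 : z - (z1 + bd z1 x • sg x y) ∈ Cyc G2 := by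
      refine mem_Cyc' ?_ (by rw [map_sub, hbd', hz.2, sub_zero])
      intro u w huw
      simp only [Pi.add_apply, Pi.smul_apply, smul_eq_mul, Pi.sub_apply]
      by_cases hG : G.Adj u w
      · have hu : u ∈ Q ∨ w ∈ Q := by
          by_contra hc
          simp only [not_or] at hc
          exact huw ⟨hG, hc.1, hc.2⟩
        rw [z1a u w hu, sgx u w hu]; simp
      · rw [z1c u w hG, sgn u w hG, Cyc_zero hz hG]; simp
    obtain ⟨c, hc⟩ := ha.span _ m1
    obtain ⟨d, hd⟩ := hb.span _ m2
    refine ⟨c, d, ?_⟩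
    rw [← hc, ← hd]; abel
  · intro e
    by_cases he : e = s(x, y)
    · subst he; omega
    · by_cases h1 : e ∈ G1.edgeSet
      · have h2 : e ∉ G2.edgeSet := by
          intro h2
          induction e using Sym2.ind with
          | _ u w =>
          have h1' : G1.Adj u w := h1
          have h2' : G2.Adj u w := h2
          obtain ⟨_, hu, hw⟩ := h1'
          obtain ⟨hG, hu', hw'⟩ := h2'
          have hu := hu.resolve_left hu'
          have hw := hw.resolve_left hw'
          have hne := hG.ne
          rcases hu with rfl | rfl <;> rcases hw with rfl | rfl
          · exact hne rfl
          · exact he rfl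
          · exact he Sym2.eq_swap
          · exact hne rfl
        rw [cov_zero_of hb h2]
        have := ha.cov_le e
        omega
      · rw [cov_zero_of ha h1]
        have := hb.cov_le e
        omega

theorem ML_of_le {G H : SimpleGraph V} (h : H ≤ G) (h' : Cyc G ≤ Cyc H) (hm : ML H) : ML G := by
  obtain ⟨ι, _, b, hb⟩ := hm
  exact ⟨ι, _, b, fun i => Cyc_mono h (hb.mem i), fun z hz => hb.span z (h' hz), hb.cov_le⟩

/-- Adding a triangle with an edge that is not in the smaller graph. -/
theorem add_tri {G H : SimpleGraph V} (hle : H ≤ G) {ι : Type} [Fintype ι] {b : ι → EV V}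
    (hb : Fam H b) {t : EV V} (ht : t ∈ Cyc G) {u w : V}
    (hsp : ∀ z ∈ Cyc G, z s(u, w) = 0 → z ∈ Cyc H)
    (h1 : t s(u, w) = 1)
    (hc : ∀ e, t e ≠ 0 → cov b e ≤ 1) : ML G := by
  refine Fam.union (κ := Unit) (fun i => Cyc_mono hle (hb.mem i)) (b := fun _ => t) (fun _ => ht) ?_ ?_
  · intro z hz
    have hz' : z - z s(u, w) • t ∈ Cyc G := Submodule.sub_mem _ hz (Submodule.smul_mem _ _ ht)
    obtain ⟨c, hc⟩ := hb.span _ (hsp _ hz' (by simp [h1]))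
    refine ⟨c, fun _ => z s(u, w), ?_⟩
    rw [← hc]; simp
  · intro e
    by_cases he : t e = 0
    · have : cov (fun _ : Unit => t) e = 0 := by simp [cov, he]
      have := hb.cov_le e
      omega
    · have : cov (fun _ : Unit => t) e ≤ 1 := by
        unfold cov
        exact (Finset.card_filter_le _ _).trans (by simp)
      have := hc e he
      omega

/-- Deleting an edge. -/
def dele (G : SimpleGraph V) (a b : V) : SimpleGraph V where
  Adj u w := G.Adj u w ∧ s(u, w) ≠ s(a, b)
  symm := ⟨by rintro u w ⟨h1, h2⟩; exact ⟨h1.symm, by rwa [Sym2.eq_swap]⟩⟩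
  loopless := ⟨by rintro u ⟨h, _⟩; exact h.ne rfl⟩

theorem dele_le (G : SimpleGraph V) (a b : V) : dele G a b ≤ G := fun _ _ h => h.1

theorem dele_mem {G : SimpleGraph V} {a b : V} {z : EV V} (hz : z ∈ Cyc G)
    (h : z s(a, b) = 0) : z ∈ Cyc (dele G a b) := by
  refine mem_Cyc' ?_ hz.2
  intro u w huw
  by_cases hG : G.Adj u w
  · have : s(u, w) = s(a, b) := by
      by_contra hc; exact huw ⟨hG, hc⟩
    rw [this, h]
  · exact Cyc_zero hz hG

theorem MinC.deg1 {G : SimpleGraph V} (h : MinC G) {p a : V} (hpa : G.Adj p a) :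
    ∃ b, b ≠ a ∧ G.Adj p b := by
  by_contra hc
  push Not at hc
  apply h.notML
  refine ML_of_le (dele_le G p a) ?_ (h.sub (dele_le G p a) hpa (fun hh => hh.2 rfl))
  intro z hz
  apply dele_mem hz
  rw [← Cyc_bd hz p, Finset.sum_eq_single a]
  · intro w _ hw
    exact Cyc_zero hz (hc w hw)
  · simp

theorem MinC.deg2 {G : SimpleGraph V} (h : MinC G) {p a b : V} (hpa : G.Adj p a) (hab : a ≠ b)
    (hpb : G.Adj p b) : ∃ c, c ≠ a ∧ c ≠ b ∧ G.Adj p c := by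
  by_contra hc
  push Not at hc
  have hsame : ∀ z ∈ Cyc G, z s(p, a) = z s(p, b) := by
    intro z hz
    have h0 := Cyc_bd hz p
    rw [← Finset.sum_subset (Finset.subset_univ {a, b}), Finset.sum_pair hab] at h0
    · have := zz (z s(p, b))
      linear_combination h0 - this
    · intro v _ hv
      simp only [Finset.mem_insert, Finset.mem_singleton, not_or] at hv
      exact Cyc_zero hz (hc v hv.1 hv.2)
  have d1 := hpa.ne
  have d2 := hpb.ne
  by_cases hadj : G.Adj a b
  · have ml : ML (del G p p) := h.sub (del_le G p p) hpa (fun hh => hh.2.1 rfl)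
    obtain ⟨ι, _, f, hf, hcf⟩ := ml.cov_one s(a, b)
    apply h.notML
    refine add_tri (del_le G p p) hf (tri_mem hpa hpb hadj) (u := p) (w := a) ?_ ?_ ?_
    · intro z hz h0
      have h0' := hsame z hz
      refine mem_Cyc' ?_ hz.2
      intro u w huw
      by_cases hG : G.Adj u w
      · have key : ∀ w, z s(p, w) = 0 := by
          intro w
          by_cases hwa : w = a
          · rw [hwa, h0]
          · by_cases hwb : w = b
            · rw [hwb, ← h0', h0]
            · exact Cyc_zero hz (hc w hwa hwb)
        by_cases hu : u = p
        · rw [hu]; exact key w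
        · by_cases hw : w = p
          · rw [hw, Sym2.eq_swap]; exact key u
          · exact absurd ⟨hG, hu, hu, hw, hw⟩ huw
      · exact Cyc_zero hz hG
    · simp only [tri, Pi.add_apply, sg_apply_self]
      rw [sg_off, sg_off] <;> simp [d1, d2, hab, d1.symm, d2.symm, hab.symm]
    · intro e he
      by_cases heab : e = s(a, b)
      · rw [heab]; exact hcf
      · rw [cov_zero_of hf]
        · omega
        · intro hh
          apply he
          induction e using Sym2.ind with
          | _ u w =>
          have hh' : (del G p p).Adj u w := hh
          simp only [tri, Pi.add_apply, sg_apply_ne heab]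
          rw [sg_off, sg_off]
          · simp
          · exact fun hx => hh'.2.1 hx.1
          · exact fun hx => hh'.2.2.2.1 hx.2
          · exact fun hx => hh'.2.1 hx.1
          · exact fun hx => hh'.2.2.2.1 hx.2
  · obtain ⟨ι, _, f, hf⟩ := h.con hpb.symm
    have tpa : (tri p a b) s(p, a) = 1 := by
      simp only [tri, Pi.add_apply, sg_apply_self]
      rw [sg_off, sg_off] <;> simp [d1, d2, hab, d1.symm, d2.symm, hab.symm]
    have tpb : (tri p a b) s(p, b) = 1 := by
      simp only [tri, Pi.add_apply, sg_apply_self]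
      rw [sg_off, sg_off] <;> simp [d1, d2, hab, d1.symm, d2.symm, hab.symm]
    have tab : (tri p a b) s(a, b) = 1 := by
      simp only [tri, Pi.add_apply, sg_apply_self]
      rw [sg_off, sg_off] <;> simp [d1, d2, hab, d1.symm, d2.symm, hab.symm]
    have toff : ∀ e, e ≠ s(p, a) → e ≠ s(p, b) → e ≠ s(a, b) → (tri p a b) e = 0 := by
      intro e h1 h2 h3
      simp [tri, sg_apply_ne h1, sg_apply_ne h2, sg_apply_ne h3]
    have bt := bd_tri d1 d2 hab
    let L : EV V →ₗ[ZMod 2] EV V :=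
      { toFun := fun z => z + z s(a, b) • tri p a b
        map_add' := fun z z' => by simp only [Pi.add_apply, add_smul]; abel
        map_smul' := fun c z => by simp [smul_add, smul_smul] }
    have Lap : ∀ z, L z = z + z s(a, b) • tri p a b := fun _ => rfl
    have cp : ∀ z ∈ Cyc (contr G b p), ∀ w, z s(p, w) = 0 := fun z hz w =>
      Cyc_zero hz (fun hh => hh.2.1 rfl)
    have cadj : ∀ u w, (contr G b p).Adj u w → s(u, w) = s(a, b) ∨ G.Adj u w := by
      rintro u w ⟨h1, h2, h3, h4 | ⟨h4, h5⟩ | ⟨h4, h5⟩⟩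
      · exact Or.inr h4
      · left
        have hwb : w ≠ b := fun hh => h1 (h4.trans hh.symm)
        have : w = a := by by_contra hwa; exact hc w hwa hwb h5
        rw [this, h4, Sym2.eq_swap]
      · left
        have hwb : u ≠ b := fun hh => h1 (hh.trans h4.symm)
        have : u = a := by by_contra hwa; exact hc u hwa hwb h5.symm
        rw [this, h4]
    apply h.notML
    refine ⟨ι, inferInstance, fun i => L (f i), ?_, ?_, ?_⟩
    · intro i
      refine mem_Cyc' ?_ (by rw [Lap, map_add, map_smul, (hf.mem i).2, bt]; simp)
      intro u w huw
      rw [Lap]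
      simp only [Pi.add_apply, Pi.smul_apply, smul_eq_mul]
      by_cases he : s(u, w) = s(a, b)
      · rw [he, tab, mul_one, zz]
      · rw [toff _ _ _ he, Cyc_zero (hf.mem i) (fun hh => (cadj u w hh).elim he huw)]
        · simp
        · rintro hh
          apply huw
          have : s(u, w) ∈ G.edgeSet := by rw [hh]; exact hpa
          exact this
        · rintro hh
          apply huw
          have : s(u, w) ∈ G.edgeSet := by rw [hh]; exact hpb
          exact this
    · intro z hz
      have hz0 : z s(a, b) = 0 := Cyc_zero hz hadj
      have hm : z + z s(p, a) • tri p a b ∈ Cyc (contr G b p) := by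
        refine mem_Cyc' ?_ (by rw [map_add, map_smul, hz.2, bt]; simp)
        intro u w huw
        simp only [Pi.add_apply, Pi.smul_apply, smul_eq_mul]
        by_cases h1 : s(u, w) = s(p, a)
        · rw [h1, tpa, mul_one, zz]
        · by_cases h2 : s(u, w) = s(p, b)
          · rw [h2, tpb, mul_one, hsame z hz, zz]
          · by_cases h3 : s(u, w) = s(a, b)
            · exfalso
              apply huw
              have : s(u, w) ∈ (contr G b p).edgeSet := by
                rw [h3]
                exact ⟨hab, d1.symm, d2.symm, Or.inr (Or.inr ⟨rfl, hpa.symm⟩)⟩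
              exact this
            · rw [toff _ h1 h2 h3, mul_zero, add_zero]
              apply Cyc_zero hz
              intro hG
              have hup : u ≠ p := by
                rintro rfl
                by_cases hwa : w = a
                · exact h1 (by rw [hwa])
                · by_cases hwb : w = b
                  · exact h2 (by rw [hwb])
                  · exact hc w hwa hwb hG
              have hwp : w ≠ p := by
                rintro rfl
                by_cases hwa : u = a
                · exact h1 (by rw [hwa, Sym2.eq_swap])
                · by_cases hwb : u = b
                  · exact h2 (by rw [hwb, Sym2.eq_swap])
                  · exact hc u hwa hwb hG.symm
              exact huw ⟨hG.ne, hup, hwp, Or.inl hG⟩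
      obtain ⟨c, hc'⟩ := hf.span _ hm
      refine ⟨c, ?_⟩
      have : z = L (z + z s(p, a) • tri p a b) := by
        rw [Lap]
        ext e
        simp only [Pi.add_apply, Pi.smul_apply, smul_eq_mul, tab, hz0, mul_one, zero_add]
        have := zz (z s(p, a) * tri p a b e)
        linear_combination -this
      rw [this, hc', map_sum]
      simp
    · intro e
      by_cases h3 : e = s(a, b)
      · have : cov (fun i => L (f i)) e = 0 := by
          unfold cov
          rw [Finset.card_eq_zero, Finset.filter_eq_empty_iff]
          intro i _
          simp [Lap, h3, tab, zz]
        omega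
      · by_cases h1 : e = s(p, a) ∨ e = s(p, b)
        · have : cov (fun i => L (f i)) e = cov f s(a, b) := by
            unfold cov
            congr 1
            apply Finset.filter_congr
            intro i _
            rcases h1 with h1 | h1
            · simp [Lap, h1, tpa, cp _ (hf.mem i)]
            · simp [Lap, h1, tpb, cp _ (hf.mem i)]
          rw [this]; exact hf.cov_le _
        · push Not at h1
          have : cov (fun i => L (f i)) e = cov f e := by
            unfold cov
            congr 1
            apply Finset.filter_congr
            intro i _
            simp [Lap, toff e h1.1 h1.2 h3]
          rw [this]; exact hf.cov_le _

end base
end ML6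

open SimpleGraph Finset

namespace ML6

set_option linter.unusedSectionVars false
set_option linter.unusedSimpArgs false
set_option linter.unusedVariables false
set_option linter.unnecessarySimpa false
set_option linter.style.longLine false

section base
variable {V : Type*} [Fintype V] [DecidableEq V]

theorem MinC.tri3 {G : SimpleGraph V} (h : MinC G) {p x y p' : V} (hpx : G.Adj p x)
    (hpy : G.Adj p y) (hxy : G.Adj x y) (h1 : p' ≠ x) (h2 : p' ≠ y)
    (hN : ∀ w, G.Adj p w → w = x ∨ w = y ∨ w = p') : False := by
  classical
  have ml : ML (dele G x y) := h.sub (dele_le G x y) hxy (fun hh => hh.2 rfl)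
  have d1 := hpx.ne
  have d2 := hpy.ne
  have d3 := hxy.ne
  suffices hs : ∃ (ι : Type) (_ : Fintype ι) (b : ι → EV V), Fam (dele G x y) b ∧
      cov b s(p, x) ≤ 1 ∧ cov b s(p, y) ≤ 1 by
    obtain ⟨ι, _, b, hb, c1, c2⟩ := hs
    apply h.notML
    refine add_tri (dele_le G x y) hb (tri_mem hpx hpy hxy) (u := x) (w := y) ?_ ?_ ?_
    · exact fun z hz h0 => dele_mem hz h0
    · simp only [tri, Pi.add_apply, sg_apply_self]
      rw [sg_off, sg_off] <;> simp [d1, d2, d3, d1.symm, d2.symm, d3.symm]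
    · intro e he
      by_cases e1 : e = s(p, x)
      · rw [e1]; exact c1
      · by_cases e2 : e = s(p, y)
        · rw [e2]; exact c2
        · by_cases e3 : e = s(x, y)
          · rw [cov_zero_of hb]
            · omega
            · rw [e3]; exact fun hh => hh.2 rfl
          · exfalso
            apply he
            simp [tri, sg_apply_ne e1, sg_apply_ne e2, sg_apply_ne e3]
  obtain ⟨ι, _, b, hb, hs⟩ := ml.complete
  by_cases hex : ∃ i, b i s(p, x) ≠ 0 ∧ b i s(p, y) ≠ 0
  · obtain ⟨i, hi1, hi2⟩ := hex
    exact ⟨ι, _, _, (hb.drop hs i).1, (hb.drop hs i).2.1 _ hi1, (hb.drop hs i).2.1 _ hi2⟩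
  · push Not at hex
    have hrel : ∀ i, b i s(p, x) + b i s(p, y) + b i s(p, p') = 0 := by
      intro i
      have h0 := Cyc_bd (hb.mem i) p
      rw [← Finset.sum_subset (Finset.subset_univ {x, y, p'}), Finset.sum_insert, Finset.sum_pair h2.symm] at h0
      · rw [← h0]; ring
      · simp [d3, h1.symm]
      · intro v _ hv
        simp only [Finset.mem_insert, Finset.mem_singleton, not_or] at hv
        refine Cyc_zero (hb.mem i) (fun hh => ?_)
        have := hN v hh.1
        tauto
    have hsum : cov b s(p, p') = cov b s(p, x) + cov b s(p, y) := by
      simp only [cov_eq_sum]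
      rw [← Finset.sum_add_distrib]
      refine Finset.sum_congr rfl fun i _ => ?_
      have e1 := hrel i
      have e2 := hex i
      revert e1 e2
      generalize b i s(p, x) = A
      generalize b i s(p, y) = B
      generalize b i s(p, p') = C
      revert A B C
      decide
    have hle := hb.cov_le s(p, p')
    by_cases c1 : cov b s(p, x) ≤ 1
    · by_cases c2 : cov b s(p, y) ≤ 1
      · exact ⟨ι, _, b, hb, c1, c2⟩
      · obtain ⟨i, hi⟩ := cov_pos (b := b) (e := s(p, y)) (by omega)
        refine ⟨ι, _, _, (hb.drop hs i).1, ?_, (hb.drop hs i).2.1 _ hi⟩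
        exact ((hb.drop hs i).2.2 _).trans c1
    · obtain ⟨i, hi⟩ := cov_pos (b := b) (e := s(p, x)) (by omega)
      refine ⟨ι, _, _, (hb.drop hs i).1, (hb.drop hs i).2.1 _ hi, ?_⟩
      exact ((hb.drop hs i).2.2 _).trans (by omega)

theorem MinC.two_nbrs {G : SimpleGraph V} (h : MinC G) {x y w v : V} (hxy : G.Adj x y)
    (hwx : w ≠ x) (hwy : w ≠ y) (hwv : G.Adj w v) :
    ∃ a b, a ≠ b ∧ (del G x y).Adj w a ∧ (del G x y).Adj w b := by
  obtain ⟨b, hb1, hb2⟩ := h.deg1 hwv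
  obtain ⟨c, hc1, hc2, hc3⟩ := h.deg2 hwv hb1.symm hb2
  by_contra hcon
  push Not at hcon
  have key : ∀ a b, a ≠ b → G.Adj w a → G.Adj w b → a = x ∨ a = y ∨ b = x ∨ b = y := by
    intro a b hab ha hb
    by_contra hc
    push Not at hc
    exact hcon a b hab ⟨ha, hwx, hwy, hc.1, hc.2.1⟩ ⟨hb, hwx, hwy, hc.2.2.1, hc.2.2.2⟩
  -- `w` is adjacent to both `x` and `y`
  have hx : G.Adj w x := by
    by_contra hn
    have nx : ∀ a, G.Adj w a → a ≠ x := fun a ha hax => hn (hax ▸ ha)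
    have k1 := key _ _ hb1 hb2 hwv
    have k2 := key _ _ hc2 hc3 hb2
    have k3 := key _ _ hc1 hc3 hwv
    have n1 := nx _ hwv
    have n2 := nx _ hb2
    have n3 := nx _ hc3
    grind
  have hy : G.Adj w y := by
    by_contra hn
    have nx : ∀ a, G.Adj w a → a ≠ y := fun a ha hax => hn (hax ▸ ha)
    have k1 := key _ _ hb1 hb2 hwv
    have k2 := key _ _ hc2 hc3 hb2
    have k3 := key _ _ hc1 hc3 hwv
    have n1 := nx _ hwv
    have n2 := nx _ hb2
    have n3 := nx _ hc3
    grind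
  obtain ⟨p', hp1, hp2, hp3⟩ := h.deg2 hx hxy.ne hy
  refine h.tri3 hx hy hxy hp1 hp2 ?_
  intro u hu
  by_contra hc
  push Not at hc
  have := key u p' hc.2.2 hu hp3
  grind

/-- The parity lemma. -/
theorem parity {G : SimpleGraph V} {ι : Type} [Fintype ι] {b : ι → EV V} (hb : Fam G b)
    (hs : ∑ i, b i = 0) (U : ι → ZMod 2) (u : V)
    (hZ : ∀ w, (∑ i, U i • b i) s(u, w) = 0) :
    ∃ t : V → ZMod 2, (∀ i w, b i s(u, w) ≠ 0 → t w = U i) ∧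
      ∀ P ∈ Cyc G, ∑ w, t w * P s(u, w) = 0 := by
  classical
  have hex : ∀ w, ∃ t : ZMod 2, ∀ i, b i s(u, w) ≠ 0 → t = U i := by
    intro w
    set F := univ.filter (fun i => b i s(u, w) ≠ 0) with hF
    have hcard : F.card ≤ 2 := hb.cov_le s(u, w)
    have heven : ((F.card : ℕ) : ZMod 2) = 0 := by
      have := sum_eq_card univ b s(u, w)
      rw [← this, ← Finset.sum_apply, hs]; rfl
    have hU : ∑ i ∈ F, U i = 0 := by
      rw [← hZ w, Finset.sum_apply, hF, Finset.sum_filter]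
      refine Finset.sum_congr rfl fun i _ => ?_
      by_cases hi : b i s(u, w) = 0
      · simp [hi]
      · simp [z1 hi]
    have h3 : F.card = 0 ∨ F.card = 2 := by
      have : F.card ≠ 1 := by
        intro h1; rw [h1] at heven; revert heven; decide
      omega
    rcases h3 with h3 | h3
    · refine ⟨0, fun i hi => ?_⟩
      rw [Finset.card_eq_zero] at h3
      have : i ∈ F := by simp [hF, hi]
      rw [h3] at this; simp at this
    · obtain ⟨i, j, hij, hFij⟩ := Finset.card_eq_two.mp h3
      rw [hFij, Finset.sum_pair hij] at hU
      have hUe : U i = U j := by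
        have := zz (U j)
        linear_combination hU - this
      refine ⟨U i, fun k hk => ?_⟩
      have : k ∈ F := by simp [hF, hk]
      rw [hFij] at this
      simp only [Finset.mem_insert, Finset.mem_singleton] at this
      rcases this with rfl | rfl
      · rfl
      · exact hUe
  choose t ht using hex
  refine ⟨t, fun i w hi => ht w i hi, ?_⟩
  intro P hP
  obtain ⟨c, hc⟩ := hb.span P hP
  have hi : ∀ i, ∑ w, t w * b i s(u, w) = 0 := by
    intro i
    have : ∀ w, t w * b i s(u, w) = U i * b i s(u, w) := by
      intro w
      by_cases h0 : b i s(u, w) = 0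
      · simp [h0]
      · rw [ht w i h0]
    simp only [this]
    rw [← Finset.mul_sum, Cyc_bd (hb.mem i), mul_zero]
  rw [hc]
  simp only [Finset.sum_apply, Pi.smul_apply, smul_eq_mul, Finset.mul_sum]
  rw [Finset.sum_comm]
  apply Finset.sum_eq_zero
  intro i _
  have : ∀ w, t w * (c i * b i s(u, w)) = c i * (t w * b i s(u, w)) := fun w => by ring
  simp only [this]
  rw [← Finset.mul_sum, hi, mul_zero]

/-- Sum against a vector that has exactly two nonzero entries at `u`. -/
theorem two_terms {P : EV V} {u w1 w2 : V} (t : V → ZMod 2) (h12 : w1 ≠ w2)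
    (h1 : P s(u, w1) = 1) (h2 : P s(u, w2) = 1) (h0 : ∀ w, w ≠ w1 → w ≠ w2 → P s(u, w) = 0)
    (hs : ∑ w, t w * P s(u, w) = 0) : t w1 = t w2 := by
  rw [← Finset.sum_subset (Finset.subset_univ {w1, w2}), Finset.sum_pair h12, h1, h2] at hs
  · have := zz (t w2)
    linear_combination hs - this
  · intro v _ hv
    simp only [Finset.mem_insert, Finset.mem_singleton, not_or] at hv
    rw [h0 v hv.1 hv.2, mul_zero]

/-- A cycle through `u` with the two prescribed edges. -/
theorem cyc_through {G K : SimpleGraph V} (hK : K ≤ G) {u w1 w2 : V} (h12 : w1 ≠ w2)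
    (h1 : G.Adj u w1) (h2 : G.Adj u w2) (hu : ∀ w, ¬ K.Adj u w) (hr : K.Reachable w1 w2) :
    ∃ P ∈ Cyc G, P s(u, w1) = 1 ∧ P s(u, w2) = 1 ∧ ∀ w, w ≠ w1 → w ≠ w2 → P s(u, w) = 0 := by
  obtain ⟨p⟩ := hr
  have hw : ∀ w, wv p s(u, w) = 0 := fun w => wv_supp p (hu w)
  refine ⟨sg u w1 + wv p + sg u w2, mem_Cyc' ?_ ?_, ?_, ?_, ?_⟩
  · intro a b hab
    simp only [Pi.add_apply]
    rw [sg_off, sg_off, wv_supp p (fun hh => hab (hK hh))]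
    · simp
    · rintro ⟨rfl, rfl⟩; exact hab h2
    · rintro ⟨rfl, rfl⟩; exact hab h2.symm
    · rintro ⟨rfl, rfl⟩; exact hab h1
    · rintro ⟨rfl, rfl⟩; exact hab h1.symm
  · rw [map_add, map_add, bd_wv, bd_sg h1.ne, bd_sg h2.ne]
    ext v
    simp only [Pi.add_apply, Pi.zero_apply]
    have ha := zz ((Pi.single u 1 : V → ZMod 2) v)
    have hb := zz ((Pi.single w1 1 : V → ZMod 2) v)
    have hc := zz ((Pi.single w2 1 : V → ZMod 2) v)
    linear_combination ha + hb + hc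
  · simp only [Pi.add_apply, hw, sg_apply_self]
    rw [sg_off] <;> simp [h12, h1.ne, h2.ne, h1.ne.symm, h2.ne.symm]
  · simp only [Pi.add_apply, hw, sg_apply_self]
    rw [sg_off] <;> simp [h12.symm, h1.ne, h2.ne, h1.ne.symm, h2.ne.symm]
  · intro w n1 n2
    simp only [Pi.add_apply, hw]
    rw [sg_off, sg_off] <;> simp [n1, n2, h1.ne, h2.ne]

/-- A cycle through the edge `xy`. -/
theorem cyc_through2 {G K : SimpleGraph V} (hK : K ≤ G) {x y w1 w2 : V} (hxy : G.Adj x y)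
    (h1 : G.Adj x w1) (h2 : G.Adj y w2) (n1 : w1 ≠ y) (n2 : w2 ≠ x)
    (hx : ∀ w, ¬ K.Adj x w) (hy : ∀ w, ¬ K.Adj y w) (hr : K.Reachable w1 w2) :
    ∃ P ∈ Cyc G, P s(x, y) = 1 ∧ P s(x, w1) = 1 ∧ P s(y, w2) = 1 ∧
      (∀ w, w ≠ y → w ≠ w1 → P s(x, w) = 0) ∧ (∀ w, w ≠ x → w ≠ w2 → P s(y, w) = 0) := by
  obtain ⟨p⟩ := hr
  have hwx : ∀ w, wv p s(x, w) = 0 := fun w => wv_supp p (hx w)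
  have hwy : ∀ w, wv p s(y, w) = 0 := fun w => wv_supp p (hy w)
  have d1 := hxy.ne
  have d2 := h1.ne
  have d3 := h2.ne
  refine ⟨sg x y + sg x w1 + wv p + sg y w2, mem_Cyc' ?_ ?_, ?_, ?_, ?_, ?_, ?_⟩
  · intro a b hab
    simp only [Pi.add_apply]
    rw [sg_off, sg_off, sg_off, wv_supp p (fun hh => hab (hK hh))]
    · simp
    · rintro ⟨rfl, rfl⟩; exact hab h2
    · rintro ⟨rfl, rfl⟩; exact hab h2.symm
    · rintro ⟨rfl, rfl⟩; exact hab h1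
    · rintro ⟨rfl, rfl⟩; exact hab h1.symm
    · rintro ⟨rfl, rfl⟩; exact hab hxy
    · rintro ⟨rfl, rfl⟩; exact hab hxy.symm
  · rw [map_add, map_add, map_add, bd_wv, bd_sg h1.ne, bd_sg h2.ne, bd_sg hxy.ne]
    ext v
    simp only [Pi.add_apply, Pi.zero_apply]
    have ha := zz ((Pi.single x 1 : V → ZMod 2) v)
    have hb := zz ((Pi.single w1 1 : V → ZMod 2) v)
    have hc := zz ((Pi.single w2 1 : V → ZMod 2) v)
    have hd := zz ((Pi.single y 1 : V → ZMod 2) v)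
    linear_combination ha + hb + hc + hd
  · simp only [Pi.add_apply, hwx, sg_apply_self]
    rw [sg_off, sg_off] <;> simp [d1, d2, d3, n1, n2, n1.symm, n2.symm, d1.symm]
  · simp only [Pi.add_apply, hwx, sg_apply_self]
    rw [sg_off, sg_off] <;> simp [d1, d2, d3, n1, n2, n1.symm, n2.symm, d1.symm, n2.symm]
  · simp only [Pi.add_apply, hwy, sg_apply_self]
    rw [sg_off, sg_off] <;> simp [d1, d2, d3, n1, n2, n1.symm, n2.symm, d1.symm]
  · intro w m1 m2
    simp only [Pi.add_apply, hwx]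
    rw [sg_off, sg_off, sg_off] <;> simp [m1, m2, d1, d2, n2.symm]
  · intro w m1 m2
    simp only [Pi.add_apply, hwy]
    rw [sg_off, sg_off, sg_off] <;> simp [m1, m2, d1, d3, d1.symm, n1.symm]

end base
end ML6

open SimpleGraph Finset

namespace ML6

set_option linter.unusedSectionVars false
set_option linter.unusedSimpArgs false
set_option linter.unusedVariables false
set_option linter.unnecessarySimpa false
set_option linter.style.longLine false

section base
variable {V : Type*} [Fintype V] [DecidableEq V]

/-- Pushing a vector to the contraction. -/
def push (x y : V) (z : EV V) : EV V :=
  z + ∑ w ∈ univ.filter (fun w => w ≠ x ∧ w ≠ y), z s(y, w) • tri x y w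

theorem tri_apply_other {x y w : V} {u v : V} (h1 : s(u, v) ≠ s(x, y)) (h2 : s(u, v) ≠ s(x, w))
    (h3 : s(u, v) ≠ s(y, w)) : tri x y w s(u, v) = 0 := by
  simp [tri, sg_apply_ne h1, sg_apply_ne h2, sg_apply_ne h3]

theorem push_off {x y : V} (z : EV V) {u v : V} (hux : u ≠ x) (huy : u ≠ y) (hvx : v ≠ x)
    (hvy : v ≠ y) : push x y z s(u, v) = z s(u, v) := by
  unfold push
  simp only [Pi.add_apply, Finset.sum_apply, Pi.smul_apply, smul_eq_mul]
  rw [Finset.sum_eq_zero, add_zero]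
  intro w _
  rw [tri_apply_other, mul_zero] <;>
    (intro h; rcases Sym2.eq_iff.mp h with ⟨h, h'⟩ | ⟨h, h'⟩ <;> first | exact hux h | exact huy h | exact hvx h' | exact hvy h')

theorem push_mem {G : SimpleGraph V} {x y : V} (hxy : G.Adj x y) {z : EV V} (hz : z ∈ Cyc G) :
    push x y z ∈ Cyc (contr G x y) := by
  have hne := hxy.ne
  have hY : ∀ v, push x y z s(y, v) = 0 := by
    intro v
    unfold push
    simp only [Pi.add_apply, Finset.sum_apply, Pi.smul_apply, smul_eq_mul]
    by_cases hvx : v = x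
    · subst hvx
      have e1 : ∀ w ∈ univ.filter (fun w => w ≠ v ∧ w ≠ y), z s(y, w) * tri v y w s(y, v) = z s(y, w) := by
        intro w hw
        simp only [Finset.mem_filter, Finset.mem_univ, true_and] at hw
        have : tri v y w s(y, v) = 1 := by
          rw [Sym2.eq_swap]
          simp only [tri, Pi.add_apply, sg_apply_self]
          rw [sg_off, sg_off] <;> simp [hne, hw.1, hw.2, hne.symm, Ne.symm hw.1, Ne.symm hw.2]
        rw [this, mul_one]
      rw [Finset.sum_congr rfl e1]
      have h0 := Cyc_bd hz y
      rw [← Finset.sum_filter_add_sum_filter_not univ (fun w => w ≠ v ∧ w ≠ y)] at h0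
      have h1 : ∑ w ∈ univ.filter (fun w => ¬ (w ≠ v ∧ w ≠ y)), z s(y, w) = z s(y, v) := by
        rw [Finset.sum_eq_single v]
        · intro w hw hwv
          simp only [Finset.mem_filter, Finset.mem_univ, true_and] at hw
          have : w = y := by tauto
          rw [this]; exact Cyc_diag hz y
        · intro hh; simp at hh
      rw [h1] at h0
      rw [add_comm]; exact h0
    · by_cases hvy : v = y
      · subst hvy
        rw [Cyc_diag hz, zero_add]
        apply Finset.sum_eq_zero
        intro w hw
        simp only [Finset.mem_filter, Finset.mem_univ, true_and] at hw
        rw [tri_apply_other, mul_zero] <;> simp [hne.symm, Ne.symm hw.2, hne]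
      · rw [Finset.sum_eq_single v]
        · have : tri x y v s(y, v) = 1 := by
            simp only [tri, Pi.add_apply, sg_apply_self]
            rw [sg_off, sg_off] <;> simp [hne, hvx, hvy, hne.symm]
          rw [this, mul_one, zz]
        · intro w hw hwv
          rw [tri_apply_other, mul_zero] <;> simp [hne, hvx, hvy, hne.symm, hwv, Ne.symm hwv]
        · intro hh; simp [hvx, hvy] at hh
  have hX : ∀ v, v ≠ x → v ≠ y → push x y z s(x, v) = z s(x, v) + z s(y, v) := by
    intro v hvx hvy
    unfold push
    simp only [Pi.add_apply, Finset.sum_apply, Pi.smul_apply, smul_eq_mul]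
    rw [Finset.sum_eq_single v]
    · have : tri x y v s(x, v) = 1 := by
        simp only [tri, Pi.add_apply, sg_apply_self]
        rw [sg_off, sg_off] <;> simp [hne, hvx, hvy, hne.symm]
      rw [this, mul_one]
    · intro w hw hwv
      rw [tri_apply_other, mul_zero] <;> simp [hne, hvx, hvy, hne.symm, hwv, Ne.symm hwv]
    · intro hh; simp [hvx, hvy] at hh
  have hXX : push x y z s(x, x) = 0 := by
    unfold push
    simp only [Pi.add_apply, Finset.sum_apply, Pi.smul_apply, smul_eq_mul]
    rw [Cyc_diag hz, zero_add]
    apply Finset.sum_eq_zero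
    intro w hw
    simp only [Finset.mem_filter, Finset.mem_univ, true_and] at hw
    rw [tri_apply_other, mul_zero] <;> simp [hne.symm, Ne.symm hw.1, hne]
  have hXall : ∀ v, ¬ (contr G x y).Adj x v → push x y z s(x, v) = 0 := by
    intro v hn
    by_cases hvx : v = x
    · rw [hvx]; exact hXX
    · by_cases hvy : v = y
      · rw [hvy, Sym2.eq_swap]; exact hY x
      · rw [hX v hvx hvy, Cyc_zero hz, Cyc_zero hz, add_zero]
        · exact fun hh => hn ⟨Ne.symm hvx, hne, hvy, Or.inr (Or.inl ⟨rfl, hh⟩)⟩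
        · exact fun hh => hn ⟨Ne.symm hvx, hne, hvy, Or.inl hh⟩
  refine mem_Cyc' ?_ ?_
  · intro u v hn
    by_cases huy : u = y
    · rw [huy]; exact hY v
    · by_cases hvy : v = y
      · rw [hvy, Sym2.eq_swap]; exact hY u
      · by_cases hux : u = x
        · subst hux; exact hXall v hn
        · by_cases hvx : v = x
          · subst hvx; rw [Sym2.eq_swap]; exact hXall u (fun hh => hn hh.symm)
          · rw [push_off z hux huy hvx hvy]
            exact Cyc_zero hz (fun hh => hn ⟨hh.ne, huy, hvy, Or.inl hh⟩)
  · unfold push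
    rw [map_add, hz.2, zero_add, map_sum]
    apply Finset.sum_eq_zero
    intro w hw
    simp only [Finset.mem_filter, Finset.mem_univ, true_and] at hw
    rw [map_smul, bd_tri hne (Ne.symm hw.1) (Ne.symm hw.2), smul_zero]

theorem del_le_contr (G : SimpleGraph V) (x y : V) : del G x y ≤ contr G x y :=
  fun u w h => ⟨h.1.ne, h.2.2.1, h.2.2.2.2, Or.inl h.1⟩

theorem contr_x {G : SimpleGraph V} {x y w : V} (h : (contr G x y).Adj x w) :
    w ≠ x ∧ w ≠ y ∧ (G.Adj x w ∨ G.Adj y w) := by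
  obtain ⟨h1, h2, h3, h4 | ⟨_, h4⟩ | ⟨h4, _⟩⟩ := h
  · exact ⟨h1.symm, h3, Or.inl h4⟩
  · exact ⟨h1.symm, h3, Or.inr h4⟩
  · exact absurd h4.symm h1

theorem MinC.star_span {G : SimpleGraph V} (h : MinC G) {x y : V} (hxy : G.Adj x y)
    {ι : Type} [Fintype ι] {b : ι → EV V} (hb : Fam (contr G x y) b) (hs : ∑ i, b i = 0)
    {z : EV V} (hz : z ∈ Cyc (del G x y)) :
    ∃ U : ι → ZMod 2, z = ∑ i, U i • b i ∧ ∀ i, (∃ w, b i s(x, w) ≠ 0) → U i = 0 := by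
  classical
  obtain ⟨U, hU⟩ := hb.span z (Cyc_mono (del_le_contr G x y) hz)
  obtain ⟨t, ht1, ht2⟩ := parity hb hs U x (by
    intro w; rw [← hU]; exact Cyc_zero hz (fun hh => hh.2.1 rfl))
  have hconst : ∀ w1 w2, (contr G x y).Adj x w1 → (contr G x y).Adj x w2 → t w1 = t w2 := by
    intro w1 w2 h1 h2
    by_cases h12 : w1 = w2
    · rw [h12]
    · have c1 := contr_x h1
      have c2 := contr_x h2
      obtain ⟨P, hP, p1, p2, p3⟩ := cyc_through (del_le_contr G x y) h12 h1 h2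
        (fun w hh => hh.2.1 rfl) (h.glue hxy c1.1 c1.2.1 c2.1 c2.2.1 c1.2.2 c2.2.2)
      exact two_terms t h12 p1 p2 p3 (ht2 P hP)
  have hcases : ∃ t0 : ZMod 2, ∀ i, (∃ w, b i s(x, w) ≠ 0) → U i = t0 := by
    by_cases hN : ∃ w, (contr G x y).Adj x w
    · obtain ⟨w0, hw0⟩ := hN
      refine ⟨t w0, ?_⟩
      rintro i ⟨w, hw⟩
      rw [← ht1 i w hw]
      exact hconst _ _ (Cyc_adj (hb.mem i) hw) hw0
    · refine ⟨0, ?_⟩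
      rintro i ⟨w, hw⟩
      exact absurd ⟨w, Cyc_adj (hb.mem i) hw⟩ hN
  obtain ⟨t0, ht0⟩ := hcases
  refine ⟨fun i => U i - t0, ?_, fun i hi => by simp [ht0 i hi]⟩
  simp only [sub_smul, Finset.sum_sub_distrib, ← Finset.smul_sum, hs, smul_zero, sub_zero]
  exact hU

theorem MinC.star {G : SimpleGraph V} (h : MinC G) {x y : V} (hxy : G.Adj x y)
    {z z' : EV V} (hz : z ∈ Cyc (del G x y)) (hz' : z' ∈ Cyc (del G x y)) :
    z * z' ∈ Cyc (del G x y) := by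
  classical
  obtain ⟨ι, _, b, hb, hs⟩ := (h.con hxy).complete
  have hne := hxy.ne
  -- faces avoiding the contracted vertex
  let T : Finset ι := univ.filter (fun i => ∀ w, b i s(x, w) = 0)
  have hT : ∀ i, i ∈ T ↔ ∀ w, b i s(x, w) = 0 := by intro i; simp [T]
  have hspan : ∀ z ∈ Cyc (del G x y), ∃ U : ι → ZMod 2, z = ∑ i ∈ T, U i • b i := by
    intro z hz
    obtain ⟨U, hU, hU'⟩ := h.star_span hxy hb hs hz
    refine ⟨U, ?_⟩
    rw [hU]
    symm
    apply Finset.sum_subset (Finset.subset_univ T)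
    intro i _ hi
    rw [hT] at hi
    push Not at hi
    rw [hU' i hi, zero_smul]
  have hTmem : ∀ i ∈ T, b i ∈ Cyc (del G x y) := by
    intro i hi
    rw [hT] at hi
    refine mem_Cyc' ?_ (hb.mem i).2
    intro u w huw
    by_contra hc
    have hadj := Cyc_adj (hb.mem i) hc
    have hux : u ≠ x := by rintro rfl; exact hc (hi w)
    have hwx : w ≠ x := by rintro rfl; rw [Sym2.eq_swap] at hc; exact hc (hi u)
    obtain ⟨h1, h2, h3, h4 | ⟨h4, _⟩ | ⟨h4, _⟩⟩ := hadj
    · exact huw ⟨h4, hux, h2, hwx, h3⟩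
    · exact hux h4
    · exact hwx h4
  let cT : Sym2 V → ℕ := fun e => (T.filter (fun i => b i e ≠ 0)).card
  by_cases hK : ∀ e, cT e ≤ 1
  · obtain ⟨U, hU⟩ := hspan z hz
    obtain ⟨U', hU'⟩ := hspan z' hz'
    have : z * z' = ∑ i ∈ T, (U i * U' i) • b i := by
      ext e
      rw [Pi.mul_apply, hU, hU']
      simp only [Finset.sum_apply, Pi.smul_apply, smul_eq_mul]
      by_cases hex : ∃ i ∈ T, b i e ≠ 0
      · obtain ⟨i, hiT, hi⟩ := hex
        have huniq : ∀ j ∈ T, j ≠ i → b j e = 0 := by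
          intro j hj hji
          by_contra hc
          have h1 := hK e
          have := (Finset.card_le_one.mp h1) i (by simp [hiT, hi]) j (by simp [hj, hc])
          exact hji this.symm
        rw [Finset.sum_eq_single i, Finset.sum_eq_single i, Finset.sum_eq_single i]
        · rw [z1 hi]; ring
        all_goals first
          | (intro hh; exact absurd hiT hh)
          | (intro j hj hji; rw [huniq j hj hji, mul_zero])
      · push Not at hex
        rw [Finset.sum_eq_zero, Finset.sum_eq_zero, Finset.sum_eq_zero, mul_zero]
        all_goals
          intro j hj
          rw [hex j hj, mul_zero]
    rw [this]
    exact Submodule.sum_mem _ fun i hi => Submodule.smul_mem _ _ (hTmem i hi)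
  · exfalso
    push Not at hK
    obtain ⟨e0, he0⟩ := hK
    have cT_le : ∀ e, cT e ≤ 2 := by
      intro e
      refine le_trans (Finset.card_le_card ?_) (hb.cov_le e)
      intro i
      simp only [Finset.mem_filter, Finset.mem_univ, true_and]
      exact fun hh => hh.2
    -- faces outside T vanish on K2
    have hSK : ∀ e, 2 ≤ cT e → ∀ i, i ∉ T → b i e = 0 := by
      intro e he i hi
      by_contra hc
      have h1 := hb.cov_le e
      have : (insert i (T.filter (fun i => b i e ≠ 0))).card ≤ cov b e := by
        apply Finset.card_le_card
        intro j
        simp only [Finset.mem_insert, Finset.mem_filter, Finset.mem_univ, true_and]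
        rintro (rfl | hh)
        · exact hc
        · exact hh.2
      rw [Finset.card_insert_of_notMem (by simp [hi])] at this
      have h2 : (T.filter (fun i => b i e ≠ 0)).card = cT e := rfl
      omega
    have hKH : ∀ e, 2 ≤ cT e → e ∈ (del G x y).edgeSet := by
      intro e he
      have : 0 < (T.filter (fun i => b i e ≠ 0)).card := lt_of_lt_of_le (by norm_num) he
      obtain ⟨i, hi⟩ := Finset.card_pos.mp this
      simp only [Finset.mem_filter] at hi
      by_contra hc
      exact hi.2 ((hTmem i hi.1).1 e hc)
    let rem : SimpleGraph V → SimpleGraph V := fun K =>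
      { Adj := fun u w => K.Adj u w ∧ cT s(u, w) ≤ 1
        symm := ⟨fun u w hh => ⟨hh.1.symm, by rw [Sym2.eq_swap]; exact hh.2⟩⟩
        loopless := ⟨fun u hh => hh.1.ne rfl⟩ }
    have A1le : rem G ≤ G := fun _ _ hh => hh.1
    have H1le : rem (del G x y) ≤ rem G := fun _ _ hh => ⟨hh.1.1, hh.2⟩
    have mlA : ML (rem G) := by
      induction e0 using Sym2.ind with
      | _ u w =>
      have : (del G x y).Adj u w := hKH _ he0
      exact h.sub A1le this.1 (fun hh => absurd hh.2 (Nat.not_le.mpr he0))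
    -- connectivity of the neighbours in H - K2
    have isoH1 : ∀ {a c : V}, (rem (del G x y)).Walk a c → a ≠ x → c ≠ x := by
      intro a c p
      induction p with
      | nil => exact id
      | cons hh p ih => intro _; exact ih hh.1.2.2.2.1
    have conn : ∀ w1 w2, w1 ≠ x → w1 ≠ y → w2 ≠ x → w2 ≠ y → (G.Adj x w1 ∨ G.Adj y w1) →
        (G.Adj x w2 ∨ G.Adj y w2) → (rem (del G x y)).Reachable w1 w2 := by
      intro w1 w2 n1 n2 n3 n4 a1 a2
      by_cases h12 : w1 = w2
      · rw [h12]
      let q : V → ZMod 2 := fun v => if (rem (del G x y)).Reachable w1 v then 1 else 0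
      have qx : q x = 0 := by
        simp only [q]
        rw [if_neg]
        rintro ⟨p⟩
        exact isoH1 p n1 rfl
      have qi : ∀ i, ∑ w, q w * b i s(x, w) = 0 := by
        intro i
        by_cases hi : i ∈ T
        · rw [hT] at hi
          simp [hi]
        · have h0 : ∑ v, q v * (∑ w, b i s(v, w)) = 0 := by
            apply Finset.sum_eq_zero
            intro v _
            rw [Cyc_bd (hb.mem i), mul_zero]
          let f : V → V → ZMod 2 := fun v w => if v = x ∨ w = x then 0 else q v * b i s(v, w)
          have hf := symm_sum_zero f (by
            intro v w
            simp only [f]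
            by_cases hc : v = x ∨ w = x
            · rw [if_pos hc, if_pos hc.symm]
            · rw [if_neg hc, if_neg (fun hh => hc hh.symm), Sym2.eq_swap (a := w)]
              by_cases hbi : b i s(v, w) = 0
              · rw [hbi, mul_zero, mul_zero]
              · have hadj : (rem (del G x y)).Adj v w := by
                  push Not at hc
                  obtain ⟨m1, m2, m3, m4 | ⟨m4, _⟩ | ⟨m4, _⟩⟩ := Cyc_adj (hb.mem i) hbi
                  · refine ⟨⟨m4, hc.1, m2, hc.2, m3⟩, ?_⟩
                    by_contra hcc
                    exact hbi (hSK _ (by omega) i hi)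
                  · exact absurd m4 hc.1
                  · exact absurd m4 hc.2
                have : q v = q w := by
                  simp only [q]
                  by_cases hr : (rem (del G x y)).Reachable w1 v
                  · rw [if_pos hr, if_pos (hr.trans hadj.reachable)]
                  · rw [if_neg hr, if_neg (fun hr' => hr (hr'.trans hadj.symm.reachable))]
                rw [this]) (by
            intro v
            simp only [f]
            rw [Cyc_diag (hb.mem i), mul_zero, ite_self])
          have hrow : ∀ v, q v * (∑ w, b i s(v, w)) = q v * b i s(x, v) + ∑ w, f v w := by
            intro v
            by_cases hv : v = x
            · subst hv
              rw [qx]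
              simp [f]
            · rw [Finset.mul_sum, ← Finset.add_sum_erase univ _ (Finset.mem_univ x),
                ← Finset.add_sum_erase univ (f v) (Finset.mem_univ x), Sym2.eq_swap (a := v)]
              have e1 : f v x = 0 := by simp [f]
              rw [e1, zero_add]
              congr 1
              refine Finset.sum_congr rfl fun w hw => ?_
              simp only [Finset.mem_erase] at hw
              simp [f, hv, hw.1]
          simp only [hrow, Finset.sum_add_distrib, hf, add_zero] at h0
          exact h0
      have hc1 : (contr G x y).Adj x w1 := ⟨n1.symm, hne, n2, by tauto⟩
      have hc2 : (contr G x y).Adj x w2 := ⟨n3.symm, hne, n4, by tauto⟩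
      obtain ⟨P, hP, p1, p2, p3⟩ := cyc_through (del_le_contr G x y) h12 hc1 hc2
        (fun w hh => hh.2.1 rfl) (h.glue hxy n1 n2 n3 n4 a1 a2)
      have hsumP : ∑ w, q w * P s(x, w) = 0 := by
        obtain ⟨c, hc⟩ := hb.span P hP
        rw [hc]
        simp only [Finset.sum_apply, Pi.smul_apply, smul_eq_mul, Finset.mul_sum]
        rw [Finset.sum_comm]
        apply Finset.sum_eq_zero
        intro i _
        have : ∀ w, q w * (c i * b i s(x, w)) = c i * (q w * b i s(x, w)) := fun w => by ring
        simp only [this]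
        rw [← Finset.mul_sum, qi, mul_zero]
      have hq := two_terms q h12 p1 p2 p3 hsumP
      have q1 : q w1 = 1 := by simp [q]
      rw [q1] at hq
      by_contra hc
      simp [q, hc] at hq
    -- the second family
    obtain ⟨κ, _, a, ha, has⟩ := mlA.complete
    let D : EV V := ∑ i ∈ T, b i
    have Dapp : ∀ e, D e = ((cT e : ℕ) : ZMod 2) := by
      intro e
      simp only [D, Finset.sum_apply]
      exact sum_eq_card T b e
    have hDH : D ∈ Cyc (del G x y) := Submodule.sum_mem _ fun i hi => hTmem i hi
    have hDA : D ∈ Cyc (rem G) := by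
      refine mem_Cyc' ?_ hDH.2
      intro u w huw
      by_cases hG : (del G x y).Adj u w
      · have h2 : cT s(u, w) = 2 := by
          have := cT_le s(u, w)
          by_contra hc
          exact huw ⟨hG.1, by omega⟩
        rw [Dapp, h2]; decide
      · exact Cyc_zero hDH hG
    obtain ⟨W0, hW0⟩ := ha.span D hDA
    obtain ⟨tx, tx1, tx2⟩ := parity ha has W0 x (by
      intro w; rw [← hW0]; exact Cyc_zero hDH (fun hh => hh.2.1 rfl))
    obtain ⟨ty, ty1, ty2⟩ := parity ha has W0 y (by
      intro w; rw [← hW0]; exact Cyc_zero hDH (fun hh => hh.2.2.1 rfl))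
    have inA : ∀ u w, G.Adj u w → (u = x ∨ u = y) → (rem G).Adj u w := by
      intro u w huw hu
      refine ⟨huw, ?_⟩
      by_contra hc
      have h1 : (del G x y).Adj u w := hKH s(u, w) (by omega)
      rcases hu with hu | hu
      · exact h1.2.1 hu
      · exact h1.2.2.1 hu
    obtain ⟨x1, hx1, hx1'⟩ := h.deg1 hxy
    obtain ⟨y1, hy1, hy1'⟩ := h.deg1 hxy.symm
    have noX : ∀ w, ¬ (rem (del G x y)).Adj x w := fun w hh => hh.1.2.1 rfl
    have noY : ∀ w, ¬ (rem (del G x y)).Adj y w := fun w hh => hh.1.2.2.1 rfl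
    have cross : ∀ w1 w2, G.Adj x w1 → w1 ≠ y → G.Adj y w2 → w2 ≠ x →
        tx y = tx w1 ∧ ty x = ty w2 ∧ tx y = ty x := by
      intro w1 w2 m1 m2 m3 m4
      obtain ⟨P, hP, p1, p2, p3, p4, p5⟩ := cyc_through2 H1le (inA _ _ hxy (Or.inl rfl))
        (inA _ _ m1 (Or.inl rfl)) (inA _ _ m3 (Or.inr rfl)) m2 m4 noX noY
        (conn w1 w2 m1.ne.symm m2 m4 m3.ne.symm (Or.inl m1) (Or.inr m3))
      refine ⟨two_terms tx m2.symm p1 p2 p4 (tx2 P hP),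
        two_terms ty m4.symm (by rw [Sym2.eq_swap]; exact p1) p3 p5 (ty2 P hP), ?_⟩
      obtain ⟨c, hc⟩ := ha.span P hP
      have : ∃ i, a i s(x, y) ≠ 0 := by
        by_contra hcon
        push Not at hcon
        rw [hc] at p1
        simp [Finset.sum_apply, hcon] at p1
      obtain ⟨i, hi⟩ := this
      rw [tx1 i y hi, ty1 i x (by rw [Sym2.eq_swap]; exact hi)]
    have tconst : ∀ i, (∃ w, a i s(x, w) ≠ 0 ∨ a i s(y, w) ≠ 0) → W0 i = tx y := by
      rintro i ⟨w, hw | hw⟩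
      · rw [← tx1 i w hw]
        have hadj := Cyc_adj (ha.mem i) hw
        by_cases hwy : w = y
        · rw [hwy]
        · exact (cross w y1 hadj.1 hwy hy1' hy1).1.symm
      · rw [← ty1 i w hw]
        have hadj := Cyc_adj (ha.mem i) hw
        have hcr := cross x1 y1 hx1' hx1 hy1' hy1
        by_cases hwx : w = x
        · rw [hwx]; exact hcr.2.2.symm
        · have := cross x1 w hx1' hx1 hadj.1 hwx
          rw [← this.2.1]; exact hcr.2.2.symm
    -- normalise the coefficients
    obtain ⟨W, hW, hWt⟩ : ∃ W : κ → ZMod 2, D = ∑ i, W i • a i ∧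
        ∀ i, (∃ w, a i s(x, w) ≠ 0 ∨ a i s(y, w) ≠ 0) → W i = 0 := by
      refine ⟨fun i => W0 i - tx y, ?_, fun i hi => by simp [tconst i hi]⟩
      simp only [sub_smul, Finset.sum_sub_distrib, ← Finset.smul_sum, has, smul_zero, sub_zero]
      exact hW0
    have hWmem : ∀ i, W i ≠ 0 → a i ∈ Cyc (del G x y) := by
      intro i hi
      have hz0 : ∀ w, a i s(x, w) = 0 ∧ a i s(y, w) = 0 := by
        intro w
        by_contra hc
        apply hi
        apply hWt i
        refine ⟨w, ?_⟩
        by_contra hcc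
        push Not at hcc
        exact hc hcc
      refine mem_Cyc' ?_ (ha.mem i).2
      intro u w huw
      by_contra hc
      have hadj := Cyc_adj (ha.mem i) hc
      apply huw
      refine ⟨hadj.1, ?_, ?_, ?_, ?_⟩
      · rintro rfl; exact hc (hz0 w).1
      · rintro rfl; exact hc (hz0 w).2
      · rintro rfl; rw [Sym2.eq_swap] at hc; exact hc (hz0 u).1
      · rintro rfl; rw [Sym2.eq_swap] at hc; exact hc (hz0 u).2
    apply h.notML
    refine Fam.union (a := fun i => if i ∈ T then b i else 0) (b := fun j => if W j = 0 then a j else 0)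
      ?_ ?_ ?_ ?_
    · intro i
      split
      · rename_i hi; exact Cyc_mono (del_le G x y) (hTmem i hi)
      · exact Submodule.zero_mem _
    · intro j
      split
      · exact Cyc_mono A1le (ha.mem j)
      · exact Submodule.zero_mem _
    · intro z hz
      obtain ⟨c, hc⟩ := hb.span _ (push_mem hxy hz)
      have hTs : ∀ U : ι → ZMod 2, ∑ i, U i • (if i ∈ T then b i else 0) = ∑ i ∈ T, U i • b i := by
        intro U
        simp [smul_ite, Finset.sum_ite_mem]
      have hz2 : z - ∑ i ∈ T, c i • b i ∈ Cyc (rem G) := by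
        have hG : z - ∑ i ∈ T, c i • b i ∈ Cyc G :=
          Submodule.sub_mem _ hz (Submodule.sum_mem _ fun i hi =>
            Submodule.smul_mem _ _ (Cyc_mono (del_le G x y) (hTmem i hi)))
        refine mem_Cyc' ?_ hG.2
        intro u w huw
        by_cases hGa : G.Adj u w
        · have h2 : 2 ≤ cT s(u, w) := by
            by_contra hcc
            exact huw ⟨hGa, by omega⟩
          have hd : (del G x y).Adj u w := hKH _ h2
          have e1 := push_off z hd.2.1 hd.2.2.1 hd.2.2.2.1 hd.2.2.2.2
          rw [Pi.sub_apply, ← e1, hc, Finset.sum_apply, Finset.sum_apply,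
            ← Finset.sum_subset (Finset.subset_univ T)]
          · exact sub_self _
          · intro i _ hi
            rw [Pi.smul_apply, hSK _ h2 i hi, smul_zero]
        · exact Cyc_zero hG hGa
      obtain ⟨d, hd⟩ := ha.span _ hz2
      have hr : ∑ j ∈ univ.filter (fun j => ¬ W j = 0), d j • a j ∈ Cyc (del G x y) :=
        Submodule.sum_mem _ fun j hj => Submodule.smul_mem _ _ (hWmem j (by simpa using hj))
      obtain ⟨U, hU⟩ := hspan _ hr
      refine ⟨fun i => c i + U i, d, ?_⟩
      rw [hTs]
      simp only [add_smul, Finset.sum_add_distrib]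
      rw [← hU]
      have : ∑ j, d j • (if W j = 0 then a j else 0) = ∑ j ∈ univ.filter (fun j => W j = 0), d j • a j := by
        rw [Finset.sum_filter]
        refine Finset.sum_congr rfl fun j _ => ?_
        split <;> simp
      rw [this]
      have h3 := Finset.sum_filter_add_sum_filter_not univ (fun j => W j = 0) (fun j => d j • a j)
      rw [← hd] at h3
      have h4 : z = ∑ i ∈ T, c i • b i + (z - ∑ i ∈ T, c i • b i) := by abel
      rw [← h3] at h4
      rw [h4]
      abel
    · intro e
      have e1 : cov (fun i => if i ∈ T then b i else 0) e = cT e := by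
        unfold cov
        simp only [cT]
        congr 1
        ext i
        simp only [Finset.mem_filter, Finset.mem_univ, true_and]
        by_cases hi : i ∈ T <;> simp [hi]
      have e2 : cov (fun j => if W j = 0 then a j else 0) e ≤ cov a e := by
        apply Finset.card_le_card
        intro j
        simp only [Finset.mem_filter, Finset.mem_univ, true_and]
        by_cases hj : W j = 0 <;> simp [hj]
      have e3 := ha.cov_le e
      have e4 := cT_le e
      rw [e1]
      by_cases c2 : cT e = 2
      · have : e ∉ (rem G).edgeSet := by
          induction e using Sym2.ind with
          | _ u w =>
          intro hh
          have hh' : (rem G).Adj u w := hh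
          have := hh'.2
          omega
        have := cov_zero_of ha this
        omega
      · by_cases c1 : cT e = 1
        · have hDe : D e = 1 := by rw [Dapp, c1]; rfl
          have : ∃ j, W j ≠ 0 ∧ a j e ≠ 0 := by
            by_contra hcon
            push Not at hcon
            rw [hW] at hDe
            simp only [Finset.sum_apply, Pi.smul_apply, smul_eq_mul] at hDe
            rw [Finset.sum_eq_zero] at hDe
            · simp at hDe
            · intro j _
              by_cases hj : W j = 0
              · rw [hj, zero_mul]
              · rw [hcon j hj, mul_zero]
          obtain ⟨j, hj1, hj2⟩ := this
          have : cov (fun j => if W j = 0 then a j else 0) e < cov a e := by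
            apply Finset.card_lt_card
            rw [Finset.ssubset_iff_of_subset]
            · exact ⟨j, by simp [hj2], by simp [hj1]⟩
            · intro i
              simp only [Finset.mem_filter, Finset.mem_univ, true_and]
              by_cases hi : W i = 0 <;> simp [hi]
          omega
        · omega

end base
end ML6

open SimpleGraph Finset

namespace ML6

set_option linter.unusedSectionVars false
set_option linter.unusedSimpArgs false
set_option linter.unusedVariables false
set_option linter.unnecessarySimpa false
set_option linter.style.longLine false

section base
variable {V : Type*} [Fintype V] [DecidableEq V]

/-- Graph of the edges in the support of `D`. -/
def onG (D : EV V) : SimpleGraph V where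
  Adj u w := u ≠ w ∧ D s(u, w) ≠ 0
  symm := ⟨by rintro u w ⟨h1, h2⟩; exact ⟨h1.symm, by rwa [Sym2.eq_swap]⟩⟩
  loopless := ⟨by rintro u ⟨h, _⟩; exact h rfl⟩

/-- Graph of the edges of `K` outside the support of `D`. -/
def offG (K : SimpleGraph V) (D : EV V) : SimpleGraph V where
  Adj u w := K.Adj u w ∧ D s(u, w) = 0
  symm := ⟨by rintro u w ⟨h1, h2⟩; exact ⟨h1.symm, by rwa [Sym2.eq_swap]⟩⟩
  loopless := ⟨by rintro u ⟨h, _⟩; exact h.ne rfl⟩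

theorem theta_contra {K : SimpleGraph V}
    (hprod : ∀ z ∈ Cyc K, ∀ z' ∈ Cyc K, z * z' ∈ Cyc K) {D : EV V} (hD : D ∈ Cyc K) {a b : V}
    (hab : a ≠ b) (h1 : (onG D).Reachable a b) (h2 : (offG K D).Reachable a b) : False := by
  obtain ⟨p⟩ := h1
  obtain ⟨q⟩ := h2
  have hp : ∀ e, wv p e ≠ 0 → D e = 1 := by
    intro e he
    have : e ∈ (onG D).edgeSet := by
      by_contra hc; exact he (wv_supp p hc)
    induction e using Sym2.ind with
    | _ u w =>
    have h' : (onG D).Adj u w := this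
    exact z1 h'.2
  have hq : ∀ u w, wv q s(u, w) ≠ 0 → K.Adj u w ∧ D s(u, w) = 0 := by
    intro u w he
    have : s(u, w) ∈ (offG K D).edgeSet := by
      by_contra hc; exact he (wv_supp q hc)
    exact this
  have hZ : wv p + wv q ∈ Cyc K := by
    refine mem_Cyc' ?_ ?_
    · intro u w huw
      have e1 : wv p s(u, w) = 0 := by
        by_contra hc
        have := hp _ hc
        rw [Cyc_zero hD huw] at this
        exact absurd this (by decide)
      have e2 : wv q s(u, w) = 0 := by
        by_contra hc
        exact huw (hq u w hc).1
      rw [Pi.add_apply, e1, e2, add_zero]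
    · rw [map_add, bd_wv, bd_wv]
      ext v
      simp only [Pi.add_apply, Pi.zero_apply]
      exact zz _
  have hDZ : D * (wv p + wv q) = wv p := by
    ext e
    induction e using Sym2.ind with
    | _ u w =>
    rw [Pi.mul_apply, Pi.add_apply]
    have e2 : D s(u, w) * wv q s(u, w) = 0 := by
      by_cases hc : wv q s(u, w) = 0
      · rw [hc, mul_zero]
      · rw [(hq u w hc).2, zero_mul]
    have e1 : D s(u, w) * wv p s(u, w) = wv p s(u, w) := by
      by_cases hc : wv p s(u, w) = 0
      · rw [hc, mul_zero]
      · rw [hp _ hc, one_mul]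
    rw [mul_add, e1, e2, add_zero]
  have := (hprod D hD _ hZ).2
  rw [hDZ, bd_wv] at this
  have := congrFun this a
  simp [hab] at this

/-- The vector of a cycle given by a function. -/
theorem cycD {K : SimpleGraph V} {v : ℕ → V} {j : ℕ} (hj : 2 ≤ j)
    (hadj : ∀ i, i < j → K.Adj (v i) (v (i + 1))) (hcl : K.Adj (v 0) (v j))
    (hinj : ∀ i, i ≤ j → ∀ k, k ≤ j → v i = v k → i = k) :
    ∃ D ∈ Cyc K, (∀ i, i ≤ j → (onG D).Reachable (v 0) (v i)) ∧
      (∀ a c, D s(a, c) ≠ 0 → ∃ k, k ≤ j ∧ a = v k) ∧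
      (∀ k, k ≤ j → ∀ c, D s(v k, c) ≠ 0 →
        c = v (if k = j then 0 else k + 1) ∨ c = v (if k = 0 then j else k - 1)) := by
  have hbd : ∀ m, m ≤ j → bd (∑ i ∈ range m, sg (v i) (v (i + 1))) =
      Pi.single (v 0) 1 + Pi.single (v m) 1 := by
    intro m
    induction m with
    | zero => intro _; ext x; simp [zz]
    | succ m ih =>
      intro hm
      rw [Finset.sum_range_succ, map_add, ih (by omega), bd_sg (hadj m (by omega)).ne]
      ext x
      simp only [Pi.add_apply]
      have := zz ((Pi.single (v m) 1 : V → ZMod 2) x)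
      linear_combination this
  have hsupp : ∀ a c, (∑ i ∈ range j, sg (v i) (v (i + 1)) + sg (v 0) (v j)) s(a, c) ≠ 0 →
      (∃ i, i < j ∧ ((a = v i ∧ c = v (i + 1)) ∨ (a = v (i + 1) ∧ c = v i))) ∨
      ((a = v 0 ∧ c = v j) ∨ (a = v j ∧ c = v 0)) := by
    intro a c hne
    by_contra hcon
    push Not at hcon
    apply hne
    rw [Pi.add_apply, Finset.sum_apply, sg_off (fun h => hcon.2.1 h.1 h.2) (fun h => hcon.2.2 h.1 h.2),
      add_zero]
    apply Finset.sum_eq_zero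
    intro i hi
    have := hcon.1 i (by simpa using hi)
    exact sg_off (fun h => this.1 h.1 h.2) (fun h => this.2 h.1 h.2)
  refine ⟨∑ i ∈ range j, sg (v i) (v (i + 1)) + sg (v 0) (v j), mem_Cyc' ?_ ?_, ?_, ?_, ?_⟩
  · intro a c hac
    by_contra hne
    rcases hsupp a c hne with ⟨i, hi, ⟨rfl, rfl⟩ | ⟨rfl, rfl⟩⟩ | ⟨rfl, rfl⟩ | ⟨rfl, rfl⟩
    · exact hac (hadj i hi)
    · exact hac (hadj i hi).symm
    · exact hac hcl
    · exact hac hcl.symm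
  · rw [map_add, hbd j le_rfl, bd_sg hcl.ne]
    ext x
    simp only [Pi.add_apply, Pi.zero_apply]
    exact zz _
  · intro i
    induction i with
    | zero => intro _; exact Reachable.refl _
    | succ i ih =>
      intro hi
      refine (ih (by omega)).trans (Adj.reachable ⟨(hadj i (by omega)).ne, ?_⟩)
      rw [Pi.add_apply, Finset.sum_apply, Finset.sum_eq_single i]
      · rw [sg_apply_self, sg_off]
        · simp
        · rintro ⟨h1, h2⟩
          have := hinj _ (by omega) _ (by omega) h1
          have := hinj _ (by omega) _ (by omega) h2
          omega
        · rintro ⟨h1, h2⟩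
          have := hinj _ (by omega) _ (by omega) h2
          omega
      · intro k hk hki
        have hk' : k < j := by simpa using hk
        apply sg_off
        · rintro ⟨h1, h2⟩
          have := hinj _ (by omega) _ (by omega) h1
          omega
        · rintro ⟨h1, h2⟩
          have := hinj _ (by omega) _ (by omega) h1
          have := hinj _ (by omega) _ (by omega) h2
          omega
      · intro hh
        exact absurd (Finset.mem_range.mpr (by omega)) hh
  · intro a c hne
    rcases hsupp a c hne with ⟨i, hi, ⟨rfl, rfl⟩ | ⟨rfl, rfl⟩⟩ | ⟨rfl, rfl⟩ | ⟨rfl, rfl⟩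
    · exact ⟨i, by omega, rfl⟩
    · exact ⟨i + 1, by omega, rfl⟩
    · exact ⟨0, by omega, rfl⟩
    · exact ⟨j, by omega, rfl⟩
  · intro k hk c hne
    rcases hsupp _ c hne with ⟨i, hi, ⟨h1, rfl⟩ | ⟨h1, rfl⟩⟩ | ⟨h1, rfl⟩ | ⟨h1, rfl⟩
    · have := hinj _ (by omega) _ (by omega) h1
      subst this
      left; rw [if_neg (by omega)]
    · have := hinj _ (by omega) _ (by omega) h1
      subst this
      right; rw [if_neg (by omega)]; simp
    · have := hinj _ (by omega) _ (by omega) h1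
      subst this
      right; rw [if_pos rfl]
    · have := hinj _ (by omega) _ (by omega) h1
      subst this
      left; rw [if_pos rfl]

/-- Paths given by functions. -/
def PathF (H : SimpleGraph V) (n : ℕ) (v : ℕ → V) : Prop :=
  (∀ i, i < n → H.Adj (v i) (v (i + 1))) ∧ (∀ i, i ≤ n → ∀ k, k ≤ n → v i = v k → i = k)

theorem longest (H : SimpleGraph V) {w a : V} (hwa : H.Adj w a) :
    ∃ n v, 1 ≤ n ∧ PathF H n v ∧ ¬ ∃ v', PathF H (n + 1) v' := by
  by_contra hcon
  push Not at hcon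
  have key : ∀ n, 1 ≤ n → ∃ v, PathF H n v := by
    intro n hn
    induction n, hn using Nat.le_induction with
    | base =>
      refine ⟨fun i => if i = 0 then w else a, ?_, ?_⟩
      · intro i hi
        have : i = 0 := by omega
        subst this; simpa using hwa
      · intro i hi k hk
        have := hwa.ne
        have := hwa.ne.symm
        by_cases h1 : i = 0 <;> by_cases h2 : k = 0 <;> simp [h1, h2] <;> (try omega) <;> tauto
    | succ n hn ih =>
      obtain ⟨v, hv⟩ := ih
      exact hcon n v hn hv
  obtain ⟨v, hv⟩ := key (Fintype.card V + 1) (by omega)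
  have hi : Function.Injective (fun i : Fin (Fintype.card V + 1) => v i) := by
    intro i k hik
    exact Fin.ext (hv.2 i (by omega) k (by omega) hik)
  have := Fintype.card_le_of_injective _ hi
  simp at this

theorem longest_nbr {H : SimpleGraph V} {n : ℕ} {v : ℕ → V} (hv : PathF H n v)
    (hmax : ¬ ∃ v', PathF H (n + 1) v') {c : V} (hc : H.Adj (v 0) c) : ∃ k, k ≤ n ∧ c = v k := by
  by_contra hcon
  push Not at hcon
  apply hmax
  refine ⟨fun i => if i = 0 then c else v (i - 1), ?_, ?_⟩
  · intro i hi
    by_cases h0 : i = 0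
    · subst h0; simpa using hc.symm
    · have := hv.1 (i - 1) (by omega)
      rw [show i - 1 + 1 = i by omega] at this
      simpa [h0] using this
  · intro i hi k hk
    by_cases h1 : i = 0
    · by_cases h2 : k = 0
      · omega
      · simp only [h1, h2, if_true, if_false]
        intro h; exact absurd h (hcon _ (by omega))
    · by_cases h2 : k = 0
      · simp only [h1, h2, if_true, if_false]
        intro h; exact absurd h.symm (hcon _ (by omega))
      · simp only [h1, h2, if_false]
        intro h
        have := hv.2 _ (by omega) _ (by omega) h
        omega

theorem reroute {H : SimpleGraph V} {n j : ℕ} {v : ℕ → V} (hv : PathF H n v) (hj : 1 ≤ j)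
    (hjn : j ≤ n) (hadj : H.Adj (v 0) (v j)) :
    PathF H n (fun i => if i < j then v (j - 1 - i) else v i) := by
  refine ⟨?_, ?_⟩
  · intro i hi
    by_cases h1 : i + 1 < j
    · have := hv.1 (j - 1 - (i + 1)) (by omega)
      rw [show j - 1 - (i + 1) + 1 = j - 1 - i by omega] at this
      simp only [h1, if_true, show i < j by omega]
      exact this.symm
    · by_cases h2 : i < j
      · simp only [h1, if_false, h2, if_true]
        rw [show j - 1 - i = 0 by omega, show i + 1 = j by omega]
        exact hadj
      · simp only [h1, h2, if_false]
        exact hv.1 i hi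
  · intro i hi k hk h
    by_cases h1 : i < j <;> by_cases h2 : k < j <;> simp only [h1, h2, if_true, if_false] at h <;>
      have := hv.2 _ (by omega) _ (by omega) h <;> omega

theorem MinC.comb {G : SimpleGraph V} (h : MinC G) {x y : V} (hxy : G.Adj x y) {w a b c : V}
    (hwa : (del G x y).Adj w a) (hwb : (del G x y).Adj w b) (hwc : (del G x y).Adj w c)
    (hab : a ≠ b) (hac : a ≠ c) (hbc : b ≠ c) : False := by
  classical
  set H := del G x y with hH
  have prodH : ∀ z ∈ Cyc H, ∀ z' ∈ Cyc H, z * z' ∈ Cyc H := fun z hz z' hz' => h.star hxy hz hz'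
  obtain ⟨n, v, hn, hv, hmax⟩ := longest H hwa
  have hvH : ∀ i, i ≤ n → v i ≠ x ∧ v i ≠ y := by
    intro i hi
    by_cases hi' : i < n
    · have := hv.1 i hi'
      exact ⟨this.2.1, this.2.2.1⟩
    · have := hv.1 (i - 1) (by omega)
      rw [show i - 1 + 1 = i by omega] at this
      exact ⟨this.2.2.2.1, this.2.2.2.2⟩
  -- the farthest neighbour of the end of the path
  obtain ⟨a1, b1, hab1, ha1, hb1⟩ := h.two_nbrs hxy (hvH 0 (by omega)).1 (hvH 0 (by omega)).2
    (hv.1 0 (by omega)).1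
  set j := Nat.findGreatest (fun k => H.Adj (v 0) (v k)) n with hjdef
  have hjn : j ≤ n := Nat.findGreatest_le n
  have hjmax : ∀ k, k ≤ n → H.Adj (v 0) (v k) → k ≤ j := fun k hk hk' =>
    Nat.le_findGreatest hk hk'
  have hjadj : H.Adj (v 0) (v j) :=
    Nat.findGreatest_spec (P := fun k => H.Adj (v 0) (v k)) (m := 1) hn (hv.1 0 (by omega))
  have hj2 : 2 ≤ j := by
    obtain ⟨k1, hk1, rfl⟩ := longest_nbr hv hmax ha1
    obtain ⟨k2, hk2, rfl⟩ := longest_nbr hv hmax hb1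
    have m1 := hjmax k1 hk1 ha1
    have m2 := hjmax k2 hk2 hb1
    have : k1 ≠ 0 := by rintro rfl; exact ha1.ne rfl
    have : k2 ≠ 0 := by rintro rfl; exact hb1.ne rfl
    have : k1 ≠ k2 := by rintro rfl; exact hab1 rfl
    omega
  obtain ⟨D, hD, hreach, hDv, hDn⟩ := cycD (K := H) hj2 (fun i hi => hv.1 i (by omega)) hjadj
    (fun i hi k hk => hv.2 i (by omega) k (by omega))
  have hreach' : ∀ i, i ≤ j → ∀ k, k ≤ j → (onG D).Reachable (v i) (v k) := fun i hi k hk =>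
    (hreach i hi).symm.trans (hreach k hk)
  have chord : ∀ i, i ≤ j → ∀ k, k ≤ j → H.Adj (v i) (v k) → D s(v i, v k) ≠ 0 := by
    intro i hi k hk hadj h0
    exact theta_contra prodH hD hadj.ne (hreach' i hi k hk) (Adj.reachable ⟨hadj, h0⟩)
  have hD0 : ∀ p q, (∀ k, k ≤ j → p ≠ v k) → D s(p, q) = 0 := by
    intro p q hp
    by_contra hc
    obtain ⟨k, hk, hpk⟩ := hDv p q hc
    exact hp k hk hpk
  have hD0' : ∀ p q, (∀ k, k ≤ j → q ≠ v k) → D s(p, q) = 0 := by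
    intro p q hp
    rw [Sym2.eq_swap]; exact hD0 q p hp
  -- two attached vertices
  have att0 : G.Adj (v 0) x ∨ G.Adj (v 0) y := by
    obtain ⟨c, hc1, hc2, hc3⟩ := h.deg2 (hv.1 0 (by omega)).1 (b := v j)
      (fun hh => by have := hv.2 _ (by omega) _ (by omega) hh; omega) hjadj.1
    by_cases hcx : c = x
    · left; rw [← hcx]; exact hc3
    · by_cases hcy : c = y
      · right; rw [← hcy]; exact hc3
      · exfalso
        have hcH : H.Adj (v 0) c := ⟨hc3, (hvH 0 (by omega)).1, (hvH 0 (by omega)).2, hcx, hcy⟩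
        obtain ⟨k, hk, rfl⟩ := longest_nbr hv hmax hcH
        have hkj := hjmax k hk hcH
        have := hDn 0 (by omega) _ (chord 0 (by omega) k hkj hcH)
        rw [if_neg (by omega), if_pos rfl] at this
        rcases this with h' | h'
        · exact hc1 h'
        · exact hc2 h'
  have att1 : G.Adj (v (j - 1)) x ∨ G.Adj (v (j - 1)) y := by
    have e1 := hv.1 (j - 1) (by omega)
    rw [show j - 1 + 1 = j by omega] at e1
    have e2 := hv.1 (j - 2) (by omega)
    rw [show j - 2 + 1 = j - 1 by omega] at e2
    obtain ⟨c, hc1, hc2, hc3⟩ := h.deg2 e1.1 (b := v (j - 2))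
      (fun hh => by have := hv.2 _ (by omega) _ (by omega) hh; omega) e2.1.symm
    by_cases hcx : c = x
    · left; rw [← hcx]; exact hc3
    · by_cases hcy : c = y
      · right; rw [← hcy]; exact hc3
      · exfalso
        have hcH : H.Adj (v (j - 1)) c := ⟨hc3, (hvH _ (by omega)).1, (hvH _ (by omega)).2, hcx, hcy⟩
        have hck : ∃ k, k ≤ n ∧ c = v k := by
          have hr := reroute hv (by omega) hjn hjadj
          obtain ⟨k, hk, hkc⟩ := longest_nbr hr hmax (c := c) (by
            simp only [show 0 < j by omega, if_true]
            exact hcH)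
          by_cases hkj : k < j
          · rw [if_pos hkj] at hkc
            exact ⟨_, by omega, hkc⟩
          · rw [if_neg hkj] at hkc
            exact ⟨k, hk, hkc⟩
        obtain ⟨k, hk, rfl⟩ := hck
        by_cases hkj : k ≤ j
        · have := hDn (j - 1) (by omega) _ (chord (j - 1) (by omega) k hkj hcH)
          rw [if_neg (by omega), if_neg (by omega), show j - 1 + 1 = j by omega,
            show j - 1 - 1 = j - 2 by omega] at this
          rcases this with h' | h'
          · exact hc1 h'
          · exact hc2 h'
        · have far : ∀ l, j < l → l ≤ n → ∀ i, i ≤ j → v l ≠ v i := by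
            intro l hl hl' i hi hh
            have := hv.2 _ hl' _ (by omega) hh
            omega
          have r1 : (offG H D).Reachable (v (j - 1)) (v k) :=
            Adj.reachable ⟨hcH, hD0' _ _ (far k (by omega) hk)⟩
          have r2 : ∀ m, j + m ≤ n → (offG H D).Reachable (v j) (v (j + m)) := by
            intro m
            induction m with
            | zero => intro _; exact Reachable.refl _
            | succ m ih =>
              intro hm
              refine (ih (by omega)).trans (Adj.reachable ⟨hv.1 (j + m) (by omega), ?_⟩)
              exact hD0' _ _ (far (j + m + 1) (by omega) (by omega))
          have r3 := r2 (k - j) (by omega)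
          rw [show j + (k - j) = k by omega] at r3
          exact theta_contra prodH hD e1.ne (hreach' _ (by omega) _ le_rfl) (r1.trans r3.symm)
  -- no edge avoids D and x, y
  have noedge : ∀ r1 r2, G.Adj r1 r2 → r1 ≠ x → r1 ≠ y → r2 ≠ x → r2 ≠ y →
      (∀ k, k ≤ j → r1 ≠ v k) → (∀ k, k ≤ j → r2 ≠ v k) → False := by
    intro r1 r2 hr n1 n2 n3 n4 n5 n6
    have prodK : ∀ z ∈ Cyc (del G r1 r2), ∀ z' ∈ Cyc (del G r1 r2), z * z' ∈ Cyc (del G r1 r2) :=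
      fun z hz z' hz' => h.star hr hz hz'
    have hDK : D ∈ Cyc (del G r1 r2) := by
      refine mem_Cyc' ?_ hD.2
      intro p q hpq
      by_contra hc
      have hGadj := (Cyc_adj hD hc).1
      obtain ⟨k, hk, hpk⟩ := hDv p q hc
      rw [Sym2.eq_swap] at hc
      obtain ⟨k', hk', hqk⟩ := hDv q p hc
      apply hpq
      subst hpk hqk
      exact ⟨hGadj, (n5 _ hk).symm, (n6 _ hk).symm, (n5 _ hk').symm, (n6 _ hk').symm⟩
    have ox : ∀ k, k ≤ j → x ≠ v k := fun k hk => (hvH k (by omega)).1.symm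
    have oy : ∀ k, k ≤ j → y ≠ v k := fun k hk => (hvH k (by omega)).2.symm
    have rxy : (offG (del G r1 r2) D).Reachable x y :=
      Adj.reachable ⟨⟨hxy, n1.symm, n3.symm, n2.symm, n4.symm⟩, hD0 _ _ ox⟩
    have rx : ∀ k, k ≤ j → (G.Adj (v k) x ∨ G.Adj (v k) y) →
        (offG (del G r1 r2) D).Reachable (v k) x := by
      rintro k hk (hh | hh)
      · exact Adj.reachable ⟨⟨hh, (n5 _ hk).symm, (n6 _ hk).symm, n1.symm, n3.symm⟩, hD0' _ _ ox⟩
      · exact Reachable.trans (Adj.reachable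
          ⟨⟨hh, (n5 _ hk).symm, (n6 _ hk).symm, n2.symm, n4.symm⟩, hD0' _ _ oy⟩) rxy.symm
    refine theta_contra prodK hDK (a := v 0) (b := v (j - 1)) ?_ (hreach _ (by omega))
      ((rx 0 (by omega) att0).trans (rx (j - 1) (by omega) att1).symm)
    intro hh
    have := hv.2 _ (by omega) _ (by omega) hh
    omega
  -- every vertex is on D
  have onD : ∀ r s, G.Adj r s → r ≠ x → r ≠ y → ∃ k, k ≤ j ∧ r = v k := by
    intro r s hrs n1 n2
    by_contra hcon
    push Not at hcon
    obtain ⟨a, b, hab, ha, hb⟩ := h.two_nbrs hxy n1 n2 hrs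
    have ha' : ∃ k, k ≤ j ∧ a = v k := by
      by_contra hc
      push Not at hc
      exact noedge r a ha.1 n1 n2 ha.2.2.2.1 ha.2.2.2.2 hcon hc
    have hb' : ∃ k, k ≤ j ∧ b = v k := by
      by_contra hc
      push Not at hc
      exact noedge r b hb.1 n1 n2 hb.2.2.2.1 hb.2.2.2.2 hcon hc
    obtain ⟨k1, hk1, rfl⟩ := ha'
    obtain ⟨k2, hk2, rfl⟩ := hb'
    refine theta_contra prodH hD hab (hreach' _ hk1 _ hk2) (Reachable.trans (v := r) ?_ ?_)
    · exact Adj.reachable ⟨ha.symm, hD0' _ _ hcon⟩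
    · exact Adj.reachable ⟨hb, hD0 _ _ hcon⟩
  obtain ⟨k, hk, rfl⟩ := onD w a hwa.1 hwa.2.1 hwa.2.2.1
  have fin : ∀ d, H.Adj (v k) d →
      d = v (if k = j then 0 else k + 1) ∨ d = v (if k = 0 then j else k - 1) := by
    intro d hd
    obtain ⟨l, hl, rfl⟩ := onD d _ hd.1.symm hd.2.2.2.1 hd.2.2.2.2
    exact hDn k hk _ (chord k hk l hl hd)
  have f1 := fin a hwa
  have f2 := fin b hwb
  have f3 := fin c hwc
  rcases f1 with f1 | f1 <;> rcases f2 with f2 | f2 <;> rcases f3 with f3 | f3 <;>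
    first
      | exact hab (f1.trans f2.symm)
      | exact hac (f1.trans f3.symm)
      | exact hbc (f2.trans f3.symm)

end base
end ML6

open SimpleGraph Finset

namespace ML6

set_option linter.unusedSectionVars false
set_option linter.unusedSimpArgs false
set_option linter.unusedVariables false
set_option linter.unnecessarySimpa false
set_option linter.style.longLine false

section base
variable {V : Type*} [Fintype V] [DecidableEq V]

theorem HasMinor_of_inj {V W : Type*} {G : SimpleGraph V} {K : SimpleGraph W} (g : W → V)
    (hg : Function.Injective g) (h : ∀ a b, K.Adj a b → G.Adj (g a) (g b)) : HasMinor G K := by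
  classical
  let f : V → Option W := fun v => if hv : ∃ w, g w = v then some hv.choose else none
  have hf : ∀ w, f (g w) = some w := by
    intro w
    have hv : ∃ w', g w' = g w := ⟨w, rfl⟩
    simp only [f, dif_pos hv]
    exact congrArg some (hg hv.choose_spec)
  have hf' : ∀ v w, f v = some w → v = g w := by
    intro v w hvw
    by_cases hv : ∃ w, g w = v
    · obtain ⟨w', rfl⟩ := hv
      rw [hf] at hvw
      rw [Option.some.inj hvw]
    · simp [f, dif_neg hv] at hvw
  refine ⟨f, fun w => ⟨g w, hf w⟩, fun w => ?_, fun a b hab => ⟨g a, g b, hf a, hf b, h a b hab⟩⟩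
  rintro ⟨u, hu⟩ ⟨v, hv⟩
  have : u = v := by rw [hf' u w hu, hf' v w hv]
  subst this
  exact Reachable.refl _

theorem K5_not_planar {V : Type*} {G : SimpleGraph V} {a b c d e : V}
    (h1 : G.Adj a b) (h2 : G.Adj a c) (h3 : G.Adj a d) (h4 : G.Adj a e) (h5 : G.Adj b c)
    (h6 : G.Adj b d) (h7 : G.Adj b e) (h8 : G.Adj c d) (h9 : G.Adj c e) (h10 : G.Adj d e) :
    ¬ IsPlanar G := by
  intro hp
  have key : ∀ i j : Fin 5, i ≠ j → G.Adj (![a, b, c, d, e] i) (![a, b, c, d, e] j) := by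
    intro i j hij
    fin_cases i <;> fin_cases j <;>
      first
      | exact absurd rfl hij
      | assumption
      | (apply SimpleGraph.Adj.symm; assumption)
  refine hp.1 (HasMinor_of_inj ![a, b, c, d, e] ?_ (fun i j hij => key i j hij))
  intro i j hij
  by_contra hne
  exact (key i j hne).ne hij

theorem K33_not_planar {V : Type*} {G : SimpleGraph V} {a b c x y z : V}
    (h1 : G.Adj a x) (h2 : G.Adj a y) (h3 : G.Adj a z) (h4 : G.Adj b x) (h5 : G.Adj b y)
    (h6 : G.Adj b z) (h7 : G.Adj c x) (h8 : G.Adj c y) (h9 : G.Adj c z)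
    (n1 : a ≠ b) (n2 : a ≠ c) (n3 : b ≠ c) (n4 : x ≠ y) (n5 : x ≠ z) (n6 : y ≠ z) :
    ¬ IsPlanar G := by
  intro hp
  have key : ∀ i j : Fin 3, G.Adj (![a, b, c] i) (![x, y, z] j) := by
    intro i j
    fin_cases i <;> fin_cases j <;> assumption
  refine hp.2 (HasMinor_of_inj (Sum.elim ![a, b, c] ![x, y, z]) ?_ ?_)
  · have i1 : Function.Injective ![a, b, c] := by
      intro i j hij
      fin_cases i <;> fin_cases j <;> simp_all
    have i2 : Function.Injective ![x, y, z] := by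
      intro i j hij
      fin_cases i <;> fin_cases j <;> simp_all
    exact i1.sumElim i2 fun i j => (key i j).ne
  · rintro (i | i) (j | j) hij
    · simp at hij
    · exact key i j
    · exact (key j i).symm
    · simp at hij

theorem MinC.touch {G : SimpleGraph V} (h : MinC G) {x y w v : V} (hxy : G.Adj x y)
    (hwx : w ≠ x) (hwy : w ≠ y) (hwv : G.Adj w v) : G.Adj w x ∨ G.Adj w y := by
  by_contra hc
  push Not at hc
  obtain ⟨b, hb1, hb2⟩ := h.deg1 hwv
  obtain ⟨c, hc1, hc2, hc3⟩ := h.deg2 hwv hb1.symm hb2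
  have hd : ∀ u, G.Adj w u → (del G x y).Adj w u := by
    intro u hu
    refine ⟨hu, hwx, hwy, ?_, ?_⟩
    · rintro rfl; exact hc.1 hu
    · rintro rfl; exact hc.2 hu
  exact h.comb hxy (hd v hwv) (hd b hb2) (hd c hc3) hb1.symm hc1.symm hc2.symm

theorem MinC.triN {G : SimpleGraph V} (h : MinC G) {x y w a : V} (hxy : G.Adj x y)
    (hxw : G.Adj x w) (hyw : G.Adj y w) (ha : G.Adj w a) (hax : a ≠ x) (hay : a ≠ y) :
    G.Adj x a := by
  by_contra hc
  obtain ⟨p, q, hpq, hp, hq⟩ := h.two_nbrs hyw hxy.ne hxw.ne hxy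
  have h1 : (del G w a).Adj x y := ⟨hxy, hxw.ne, hax.symm, hyw.ne, hay.symm⟩
  have h2 : (del G w a).Adj x p :=
    ⟨hp.1, hxw.ne, hax.symm, hp.2.2.2.2, by rintro rfl; exact hc hp.1⟩
  have h3 : (del G w a).Adj x q :=
    ⟨hq.1, hxw.ne, hax.symm, hq.2.2.2.2, by rintro rfl; exact hc hq.1⟩
  exact h.comb ha h1 h2 h3 hp.2.2.2.1.symm hq.2.2.2.1.symm hpq

theorem MinC.false {G : SimpleGraph V} (h : MinC G) {x y : V} (hxy : G.Adj x y) : False := by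
  by_cases ht : ∃ x y w, G.Adj x y ∧ G.Adj x w ∧ G.Adj y w
  · obtain ⟨x, y, w, hxy, hxw, hyw⟩ := ht
    obtain ⟨a, b, hab, ha, hb⟩ := h.two_nbrs hxy hxw.ne.symm hyw.ne.symm hxw.symm
    have xa := h.triN hxy hxw hyw ha.1 ha.2.2.2.1 ha.2.2.2.2
    have ya := h.triN hxy.symm hyw hxw ha.1 ha.2.2.2.2 ha.2.2.2.1
    have xb := h.triN hxy hxw hyw hb.1 hb.2.2.2.1 hb.2.2.2.2
    have yb := h.triN hxy.symm hyw hxw hb.1 hb.2.2.2.2 hb.2.2.2.1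
    have ab := h.triN (x := a) (y := x) (w := w) (a := b) xa.symm ha.1.symm hxw hb.1 hab.symm
      xb.ne.symm
    exact K5_not_planar hxy hxw xa xb hyw ya yb ha.1 hb.1 ab h.planar
  · push Not at ht
    obtain ⟨a, ha1, ha⟩ := h.deg1 hxy
    obtain ⟨b, hb1, hb2, hb⟩ := h.deg2 hxy ha1.symm ha
    obtain ⟨c, hc1, hc⟩ := h.deg1 hxy.symm
    obtain ⟨d, hd1, hd2, hd⟩ := h.deg2 hxy.symm hc1.symm hc
    have key : ∀ a c, a ≠ y → G.Adj x a → c ≠ x → G.Adj y c → G.Adj c a := by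
      intro a c h1 h2 h3 h4
      have hne : a ≠ c := by rintro rfl; exact ht _ _ _ hxy h2 h4
      rcases h.touch h4 h1 hne h2.symm with h5 | h5
      · exact absurd h5.symm (ht _ _ _ hxy h2)
      · exact h5.symm
    exact K33_not_planar hxy ha hb hc.symm (key a c ha1 ha hc1 hc) (key b c hb1 hb hc1 hc)
      hd.symm (key a d ha1 ha hd1 hd) (key b d hb1 hb hd1 hd) hc1.symm hd1.symm hd2.symm
      ha1.symm hb1.symm hb2.symm h.planar

theorem planar_ML (G : SimpleGraph V) (hp : IsPlanar G) : ML G := by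
  classical
  by_contra hn
  have : ∀ n : ℕ, ∀ H : SimpleGraph V, H.edgeSet.ncard = n → IsPlanar H → ML H := by
    intro n
    induction n using Nat.strong_induction_on with
    | _ n ih =>
      intro H hH hpH
      by_contra hm
      have hmin : MinC H := ⟨hpH, hm, fun K hK hlt => ih _ (hH ▸ hlt) K rfl hK⟩
      by_cases he : ∃ x y, H.Adj x y
      · obtain ⟨x, y, hxy⟩ := he
        exact hmin.false hxy
      · push Not at he
        refine hm ⟨Empty, inferInstance, fun i => i.elim, ⟨fun i => i.elim, ?_, ?_⟩⟩
        · intro z hz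
          refine ⟨fun i => i.elim, ?_⟩
          simp only [Finset.univ_eq_empty, Finset.sum_empty]
          funext e
          induction e using Sym2.ind with
          | _ u w => exact Cyc_zero hz (he u w)
        · intro e
          simp [cov]
  exact hn (this _ G rfl hp)

end base
end ML6

open SimpleGraph Finset

namespace ML6

set_option linter.unusedSectionVars false
set_option linter.unusedSimpArgs false
set_option linter.unusedVariables false
set_option linter.unnecessarySimpa false
set_option linter.style.longLine false

section base
variable {V : Type*} [Fintype V] [DecidableEq V]

/-- Support of a vector. -/
def supp (z : EV V) : Finset (Sym2 V) := univ.filter (fun e => z e ≠ 0)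

theorem mem_supp {z : EV V} {e : Sym2 V} : e ∈ supp z ↔ z e ≠ 0 := by simp [supp]

theorem Cyc_next {G : SimpleGraph V} {z : EV V} (hz : z ∈ Cyc G) {a b : V}
    (h : z s(a, b) ≠ 0) : ∃ c, c ≠ b ∧ z s(a, c) ≠ 0 := by
  by_contra hc
  push Not at hc
  have h0 := Cyc_bd hz a
  rw [Finset.sum_eq_single b (fun c _ hcb => hc c hcb) (by simp)] at h0
  exact h h0

theorem s_ne {a b c d : V} (h1 : a ≠ c ∨ b ≠ d) (h2 : a ≠ d ∨ b ≠ c) : s(a, b) ≠ s(c, d) := by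
  intro h
  rw [Sym2.eq_iff] at h
  tauto

theorem card3_le {s : Finset (Sym2 V)} {a b c : Sym2 V} (h : ({a, b, c} : Finset (Sym2 V)) ⊆ s)
    (h1 : a ≠ b) (h2 : a ≠ c) (h3 : b ≠ c) : 3 ≤ s.card := by
  rw [← Finset.card_eq_three.mpr ⟨a, b, c, h1, h2, h3, rfl⟩]
  exact Finset.card_le_card h

theorem supp_three {G : SimpleGraph V} {z : EV V} (hz : z ∈ Cyc G) (h : z ≠ 0) :
    3 ≤ (supp z).card := by
  obtain ⟨e, he⟩ := Function.ne_iff.mp h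
  induction e using Sym2.ind with
  | _ a b =>
    have hab : a ≠ b := (Cyc_adj hz he).ne
    obtain ⟨d, hd1, hd2⟩ := Cyc_next hz he
    obtain ⟨c, hc1, hc2⟩ := Cyc_next hz (a := b) (b := a) (by rwa [Sym2.eq_swap])
    refine card3_le (a := s(a, b)) (b := s(a, d)) (c := s(b, c)) ?_ ?_ ?_ ?_
    · intro e he'
      simp only [Finset.mem_insert, Finset.mem_singleton] at he'
      rw [mem_supp]
      rcases he' with rfl | rfl | rfl
      · exact he
      · exact hd2
      · exact hc2
    · exact s_ne (Or.inr hd1.symm) (Or.inr hab.symm)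
    · exact s_ne (Or.inl hab) (Or.inl hc1.symm)
    · exact s_ne (Or.inl hab) (Or.inl hc1.symm)

theorem eq_of_supp {G : SimpleGraph V} {z w : EV V} (hz : z ∈ Cyc G) (hw : w ∈ Cyc G)
    (hs : supp w ⊆ supp z) (hc : (supp z).card < (supp w).card + 3) : z = w := by
  by_contra hne
  have h0 : z + w ≠ 0 := by
    intro h0
    apply hne
    funext e
    have h1 := congrFun h0 e
    have h2 := zz (w e)
    simp only [Pi.add_apply, Pi.zero_apply] at h1
    linear_combination h1 - h2
  have h3 := supp_three ((Cyc G).add_mem hz hw) h0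
  have h4 : supp (z + w) ⊆ supp z \ supp w := by
    intro e he
    rw [mem_supp] at he
    rw [Finset.mem_sdiff, mem_supp, mem_supp]
    simp only [Pi.add_apply] at he
    by_cases hwe : w e = 0
    · rw [hwe, add_zero] at he
      exact ⟨he, fun h => h hwe⟩
    · exfalso
      have := mem_supp.mp (hs (mem_supp.mpr hwe))
      rw [z1 hwe, z1 this] at he
      exact he (zz 1)
  have h5 := Finset.card_le_card h4
  rw [Finset.card_sdiff_of_subset hs] at h5
  omega

theorem supp_tri {a b c : V} (h1 : a ≠ b) (h2 : a ≠ c) (h3 : b ≠ c) :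
    supp (tri a b c) = {s(a, b), s(a, c), s(b, c)} := by
  have e1 : s(a, b) ≠ s(a, c) := s_ne (Or.inr h3) (Or.inl h2)
  have e2 : s(a, b) ≠ s(b, c) := s_ne (Or.inl h1) (Or.inl h2)
  have e3 : s(a, c) ≠ s(b, c) := s_ne (Or.inl h1) (Or.inl h2)
  ext e
  rw [mem_supp]
  simp only [Finset.mem_insert, Finset.mem_singleton, tri, Pi.add_apply]
  by_cases d1 : e = s(a, b)
  · subst d1; simp [sg_apply_ne e1, sg_apply_ne e2]
  by_cases d2 : e = s(a, c)
  · subst d2; simp [sg_apply_ne e1.symm, sg_apply_ne e3]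
  by_cases d3 : e = s(b, c)
  · subst d3; simp [sg_apply_ne e2.symm, sg_apply_ne e3.symm]
  simp [d1, d2, d3, sg_apply_ne d1, sg_apply_ne d2, sg_apply_ne d3]

theorem card_tri {a b c : V} (h1 : a ≠ b) (h2 : a ≠ c) (h3 : b ≠ c) :
    (supp (tri a b c)).card = 3 := by
  rw [supp_tri h1 h2 h3]
  exact Finset.card_eq_three.mpr ⟨_, _, _, s_ne (Or.inr h3) (Or.inl h2),
    s_ne (Or.inl h1) (Or.inl h2), s_ne (Or.inl h1) (Or.inl h2), rfl⟩

/-- Quadrilateral vector. -/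
def quad (x y s r : V) : EV V := sg x y + sg y s + sg s r + sg r x

theorem supp_quad {x y s r : V} (h1 : x ≠ y) (h2 : y ≠ s) (h3 : s ≠ r) (h4 : r ≠ x)
    (h5 : x ≠ s) (h6 : y ≠ r) :
    supp (quad x y s r) = {s(x, y), s(y, s), s(s, r), s(r, x)} ∧ (supp (quad x y s r)).card = 4 := by
  have e1 : s(x, y) ≠ s(y, s) := s_ne (Or.inl h1) (Or.inl h5)
  have e2 : s(x, y) ≠ s(s, r) := s_ne (Or.inl h5) (Or.inl h4.symm)
  have e3 : s(x, y) ≠ s(r, x) := s_ne (Or.inl h4.symm) (Or.inr h6)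
  have e4 : s(y, s) ≠ s(s, r) := s_ne (Or.inl h2) (Or.inl h6)
  have e5 : s(y, s) ≠ s(r, x) := s_ne (Or.inl h6) (Or.inl h1.symm)
  have e6 : s(s, r) ≠ s(r, x) := s_ne (Or.inl h3) (Or.inl h5.symm)
  have key : supp (quad x y s r) = {s(x, y), s(y, s), s(s, r), s(r, x)} := by
    ext e
    rw [mem_supp]
    simp only [Finset.mem_insert, Finset.mem_singleton, quad, Pi.add_apply]
    by_cases d1 : e = s(x, y)
    · subst d1; simp [sg_apply_ne e1, sg_apply_ne e2, sg_apply_ne e3]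
    by_cases d2 : e = s(y, s)
    · subst d2; simp [sg_apply_ne e1.symm, sg_apply_ne e4, sg_apply_ne e5]
    by_cases d3 : e = s(s, r)
    · subst d3; simp [sg_apply_ne e2.symm, sg_apply_ne e4.symm, sg_apply_ne e6]
    by_cases d4 : e = s(r, x)
    · subst d4; simp [sg_apply_ne e3.symm, sg_apply_ne e5.symm, sg_apply_ne e6.symm]
    simp [d1, d2, d3, d4, sg_apply_ne d1, sg_apply_ne d2, sg_apply_ne d3, sg_apply_ne d4]
  refine ⟨key, ?_⟩
  rw [key]
  rw [Finset.card_insert_of_notMem, Finset.card_eq_three.mpr ⟨_, _, _, e4, e5, e6, rfl⟩]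
  simp only [Finset.mem_insert, Finset.mem_singleton]
  push Not
  exact ⟨e1, e2, e3⟩

theorem quad_mem {G : SimpleGraph V} {x y s r : V} (h1 : G.Adj x y) (h2 : G.Adj y s)
    (h3 : G.Adj s r) (h4 : G.Adj r x) : quad x y s r ∈ Cyc G := by
  refine ⟨fun e he => ?_, ?_⟩
  · have e1 : e ≠ s(x, y) := by rintro rfl; exact he h1
    have e2 : e ≠ s(y, s) := by rintro rfl; exact he h2
    have e3 : e ≠ s(s, r) := by rintro rfl; exact he h3
    have e4 : e ≠ s(r, x) := by rintro rfl; exact he h4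
    simp [quad, sg_apply_ne e1, sg_apply_ne e2, sg_apply_ne e3, sg_apply_ne e4]
  · simp only [quad, map_add, bd_sg h1.ne, bd_sg h2.ne, bd_sg h3.ne, bd_sg h4.ne]
    ext v
    simp only [Pi.add_apply, Pi.zero_apply]
    have ha := zz ((Pi.single x 1 : V → ZMod 2) v)
    have hb := zz ((Pi.single y 1 : V → ZMod 2) v)
    have hc := zz ((Pi.single s 1 : V → ZMod 2) v)
    have hd := zz ((Pi.single r 1 : V → ZMod 2) v)
    linear_combination ha + hb + hc + hd

theorem tri_of {G : SimpleGraph V} {z : EV V} (hz : z ∈ Cyc G) {a b c : V}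
    (h1 : z s(a, b) ≠ 0) (h2 : z s(a, c) ≠ 0) (h3 : z s(b, c) ≠ 0) (hc : (supp z).card ≤ 5) :
    G.Adj a b ∧ G.Adj a c ∧ G.Adj b c ∧ z = tri a b c := by
  have a1 := Cyc_adj hz h1
  have a2 := Cyc_adj hz h2
  have a3 := Cyc_adj hz h3
  refine ⟨a1, a2, a3, eq_of_supp hz (tri_mem a1 a2 a3) ?_ ?_⟩
  · rw [supp_tri a1.ne a2.ne a3.ne]
    intro e he
    simp only [Finset.mem_insert, Finset.mem_singleton] at he
    rw [mem_supp]
    rcases he with rfl | rfl | rfl <;> assumption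
  · rw [card_tri a1.ne a2.ne a3.ne]; omega

theorem quad_of {G : SimpleGraph V} {z : EV V} (hz : z ∈ Cyc G) {x y s r : V}
    (h1 : z s(x, y) ≠ 0) (h2 : z s(y, s) ≠ 0) (h3 : z s(s, r) ≠ 0) (h4 : z s(r, x) ≠ 0)
    (n1 : x ≠ s) (n2 : y ≠ r) (hc : (supp z).card ≤ 6) : z = quad x y s r := by
  have a1 := Cyc_adj hz h1
  have a2 := Cyc_adj hz h2
  have a3 := Cyc_adj hz h3
  have a4 := Cyc_adj hz h4
  obtain ⟨k1, k2⟩ := supp_quad a1.ne a2.ne a3.ne a4.ne n1 n2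
  refine eq_of_supp hz (quad_mem a1 a2 a3 a4) ?_ ?_
  · rw [k1]
    intro e he
    simp only [Finset.mem_insert, Finset.mem_singleton] at he
    rw [mem_supp]
    rcases he with rfl | rfl | rfl | rfl <;> assumption
  · rw [k2]; omega

theorem small_class {G : SimpleGraph V} {z : EV V} (hz : z ∈ Cyc G) {x y : V}
    (h1 : z s(x, y) ≠ 0) (hc : (supp z).card ≤ 5) :
    (∃ s, G.Adj x y ∧ G.Adj x s ∧ G.Adj y s ∧ z = tri x y s) ∨
    (∃ s r, x ≠ s ∧ y ≠ r ∧ G.Adj x y ∧ G.Adj y s ∧ G.Adj s r ∧ G.Adj r x ∧ z = quad x y s r) ∨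
    (∃ s t r, x ≠ s ∧ x ≠ t ∧ y ≠ t ∧ y ≠ r ∧ s ≠ r ∧
      z s(x, y) ≠ 0 ∧ z s(y, s) ≠ 0 ∧ z s(s, t) ≠ 0 ∧ z s(t, r) ≠ 0 ∧ z s(r, x) ≠ 0 ∧
      (supp z).card = 5) := by
  have sw : ∀ {a b : V}, z s(a, b) ≠ 0 → z s(b, a) ≠ 0 := by
    intro a b h; rwa [Sym2.eq_swap]
  have ne : ∀ {a b : V}, z s(a, b) ≠ 0 → a ≠ b := fun h => (Cyc_adj hz h).ne
  by_cases hT : ∃ s, G.Adj x y ∧ G.Adj x s ∧ G.Adj y s ∧ z = tri x y s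
  · exact Or.inl hT
  by_cases hQ : ∃ s r, x ≠ s ∧ y ≠ r ∧ G.Adj x y ∧ G.Adj y s ∧ G.Adj s r ∧ G.Adj r x ∧
      z = quad x y s r
  · exact Or.inr (Or.inl hQ)
  refine Or.inr (Or.inr ?_)
  obtain ⟨s, hs1, hs⟩ := Cyc_next hz (sw h1)
  obtain ⟨r, hr1, hr⟩ := Cyc_next hz h1
  have noT : ∀ s, z s(x, s) ≠ 0 → z s(y, s) ≠ 0 → False := fun s h2 h3 =>
    hT ⟨s, tri_of hz h1 h2 h3 hc⟩
  have noQ : ∀ s r, x ≠ s → y ≠ r → z s(y, s) ≠ 0 → z s(s, r) ≠ 0 → z s(r, x) ≠ 0 → False :=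
    fun s r n1 n2 h2 h3 h4 => hQ ⟨s, r, n1, n2, Cyc_adj hz h1, Cyc_adj hz h2, Cyc_adj hz h3,
      Cyc_adj hz h4, quad_of hz h1 h2 h3 h4 n1 n2 (by omega)⟩
  have hsr : s ≠ r := by rintro rfl; exact noT s hr hs
  obtain ⟨t, ht1, ht⟩ := Cyc_next hz (sw hs)
  obtain ⟨u, hu1, hu⟩ := Cyc_next hz (sw hr)
  have htx : t ≠ x := by rintro rfl; exact noT s (sw ht) hs
  have huy : u ≠ y := by rintro rfl; exact noT r hr (sw hu)
  have htr : t ≠ r := by rintro rfl; exact noQ s _ hs1.symm hr1.symm hs ht (sw hr)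
  have hus : u ≠ s := by rintro rfl; exact noQ _ r hs1.symm hr1.symm hs (sw hu) (sw hr)
  have n1 := ne h1
  have n2 := ne hs
  have n3 := ne hr
  have n4 := ne ht
  have n5 := ne hu
  have five : ({s(x, y), s(y, s), s(x, r), s(s, t), s(r, u)} : Finset (Sym2 V)) ⊆ supp z := by
    intro e he
    simp only [Finset.mem_insert, Finset.mem_singleton] at he
    rw [mem_supp]
    rcases he with rfl | rfl | rfl | rfl | rfl <;> assumption
  have e1 : s(x, y) ≠ s(y, s) := s_ne (Or.inl n1) (Or.inl hs1.symm)
  have e2 : s(x, y) ≠ s(x, r) := s_ne (Or.inr hr1.symm) (Or.inl n3)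
  have e3 : s(x, y) ≠ s(s, t) := s_ne (Or.inl hs1.symm) (Or.inl htx.symm)
  have e4 : s(x, y) ≠ s(r, u) := s_ne (Or.inl n3) (Or.inr hr1.symm)
  have e5 : s(y, s) ≠ s(x, r) := s_ne (Or.inl n1.symm) (Or.inl hr1.symm)
  have e6 : s(y, s) ≠ s(s, t) := s_ne (Or.inl n2) (Or.inl ht1.symm)
  have e7 : s(y, s) ≠ s(r, u) := s_ne (Or.inl hr1.symm) (Or.inl huy.symm)
  have e8 : s(x, r) ≠ s(s, t) := s_ne (Or.inl hs1.symm) (Or.inl htx.symm)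
  have e9 : s(x, r) ≠ s(r, u) := s_ne (Or.inl n3) (Or.inl hu1.symm)
  have e10 : s(s, t) ≠ s(r, u) := s_ne (Or.inl hsr) (Or.inl hus.symm)
  have c5 : ({s(x, y), s(y, s), s(x, r), s(s, t), s(r, u)} : Finset (Sym2 V)).card = 5 := by
    rw [Finset.card_insert_of_notMem, Finset.card_insert_of_notMem,
      Finset.card_eq_three.mpr ⟨_, _, _, e8, e9, e10, rfl⟩] <;>
      simp only [Finset.mem_insert, Finset.mem_singleton] <;> push Not
    · exact ⟨e5, e6, e7⟩
    · exact ⟨e1, e2, e3, e4⟩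
  have c6 := Finset.card_le_card five
  have h5 : (supp z).card = 5 := by omega
  have heq := Finset.eq_of_subset_of_card_le five (by omega)
  have htu : t = u := by
    by_contra htu
    obtain ⟨v, hv1, hv⟩ := Cyc_next hz (sw ht)
    have := mem_supp.mpr hv
    rw [← heq] at this
    simp only [Finset.mem_insert, Finset.mem_singleton] at this
    rcases this with h | h | h | h | h <;> rw [Sym2.eq_iff] at h <;>
      rcases h with ⟨h, h'⟩ | ⟨h, h'⟩ <;>
      first
      | exact htx h
      | exact ht1 h
      | exact n4 h.symm
      | exact htr h
      | exact htu h
      | exact hv1 h'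
  subst htu
  exact ⟨s, t, r, hs1.symm, htx.symm, ht1.symm, hr1.symm, hsr, h1, hs, ht, sw hu, sw hr, h5⟩

end base
end ML6

open SimpleGraph Finset

namespace ML6

set_option linter.unusedSectionVars false
set_option linter.unusedSimpArgs false
set_option linter.unusedVariables false
set_option linter.unnecessarySimpa false
set_option linter.style.longLine false

section base
variable {V : Type*} [Fintype V] [DecidableEq V]

theorem zzE (z : EV V) : z + z = 0 := by
  funext e; exact zz _

theorem hexS {G : SimpleGraph V} (hG : ¬ HasTheta6 G) (a b c d e f : V)
    (h1 : G.Adj a b := by first | assumption | (apply SimpleGraph.Adj.symm; assumption))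
    (h2 : G.Adj b c := by first | assumption | (apply SimpleGraph.Adj.symm; assumption))
    (h3 : G.Adj c d := by first | assumption | (apply SimpleGraph.Adj.symm; assumption))
    (h4 : G.Adj d e := by first | assumption | (apply SimpleGraph.Adj.symm; assumption))
    (h5 : G.Adj e f := by first | assumption | (apply SimpleGraph.Adj.symm; assumption))
    (h6 : G.Adj f a := by first | assumption | (apply SimpleGraph.Adj.symm; assumption))
    (h7 : G.Adj a c ∨ G.Adj a d := by
      first
        | (left; assumption) | (left; apply SimpleGraph.Adj.symm; assumption)
        | (right; assumption) | (right; apply SimpleGraph.Adj.symm; assumption))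
    (n1 : a ≠ c := by
      first
        | assumption | (apply Ne.symm; assumption)
        | exact SimpleGraph.Adj.ne (by assumption) | exact (SimpleGraph.Adj.ne (by assumption)).symm)
    (n2 : a ≠ d := by
      first
        | assumption | (apply Ne.symm; assumption)
        | exact SimpleGraph.Adj.ne (by assumption) | exact (SimpleGraph.Adj.ne (by assumption)).symm)
    (n3 : a ≠ e := by
      first
        | assumption | (apply Ne.symm; assumption)
        | exact SimpleGraph.Adj.ne (by assumption) | exact (SimpleGraph.Adj.ne (by assumption)).symm)
    (n4 : b ≠ d := by
      first
        | assumption | (apply Ne.symm; assumption)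
        | exact SimpleGraph.Adj.ne (by assumption) | exact (SimpleGraph.Adj.ne (by assumption)).symm)
    (n5 : b ≠ e := by
      first
        | assumption | (apply Ne.symm; assumption)
        | exact SimpleGraph.Adj.ne (by assumption) | exact (SimpleGraph.Adj.ne (by assumption)).symm)
    (n6 : b ≠ f := by
      first
        | assumption | (apply Ne.symm; assumption)
        | exact SimpleGraph.Adj.ne (by assumption) | exact (SimpleGraph.Adj.ne (by assumption)).symm)
    (n7 : c ≠ e := by
      first
        | assumption | (apply Ne.symm; assumption)
        | exact SimpleGraph.Adj.ne (by assumption) | exact (SimpleGraph.Adj.ne (by assumption)).symm)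
    (n8 : c ≠ f := by
      first
        | assumption | (apply Ne.symm; assumption)
        | exact SimpleGraph.Adj.ne (by assumption) | exact (SimpleGraph.Adj.ne (by assumption)).symm)
    (n9 : d ≠ f := by
      first
        | assumption | (apply Ne.symm; assumption)
        | exact SimpleGraph.Adj.ne (by assumption) | exact (SimpleGraph.Adj.ne (by assumption)).symm) :
    False := by
  apply hG
  have m1 := h1.ne
  have m2 := h2.ne
  have m3 := h3.ne
  have m4 := h4.ne
  have m5 := h5.ne
  have m6 := h6.ne
  refine ⟨![a, b, c, d, e, f], ?_, ?_, ?_⟩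
  · rw [← List.nodup_ofFn]
    simp [List.ofFn_succ, *, m6.symm]
  · intro i
    fin_cases i <;> assumption
  · rcases h7 with h | h
    · exact ⟨0, 2, by decide, by decide, by decide, h⟩
    · exact ⟨0, 3, by decide, by decide, by decide, h⟩

variable {ι : Type} [Fintype ι] [DecidableEq ι]

/-- The setting of the discharging argument. -/
structure Sys (G : SimpleGraph V) (b : ι → EV V) : Prop where
  mem : ∀ i, b i ∈ Cyc G
  cov : ∀ i j k e, b i e ≠ 0 → b j e ≠ 0 → b k e ≠ 0 → i = j ∨ i = k ∨ j = k
  ind : ∀ s : Finset ι, ∑ i ∈ s, b i = 0 → s = ∅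
  th : ¬ HasTheta6 G
  pl : IsPlanar G

/-- Face `i` is the triangle `xyz`. -/
structure Tr (G : SimpleGraph V) (b : ι → EV V) (i : ι) (x y z : V) : Prop where
  a1 : G.Adj x y
  a2 : G.Adj x z
  a3 : G.Adj y z
  eq : b i = tri x y z

/-- `xyz` is a triangular face. -/
def T (G : SimpleGraph V) (b : ι → EV V) (x y z : V) : Prop := ∃ i, Tr G b i x y z

/-- Face `i` is a triangle. -/
def isT (G : SimpleGraph V) (b : ι → EV V) (i : ι) : Prop := ∃ x y z, Tr G b i x y z

/-- Face `l` is the quadrilateral `xysr`. -/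
structure Qd (G : SimpleGraph V) (b : ι → EV V) (l : ι) (x y s r : V) : Prop where
  nt : ¬ isT G b l
  a1 : G.Adj x y
  a2 : G.Adj y s
  a3 : G.Adj s r
  a4 : G.Adj r x
  n1 : x ≠ s
  n2 : y ≠ r
  e1 : b l s(x, y) ≠ 0
  e2 : b l s(y, s) ≠ 0
  e3 : b l s(s, r) ≠ 0
  e4 : b l s(r, x) ≠ 0
  eq : b l = quad x y s r

/-- Face `l` contains the pentagon `xystr`. -/
structure Pn (G : SimpleGraph V) (b : ι → EV V) (l : ι) (x y s t r : V) : Prop where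
  nt : ¬ isT G b l
  a1 : G.Adj x y
  a2 : G.Adj y s
  a3 : G.Adj s t
  a4 : G.Adj t r
  a5 : G.Adj r x
  n1 : x ≠ s
  n2 : x ≠ t
  n3 : y ≠ t
  n4 : y ≠ r
  n5 : s ≠ r
  e1 : b l s(x, y) ≠ 0
  e2 : b l s(y, s) ≠ 0
  e3 : b l s(s, t) ≠ 0
  e4 : b l s(t, r) ≠ 0
  e5 : b l s(r, x) ≠ 0

variable {G : SimpleGraph V} {b : ι → EV V}

theorem tri_sw (x y z : V) : tri x y z = tri y x z := by
  simp only [tri, sg_comm x y]; ring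

theorem tri_sw' (x y z : V) : tri x y z = tri x z y := by
  simp only [tri, sg_comm y z]; ring

theorem Tr.s12 {i : ι} {x y z : V} (h : Tr G b i x y z) : Tr G b i y x z :=
  ⟨h.a1.symm, h.a3, h.a2, by rw [h.eq, tri_sw]⟩

theorem Tr.s23 {i : ι} {x y z : V} (h : Tr G b i x y z) : Tr G b i x z y :=
  ⟨h.a2, h.a1, h.a3.symm, by rw [h.eq, tri_sw']⟩

theorem T.s12 {x y z : V} (h : T G b x y z) : T G b y x z := h.imp fun _ => Tr.s12
theorem T.s23 {x y z : V} (h : T G b x y z) : T G b x z y := h.imp fun _ => Tr.s23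
theorem T.rot {x y z : V} (h : T G b x y z) : T G b y z x := h.s12.s23
theorem T.rot2 {x y z : V} (h : T G b x y z) : T G b z x y := h.rot.rot
theorem T.s13 {x y z : V} (h : T G b x y z) : T G b z y x := h.rot2.s23
theorem T.a1 {x y z : V} (h : T G b x y z) : G.Adj x y := h.choose_spec.a1
theorem T.a2 {x y z : V} (h : T G b x y z) : G.Adj x z := h.choose_spec.a2
theorem T.a3 {x y z : V} (h : T G b x y z) : G.Adj y z := h.choose_spec.a3

theorem Tr.e1 {i : ι} {x y z : V} (h : Tr G b i x y z) : b i s(x, y) ≠ 0 := by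
  rw [h.eq, ← mem_supp, supp_tri h.a1.ne h.a2.ne h.a3.ne]; simp

theorem Tr.mem {i : ι} {x y z : V} (h : Tr G b i x y z) {e : Sym2 V} :
    b i e ≠ 0 ↔ e = s(x, y) ∨ e = s(x, z) ∨ e = s(y, z) := by
  rw [h.eq, ← mem_supp, supp_tri h.a1.ne h.a2.ne h.a3.ne]; simp

theorem Tr.uniq {i j : ι} {x y u v : V} (h : Tr G b i x y u) (h' : Tr G b j x y v) (hij : i = j) :
    u = v := by
  subst hij
  have h1 := h.s23.e1
  rw [h'.mem] at h1
  simp only [Sym2.eq_iff] at h1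
  have := h.a1.ne
  have := h.a2.ne
  have := h.a3.ne
  rcases h1 with (h1 | h1) | (h1 | h1) | (h1 | h1) <;> first | exact h1.2 | (exfalso; obtain ⟨p, q⟩ := h1; subst_vars; simp_all)

theorem Qd.sw {l : ι} {x y s r : V} (h : Qd G b l x y s r) : Qd G b l y x r s := by
  refine ⟨h.nt, h.a1.symm, h.a4.symm, h.a3.symm, h.a2.symm, h.n2, h.n1, ?_, ?_, ?_, ?_, ?_⟩
  · rw [Sym2.eq_swap]; exact h.e1
  · rw [Sym2.eq_swap]; exact h.e4
  · rw [Sym2.eq_swap]; exact h.e3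
  · rw [Sym2.eq_swap]; exact h.e2
  · rw [h.eq]
    simp only [quad, sg_comm y x, sg_comm x r, sg_comm r s, sg_comm s y]
    ring

theorem Sys.inj (S : Sys G b) {i j : ι} (h : b i = b j) : i = j := by
  by_contra hne
  have := S.ind {i, j} (by rw [Finset.sum_pair hne, h]; exact zzE _)
  simp at this

theorem Sys.blkN (S : Sys G b) {l : ι} (x y u v : V) (hl : ¬ isT G b l)
    (h1 : T G b x y u := by
      first
        | assumption | (apply T.s12; assumption)
        | (apply T.s23; assumption) | (apply T.rot; assumption) | (apply T.rot2; assumption)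
        | (apply T.s13; assumption))
    (h2 : T G b x y v := by
      first
        | assumption | (apply T.s12; assumption)
        | (apply T.s23; assumption) | (apply T.rot; assumption) | (apply T.rot2; assumption)
        | (apply T.s13; assumption))
    (huv : u ≠ v := by
      first
        | assumption | (apply Ne.symm; assumption)
        | exact SimpleGraph.Adj.ne (by assumption) | exact (SimpleGraph.Adj.ne (by assumption)).symm)
    (he : b l s(x, y) ≠ 0 := by first | assumption | (rw [Sym2.eq_swap]; assumption)) : False := by
  obtain ⟨i, hi⟩ := h1
  obtain ⟨j, hj⟩ := h2
  rcases S.cov i j l _ hi.e1 hj.e1 he with h | h | h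
  · exact huv (hi.uniq hj h)
  · exact hl ⟨_, _, _, h ▸ hi⟩
  · exact hl ⟨_, _, _, h ▸ hj⟩

theorem Sys.blkT (S : Sys G b) (x y u v g : V)
    (h1 : T G b x y u := by
      first
        | assumption | (apply T.s12; assumption)
        | (apply T.s23; assumption) | (apply T.rot; assumption) | (apply T.rot2; assumption)
        | (apply T.s13; assumption))
    (h2 : T G b x y v := by
      first
        | assumption | (apply T.s12; assumption)
        | (apply T.s23; assumption) | (apply T.rot; assumption) | (apply T.rot2; assumption)
        | (apply T.s13; assumption))
    (h3 : T G b x y g := by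
      first
        | assumption | (apply T.s12; assumption)
        | (apply T.s23; assumption) | (apply T.rot; assumption) | (apply T.rot2; assumption)
        | (apply T.s13; assumption))
    (huv : u ≠ v := by
      first
        | assumption | (apply Ne.symm; assumption)
        | exact SimpleGraph.Adj.ne (by assumption) | exact (SimpleGraph.Adj.ne (by assumption)).symm)
    (hug : u ≠ g := by
      first
        | assumption | (apply Ne.symm; assumption)
        | exact SimpleGraph.Adj.ne (by assumption) | exact (SimpleGraph.Adj.ne (by assumption)).symm)
    (hvg : v ≠ g := by
      first
        | assumption | (apply Ne.symm; assumption)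
        | exact SimpleGraph.Adj.ne (by assumption) | exact (SimpleGraph.Adj.ne (by assumption)).symm) :
    False := by
  obtain ⟨i, hi⟩ := h1
  obtain ⟨j, hj⟩ := h2
  obtain ⟨k, hk⟩ := h3
  rcases S.cov i j k _ hi.e1 hj.e1 hk.e1 with h | h | h
  · exact huv (hi.uniq hj h)
  · exact hug (hi.uniq hk h)
  · exact hvg (hj.uniq hk h)

theorem Sys.blkQ (S : Sys G b) {l : ι} (x y u g : V) (hl : ¬ isT G b l)
    (h1 : T G b x y u := by
      first
        | assumption | (apply T.s12; assumption)
        | (apply T.s23; assumption) | (apply T.rot; assumption) | (apply T.rot2; assumption)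
        | (apply T.s13; assumption))
    (h2 : T G b x y g := by
      first
        | assumption | (apply T.s12; assumption)
        | (apply T.s23; assumption) | (apply T.rot; assumption) | (apply T.rot2; assumption)
        | (apply T.s13; assumption))
    (hug : u ≠ g := by
      first
        | assumption | (apply Ne.symm; assumption)
        | exact SimpleGraph.Adj.ne (by assumption) | exact (SimpleGraph.Adj.ne (by assumption)).symm)
    (he : b l s(x, y) ≠ 0 := by first | assumption | (rw [Sym2.eq_swap]; assumption)) : False := by
  exact S.blkN x y u g hl h1 h2 hug he

theorem Sys.four (S : Sys G b) {i j k l : ι} (h1 : i ≠ j) (h2 : i ≠ k) (h3 : i ≠ l) (h4 : j ≠ k)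
    (h5 : j ≠ l) (h6 : k ≠ l) (h : b i + b j + b k + b l = 0) : False := by
  have := S.ind {i, j, k, l} (by
    rw [Finset.sum_insert (by simp [*]), Finset.sum_insert (by simp [*]),
      Finset.sum_insert (by simp [*]), Finset.sum_singleton, ← h]
    ring)
  simp at this

theorem Sys.five (S : Sys G b) {i j k l m : ι} (h1 : i ≠ j) (h2 : i ≠ k) (h3 : i ≠ l) (h4 : j ≠ k)
    (h5 : j ≠ l) (h6 : k ≠ l) (h7 : i ≠ m) (h8 : j ≠ m) (h9 : k ≠ m) (h10 : l ≠ m)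
    (h : b i + b j + b k + b l + b m = 0) : False := by
  have := S.ind {i, j, k, l, m} (by
    rw [Finset.sum_insert (by simp [*]), Finset.sum_insert (by simp [*]),
      Finset.sum_insert (by simp [*]), Finset.sum_insert (by simp [*]),
      Finset.sum_singleton, ← h]
    ring)
  simp at this

theorem Sys.six (S : Sys G b) {i j k l m n : ι} (h1 : i ≠ j) (h2 : i ≠ k) (h3 : i ≠ l) (h4 : j ≠ k)
    (h5 : j ≠ l) (h6 : k ≠ l) (h7 : i ≠ m) (h8 : j ≠ m) (h9 : k ≠ m) (h10 : l ≠ m)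
    (g1 : i ≠ n) (g2 : j ≠ n) (g3 : k ≠ n) (g4 : l ≠ n) (g5 : m ≠ n)
    (h : b i + b j + b k + b l + b m + b n = 0) : False := by
  have := S.ind {i, j, k, l, m, n} (by
    rw [Finset.sum_insert (by simp [*]), Finset.sum_insert (by simp [*]),
      Finset.sum_insert (by simp [*]), Finset.sum_insert (by simp [*]),
      Finset.sum_insert (by simp [*]), Finset.sum_singleton, ← h]
    ring)
  simp at this

theorem Tr.ne {i j : ι} {x y z p q r : V} (h : Tr G b i x y z) (h' : Tr G b j p q r)
    (h1 : z ≠ p) (h2 : z ≠ q) (h3 : z ≠ r) : i ≠ j := by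
  rintro rfl
  have h4 := h.s23.e1
  rw [h'.mem] at h4
  simp only [Sym2.eq_iff] at h4
  rcases h4 with (h4 | h4) | (h4 | h4) | (h4 | h4) <;> obtain ⟨p, q⟩ := h4 <;> contradiction

end base
end ML6

open SimpleGraph Finset

namespace ML6

set_option linter.unusedSectionVars false
set_option linter.unusedSimpArgs false
set_option linter.unusedVariables false
set_option linter.unnecessarySimpa false
set_option linter.style.longLine false

section base
variable {V : Type*} [Fintype V] [DecidableEq V] {ι : Type} [Fintype ι] [DecidableEq ι]
variable {G : SimpleGraph V} {b : ι → EV V}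

/-- Two edges of the face `l` lying in no triangular face. -/
def TwoNT (G : SimpleGraph V) (b : ι → EV V) (l : ι) : Prop :=
  ∃ x y z w, s(x, y) ≠ s(z, w) ∧ b l s(x, y) ≠ 0 ∧ b l s(z, w) ≠ 0 ∧
    (∀ g, ¬ T G b x y g) ∧ (∀ g, ¬ T G b z w g)

theorem Sys.V1aux (S : Sys G b) {p c q w r : V} {l : ι} (h1 : T G b p q c) (h2 : T G b p q w)
    (h3 : T G b p c w) (hQ : Qd G b l q c w r) (hrp : r ≠ p) : TwoNT G b l := by
  have g1 := h1.a1
  have g2 := h1.a2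
  have g3 := h1.a3
  have g4 := h2.a2
  have g5 := h2.a3
  have g6 := h3.a3
  obtain ⟨nt, a1, a2, a3, a4, n1, n2, e1, e2, e3, e4, eq⟩ := hQ
  have noT : ¬ T G b w r q := by
    rintro ⟨m, hm⟩
    obtain ⟨i, hi⟩ := h1
    obtain ⟨j, hj⟩ := h2
    obtain ⟨k, hk⟩ := h3
    have d : ∀ i x y z, Tr G b i x y z → i ≠ l := by
      rintro i x y z h rfl
      exact nt ⟨_, _, _, h⟩
    refine S.five (i := i) (j := j) (k := k) (l := m) (m := l) ?_ ?_ ?_ ?_ ?_ ?_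
      (d _ _ _ _ hi) (d _ _ _ _ hj) (d _ _ _ _ hk) (d _ _ _ _ hm) ?_
    · exact hi.ne hj g2.ne.symm g3.ne.symm g6.ne
    · exact hi.s23.ne hk g1.ne.symm g3.ne g5.ne
    · exact (hm.s23.ne hi hrp a4.ne n2.symm).symm
    · exact hj.s23.ne hk g1.ne.symm g3.ne g5.ne
    · exact (hm.s23.ne hj hrp a4.ne a3.ne.symm).symm
    · exact (hm.s23.ne hk hrp n2.symm a3.ne.symm).symm
    · rw [hi.eq, hj.eq, hk.eq, hm.eq, eq]
      simp only [tri, quad, sg_comm w q, sg_comm r q]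
      linear_combination zzE (sg p q) + zzE (sg p c) + zzE (sg q c) + zzE (sg p w) +
        zzE (sg q w) + zzE (sg c w) + zzE (sg w r) + zzE (sg q r)
  refine ⟨w, r, r, q, s_ne (Or.inl a3.ne) (Or.inl n1.symm), e3, e4, ?_, ?_⟩
  · intro g hg
    have k1 := hg.a2
    have k2 := hg.a3
    rcases eq_or_ne g q with rfl | hq
    · exact noT hg
    rcases eq_or_ne g c with rfl | hc
    · exact S.blkQ w g p r nt
    rcases eq_or_ne g p with rfl | hp
    · exact S.blkT w g q c r
    exact hexS S.th q p c w g r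
  · intro g hg
    have k1 := hg.a2
    have k2 := hg.a3
    rcases eq_or_ne g w with rfl | hw
    · exact noT hg.rot2.s23.s23
    rcases eq_or_ne g c with rfl | hc
    · exact S.blkQ q g p r nt
    rcases eq_or_ne g p with rfl | hp
    · exact S.blkT q g w c r
    exact hexS S.th p c q g r w

theorem Sys.V1 (S : Sys G b) {p c q w s r : V} {l : ι} (h1 : T G b p q c) (h2 : T G b p q w)
    (h3 : T G b p c w) (hQ : Qd G b l q c s r) : TwoNT G b l := by
  have hQ' := hQ
  have g1 := h1.a1
  have g2 := h1.a2
  have g3 := h1.a3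
  have g4 := h2.a2
  have g5 := h2.a3
  have g6 := h3.a3
  obtain ⟨nt, a1, a2, a3, a4, n1, n2, e1, e2, e3, e4, eq⟩ := hQ
  rcases eq_or_ne s p with rfl | hsp
  · exact (S.blkN c s q w nt).elim
  rcases eq_or_ne r p with rfl | hrp
  · exact (S.blkN q r c w nt).elim
  rcases eq_or_ne s w with rfl | hsw
  · exact S.V1aux h1 h2 h3 hQ' hrp
  rcases eq_or_ne r w with rfl | hrw
  · exact S.V1aux h1.s23 h3 h2 hQ'.sw hsp
  exact (hexS S.th q p w c s r).elim

theorem Sys.V3 (S : Sys G b) {p q c y z s r : V} {l : ι} (h1 : T G b p q c) (h2 : T G b p c y)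
    (h3 : T G b p y z) (h4 : T G b p z q) (hqy : q ≠ y) (hcz : c ≠ z)
    (hQ : Qd G b l q c s r) : False := by
  have hQ' := hQ
  have g1 := h1.a1
  have g2 := h1.a2
  have g3 := h1.a3
  have g4 := h2.a2
  have g5 := h2.a3
  have g6 := h3.a2
  have g7 := h3.a3
  have g8 := h4.a3
  obtain ⟨nt, a1, a2, a3, a4, n1, n2, e1, e2, e3, e4, eq⟩ := hQ
  rcases eq_or_ne s p with rfl | hsp
  · exact S.blkN c s q y nt
  rcases eq_or_ne r p with rfl | hrp
  · exact S.blkN q r c z nt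
  rcases eq_or_ne s y with rfl | hsy
  · rcases eq_or_ne r z with rfl | hrz
    · obtain ⟨i, hi⟩ := h1
      obtain ⟨j, hj⟩ := h2
      obtain ⟨k, hk⟩ := h3
      obtain ⟨m, hm⟩ := h4
      have d : ∀ i x y z, Tr G b i x y z → i ≠ l := by
        rintro i x y z h rfl
        exact nt ⟨_, _, _, h⟩
      refine S.five (i := i) (j := j) (k := k) (l := m) (m := l) ?_ ?_ ?_ ?_ ?_ ?_
        (d _ _ _ _ hi) (d _ _ _ _ hj) (d _ _ _ _ hk) (d _ _ _ _ hm) ?_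
      · exact hi.s23.ne hj g1.ne.symm g3.ne hqy
      · exact hi.s23.ne hk g1.ne.symm hqy g8.ne.symm
      · exact hi.ne hm g2.ne.symm hcz g3.ne.symm
      · exact hj.s23.ne hk g2.ne.symm g5.ne hcz
      · exact hj.s23.ne hm g2.ne.symm hcz g3.ne.symm
      · exact hk.s23.ne hm g4.ne.symm g7.ne hqy.symm
      · rw [hi.eq, hj.eq, hk.eq, hm.eq, eq]
        simp only [tri, quad]
        linear_combination zzE (sg p q) + zzE (sg p c) + zzE (sg q c) + zzE (sg p s) +
          zzE (sg c s) + zzE (sg p r) + zzE (sg s r) + zzE (sg r q)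
    · exact hexS S.th p c s r q z
  rcases eq_or_ne r y with rfl | hry
  · rcases eq_or_ne s z with rfl | hsz
    · exact K5_not_planar g1 g2 g4 g6 g3 a4.symm g8.symm g5 a2 g7 S.pl
    · exact hexS S.th p c s r q z
  exact hexS S.th p y c s r q

theorem Sys.V5aux (S : Sys G b) {p q c y z : V} (h1 : T G b p q c) (h2 : T G b p q z)
    (h3 : T G b p c y) (hzc : z ≠ c) (hyq : y ≠ q) (hyz : y ≠ z)
    (hout : ∀ g, T G b q c g → g = p)
    (h4 : (∃ g, g ≠ q ∧ T G b p z g) ∨ (∃ g, g ≠ p ∧ T G b q z g)) :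
    T G b p y z ∨ G.Adj q y := by
  have g1 := h1.a1
  have g2 := h1.a2
  have g3 := h1.a3
  have g4 := h2.a2
  have g5 := h2.a3
  have g6 := h3.a2
  have g7 := h3.a3
  rcases h4 with ⟨g, hg, h4⟩ | ⟨g, hg, h4⟩
  · have k1 := h4.a2
    have k2 := h4.a3
    rcases eq_or_ne g c with rfl | hgc
    · exact (S.blkT p g q y z).elim
    rcases eq_or_ne g y with rfl | hgy
    · exact Or.inl h4.s23
    exact (hexS S.th p g z q c y).elim
  · have k1 := h4.a2
    have k2 := h4.a3
    rcases eq_or_ne g c with rfl | hgc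
    · exact absurd (hout z h4.s23) g4.ne.symm
    rcases eq_or_ne g y with rfl | hgy
    · exact Or.inr k1
    exact (hexS S.th p z g q c y).elim

theorem Sys.V5 (S : Sys G b) {p q c y z s r : V} {l : ι} (h1 : T G b p q c) (h2 : T G b p q z)
    (h3 : T G b p c y) (hzc : z ≠ c) (hyq : y ≠ q) (hyz : y ≠ z)
    (hQ : Qd G b l q c s r)
    (h4 : (∃ g, g ≠ q ∧ T G b p z g) ∨ (∃ g, g ≠ p ∧ T G b q z g))
    (h5 : (∃ g, g ≠ c ∧ T G b p y g) ∨ (∃ g, g ≠ p ∧ T G b c y g)) : False := by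
  have hout : ∀ g, T G b q c g → g = p := by
    intro g hg
    by_contra hne
    have := hQ.e1
    exact S.blkQ q c p g hQ.nt
  have k1 := S.V5aux h1 h2 h3 hzc hyq hyz hout h4
  have k2 := S.V5aux h1.s23 h3 h2 hyq hzc hyz.symm (fun g hg => hout g hg.s12) h5
  have noW : ¬ T G b p y z := fun h => S.V3 h1 h3 h h2.s23 hyq.symm hzc.symm hQ
  have k1' := k1.resolve_left noW
  have k2' := k2.resolve_left fun h => noW h.s23
  have zy : G.Adj z y := by
    rcases h4 with ⟨g, hg, h4⟩ | ⟨g, hg, h4⟩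
    · exfalso
      have m1 := h4.a2
      have m2 := h4.a3
      have g1 := h1.a1
      have g2 := h1.a2
      have g3 := h1.a3
      have g4 := h2.a2
      have g5 := h2.a3
      have g6 := h3.a2
      have g7 := h3.a3
      rcases eq_or_ne g c with rfl | hgc
      · exact S.blkT p g q y z
      rcases eq_or_ne g y with rfl | hgy
      · exact noW h4.s23
      exact hexS S.th p g z q c y
    · have m1 := h4.a2
      have m2 := h4.a3
      have g1 := h1.a1
      have g2 := h1.a2
      have g3 := h1.a3
      have g4 := h2.a2
      have g5 := h2.a3
      have g6 := h3.a2
      have g7 := h3.a3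
      rcases eq_or_ne g c with rfl | hgc
      · exact absurd (hout z h4.s23) g4.ne.symm
      rcases eq_or_ne g y with rfl | hgy
      · exact m2
      exact (hexS S.th p z g q c y).elim
  exact K5_not_planar h1.a1 h1.a2 h3.a2 h2.a2 h1.a3 k1' h2.a3 h3.a3 k2' zy.symm S.pl

end base
end ML6

open SimpleGraph Finset

namespace ML6

set_option linter.unusedSectionVars false
set_option linter.unusedSimpArgs false
set_option linter.unusedVariables false
set_option linter.unnecessarySimpa false
set_option linter.style.longLine false

section base
variable {V : Type*} [Fintype V] [DecidableEq V] {ι : Type} [Fintype ι] [DecidableEq ι]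
variable {G : SimpleGraph V} {b : ι → EV V}

theorem Sys.V2aux (S : Sys G b) {p q c w z s : V} {l : ι} (h1 : T G b p q c) (h2 : T G b q c w)
    (h3 : T G b c p w) (h4 : T G b p q z) (hzc : z ≠ c) (hzw : z ≠ w)
    (nt : ¬ isT G b l) (e1 : b l s(z, p) ≠ 0)
    (a2 : G.Adj p s) (a3 : G.Adj s q) (hsc : s ≠ c) (hsw : s ≠ w) (hsz : s ≠ z) (g : V) :
    ¬ T G b p s g := by
  intro hg
  have g1 := h1.a1
  have g2 := h1.a2
  have g3 := h1.a3
  have g4 := h2.a2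
  have g5 := h2.a3
  have g6 := h3.a3
  have g7 := h4.a2
  have g8 := h4.a3
  have k1 := hg.a2
  have k2 := hg.a3
  rcases eq_or_ne g q with rfl | hgq
  · exact S.blkT p g c z s
  rcases eq_or_ne g c with rfl | hgc
  · exact S.blkT p g q w s
  rcases eq_or_ne g w with rfl | hgw
  · exact hexS S.th p s g c q z
  rcases eq_or_ne g z with rfl | hgz
  · exact S.blkQ p g q s nt
  exact hexS S.th q s g p w c

theorem Sys.V2 (S : Sys G b) {p q c w z s r : V} {l : ι} (h1 : T G b p q c) (h2 : T G b q c w)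
    (h3 : T G b c p w) (h4 : T G b p q z) (hzc : z ≠ c) (hzw : z ≠ w)
    (hQ : Qd G b l z p s r) : TwoNT G b l := by
  have g1 := h1.a1
  have g2 := h1.a2
  have g3 := h1.a3
  have g4 := h2.a2
  have g5 := h2.a3
  have g6 := h3.a3
  have g7 := h4.a2
  have g8 := h4.a3
  obtain ⟨nt, a1, a2, a3, a4, n1, n2, e1, e2, e3, e4, eq⟩ := hQ
  rcases eq_or_ne s q with rfl | hsq
  · exact (S.blkN p s c z nt).elim
  rcases eq_or_ne s c with rfl | hsc
  · exact (S.blkN p s q w nt).elim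
  rcases eq_or_ne r q with rfl | hrq
  · rcases eq_or_ne s w with rfl | hsw
    · exfalso
      obtain ⟨i, hi⟩ := h1
      obtain ⟨j, hj⟩ := h2
      obtain ⟨k, hk⟩ := h3
      obtain ⟨m, hm⟩ := h4
      have d : ∀ i x y z, Tr G b i x y z → i ≠ l := by
        rintro i x y z h rfl
        exact nt ⟨_, _, _, h⟩
      refine S.five (i := i) (j := j) (k := k) (l := m) (m := l) ?_ ?_ ?_ ?_ ?_ ?_
        (d _ _ _ _ hi) (d _ _ _ _ hj) (d _ _ _ _ hk) (d _ _ _ _ hm) ?_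
      · exact (hj.ne hi a2.ne.symm a3.ne hsc).symm
      · exact (hk.ne hi a2.ne.symm a3.ne hsc).symm
      · exact (hm.ne hi g7.ne.symm g8.ne.symm hzc).symm
      · exact (hk.s23.ne hj.s12.s12 (by exact n2) g2.ne a2.ne) |>.symm
      · exact (hm.ne hj g8.ne.symm hzc hzw).symm
      · exact (hm.ne hk hzc g7.ne.symm hzw).symm
      · rw [hi.eq, hj.eq, hk.eq, hm.eq, eq]
        simp only [tri, quad, sg_comm c p, sg_comm z p, sg_comm s r]
        linear_combination zzE (sg p r) + zzE (sg p c) + zzE (sg r c) + zzE (sg p z) +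
          zzE (sg r z) + zzE (sg p s) + zzE (sg r s) + zzE (sg c s)
    · refine ⟨p, s, s, r, s_ne (Or.inl a2.ne) (Or.inl n2), e2, e3, ?_, ?_⟩
      · exact S.V2aux h1 h2 h3 h4 hzc hzw nt e1 a2 a3 hsc hsw n1.symm
      · intro g hg
        exact S.V2aux (g := g) h1.s12 h3.s12 h2.s12 h4.s12 hzc hzw nt
          (by rw [Sym2.eq_swap]; exact e4) a3.symm a2.symm hsc hsw n1.symm hg.s12
  exfalso
  rcases eq_or_ne r c with rfl | hrc
  · rcases eq_or_ne s w with rfl | hsw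
    · exact S.blkN s r p q nt
    · exact hexS S.th p s r z q w
  · exact hexS S.th p s r z q c

theorem Sys.O1 (S : Sys G b) {p q c w z g : V} (h1 : T G b p q c) (h2 : T G b q c w)
    (h3 : T G b c p w) (h4 : T G b p q z) (h5 : T G b p z w) (hzc : z ≠ c)
    (hg : T G b z q g) : g = p := by
  have g1 := h1.a1
  have g2 := h1.a2
  have g3 := h1.a3
  have g4 := h2.a2
  have g5 := h2.a3
  have g6 := h3.a3
  have g7 := h4.a2
  have g8 := h4.a3
  have g9 := h5.a3
  have k1 := hg.a2
  have k2 := hg.a3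
  by_contra hgp
  rcases eq_or_ne g c with rfl | hgc
  · exact S.blkT q g p w z
  rcases eq_or_ne g w with rfl | hgw
  · obtain ⟨i, hi⟩ := h1
    obtain ⟨j, hj⟩ := h2
    obtain ⟨k, hk⟩ := h3
    obtain ⟨m, hm⟩ := h4
    obtain ⟨n, hn⟩ := h5
    obtain ⟨o, ho⟩ := hg
    refine S.six (i := i) (j := j) (k := k) (l := m) (m := n) (n := o) ?_ ?_ ?_ ?_ ?_ ?_ ?_ ?_ ?_ ?_
      ?_ ?_ ?_ ?_ ?_ ?_
    · exact (hj.ne hi g6.ne.symm g4.ne.symm g5.ne.symm).symm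
    · exact (hk.ne hi g6.ne.symm g4.ne.symm g5.ne.symm).symm
    · exact (hm.ne hi g7.ne.symm g8.ne.symm hzc).symm
    · exact (hk.s23.s12.s23.s12.s12.s23.ne hj g1.ne g2.ne g6.ne).symm
    · exact (hm.ne hj g8.ne.symm hzc g9.ne).symm
    · exact (hm.ne hk hzc g7.ne.symm g9.ne).symm
    · exact (hn.ne hi g6.ne.symm g4.ne.symm g5.ne.symm).symm
    · exact (hn.s23.ne hj g8.ne.symm hzc g9.ne).symm
    · exact (hn.s23.ne hk hzc g7.ne.symm g9.ne).symm
    · exact (hn.ne hm g6.ne.symm g4.ne.symm g9.ne.symm).symm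
    · exact (ho.ne hi g6.ne.symm g4.ne.symm g5.ne.symm).symm
    · exact (ho.s23.s12.s23.ne hj g8.ne.symm hzc g9.ne).symm
    · exact (ho.s23.s12.s23.ne hk hzc g7.ne.symm g9.ne).symm
    · exact (ho.ne hm g6.ne.symm g4.ne.symm g9.ne.symm).symm
    · exact (ho.s23.ne hn g1.ne.symm g8.ne g4.ne).symm
    · rw [hi.eq, hj.eq, hk.eq, hm.eq, hn.eq, ho.eq]
      simp only [tri, sg_comm c p, sg_comm z q]
      linear_combination zzE (sg p q) + zzE (sg p c) + zzE (sg q c) + zzE (sg p z) +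
        zzE (sg q z) + zzE (sg p g) + zzE (sg q g) + zzE (sg c g) + zzE (sg z g)
  exact hexS S.th q g z p w c

theorem Sys.O3 (S : Sys G b) {p q c w z g : V} (h1 : T G b p q c) (h2 : T G b q c w)
    (h3 : T G b c p w) (h4 : T G b p q z) (h5 : T G b p z w) (hzc : z ≠ c)
    (hg : T G b q w g) : g = c := by
  have g1 := h1.a1
  have g2 := h1.a2
  have g3 := h1.a3
  have g4 := h2.a2
  have g5 := h2.a3
  have g6 := h3.a3
  have g7 := h4.a2
  have g8 := h4.a3
  have g9 := h5.a3
  have k1 := hg.a2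
  have k2 := hg.a3
  by_contra hgc
  rcases eq_or_ne g p with rfl | hgp
  · exact S.blkT q g c z w
  rcases eq_or_ne g z with rfl | hgz
  · exact g6.ne.symm (S.O1 h1 h2 h3 h4 h5 hzc hg.rot2)
  exact hexS S.th q g w z p c

theorem Sys.Q1 (S : Sys G b) {p q c w z s r : V} {l : ι} (h1 : T G b p q c) (h2 : T G b q c w)
    (h3 : T G b c p w) (h4 : T G b p q z) (h5 : T G b p z w) (hzc : z ≠ c)
    (hQ : Qd G b l z q s r) : False := by
  have g1 := h1.a1
  have g2 := h1.a2
  have g3 := h1.a3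
  have g4 := h2.a2
  have g5 := h2.a3
  have g6 := h3.a3
  have g7 := h4.a2
  have g8 := h4.a3
  have g9 := h5.a3
  obtain ⟨nt, a1, a2, a3, a4, n1, n2, e1, e2, e3, e4, eq⟩ := hQ
  rcases eq_or_ne s p with rfl | hsp
  · exact S.blkN q s c z nt
  rcases eq_or_ne r p with rfl | hrp
  · exact S.blkN z r q w nt
  rcases eq_or_ne s c with rfl | hsc
  · exact S.blkN q s p w nt
  rcases eq_or_ne r c with rfl | hrc
  · rcases eq_or_ne s w with rfl | hsw
    · exact S.blkN s r p q nt
    · exact hexS S.th q s r z p w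
  exact hexS S.th q s r z p c

theorem Sys.Q3 (S : Sys G b) {p q c w z s r : V} {l : ι} (h1 : T G b p q c) (h2 : T G b q c w)
    (h3 : T G b c p w) (h4 : T G b p q z) (h5 : T G b p z w) (hzc : z ≠ c)
    (hQ : Qd G b l q w s r) : False := by
  have g1 := h1.a1
  have g2 := h1.a2
  have g3 := h1.a3
  have g4 := h2.a2
  have g5 := h2.a3
  have g6 := h3.a3
  have g7 := h4.a2
  have g8 := h4.a3
  have g9 := h5.a3
  obtain ⟨nt, a1, a2, a3, a4, n1, n2, e1, e2, e3, e4, eq⟩ := hQ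
  rcases eq_or_ne s p with rfl | hsp
  · exact S.blkN w s c z nt
  rcases eq_or_ne r p with rfl | hrp
  · exact S.blkN q r c z nt
  rcases eq_or_ne s c with rfl | hsc
  · exact S.blkN w s p q nt
  rcases eq_or_ne r c with rfl | hrc
  · exact S.blkN q r p w nt
  exact hexS S.th q p c w s r

theorem Sys.P1 (S : Sys G b) {p q c w z s t r : V} {l : ι} (h1 : T G b p q c) (h2 : T G b q c w)
    (h3 : T G b c p w) (h4 : T G b p q z) (h5 : T G b p z w) (hzc : z ≠ c)
    (hQ : Pn G b l z q s t r) : False := by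
  have g1 := h1.a1
  have g2 := h1.a2
  have g3 := h1.a3
  have g4 := h2.a2
  have g5 := h2.a3
  have g6 := h3.a3
  have g7 := h4.a2
  have g8 := h4.a3
  have g9 := h5.a3
  obtain ⟨nt, a1, a2, a3, a4, a5, n1, n2, n3, n4, n5, e1, e2, e3, e4, e5⟩ := hQ
  rcases eq_or_ne s p with rfl | hsp
  · exact S.blkN q s c z nt
  rcases eq_or_ne r p with rfl | hrp
  · exact S.blkN z r q w nt
  rcases eq_or_ne t p with rfl | htp
  · rcases eq_or_ne s w with rfl | hsw
    · exact S.blkN s t c z nt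
    rcases eq_or_ne r w with rfl | hrw
    · exact S.blkN r t c z nt
    exact hexS S.th z w q s t r
  exact hexS S.th z p q s t r

theorem Sys.P3 (S : Sys G b) {p q c w z s t r : V} {l : ι} (h1 : T G b p q c) (h2 : T G b q c w)
    (h3 : T G b c p w) (h4 : T G b p q z) (h5 : T G b p z w) (hzc : z ≠ c)
    (hQ : Pn G b l q w s t r) : False := by
  have g1 := h1.a1
  have g2 := h1.a2
  have g3 := h1.a3
  have g4 := h2.a2
  have g5 := h2.a3
  have g6 := h3.a3
  have g7 := h4.a2
  have g8 := h4.a3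
  have g9 := h5.a3
  obtain ⟨nt, a1, a2, a3, a4, a5, n1, n2, n3, n4, n5, e1, e2, e3, e4, e5⟩ := hQ
  rcases eq_or_ne s p with rfl | hsp
  · exact S.blkN w s c z nt
  rcases eq_or_ne r p with rfl | hrp
  · exact S.blkN q r c z nt
  rcases eq_or_ne s c with rfl | hsc
  · exact S.blkN w s p q nt
  rcases eq_or_ne r c with rfl | hrc
  · exact S.blkN q r p w nt
  rcases eq_or_ne t p with rfl | htp
  · exact hexS S.th q c w s t r
  exact hexS S.th q p w s t r

end base
end ML6

open SimpleGraph Finset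

namespace ML6

set_option linter.unusedSectionVars false
set_option linter.unusedSimpArgs false
set_option linter.unusedVariables false
set_option linter.unnecessarySimpa false
set_option linter.style.longLine false

section base
variable {V : Type*} [Fintype V] [DecidableEq V] {ι : Type} [Fintype ι] [DecidableEq ι]

/-- `e` lies in a triangular face. -/
def inT (G : SimpleGraph V) (b : ι → EV V) (e : Sym2 V) : Prop := ∃ j, isT G b j ∧ b j e ≠ 0

/-- `e` lies in a triangular face other than `i`. -/
def inner (G : SimpleGraph V) (b : ι → EV V) (i : ι) (e : Sym2 V) : Prop :=
  ∃ j, j ≠ i ∧ isT G b j ∧ b j e ≠ 0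

open Classical in
/-- Number of inner edges of a face. -/
noncomputable def dl (G : SimpleGraph V) (b : ι → EV V) (i : ι) : ℤ :=
  ∑ e ∈ supp (b i), if inner G b i e then 1 else 0

open Classical in
/-- Number of edges of `l` in triangular faces. -/
noncomputable def mm (G : SimpleGraph V) (b : ι → EV V) (l : ι) : ℕ :=
  ((supp (b l)).filter fun e => inT G b e).card

open Classical in
/-- What a face can give, minus one. -/
noncomputable def val (G : SimpleGraph V) (b : ι → EV V) (l : ι) : ℤ :=
  if 6 ≤ (supp (b l)).card then 4 else if (supp (b l)).card = 5 then 2 else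
    if mm G b l ≤ 2 then 2 else 1

open Classical in
/-- Charge received by `i` through an outer edge. -/
noncomputable def vv (G : SimpleGraph V) (b : ι → EV V) (i : ι) (e : Sym2 V) : ℤ :=
  if ∃ j, j ≠ i ∧ b j e ≠ 0 then
    ∑ j ∈ univ.filter (fun j => j ≠ i ∧ b j e ≠ 0), (1 + val G b j) else 5

open Classical in
/-- Total received through outer edges. -/
noncomputable def osum (G : SimpleGraph V) (b : ι → EV V) (i : ι) : ℤ :=
  ∑ e ∈ supp (b i), if inner G b i e then 0 else vv G b i e

/-- The triangular face opposite has three inner edges. -/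
def d3 (G : SimpleGraph V) (b : ι → EV V) (i : ι) (e : Sym2 V) : Prop :=
  ∃ j, j ≠ i ∧ isT G b j ∧ b j e ≠ 0 ∧ dl G b j = 3

open Classical in
/-- Number of edges satisfying `d3`. -/
noncomputable def nd3 (G : SimpleGraph V) (b : ι → EV V) (i : ι) : ℤ :=
  ∑ e ∈ supp (b i), if d3 G b i e then 1 else 0

open Classical in
/-- Charge given by a triangle through an inner edge. -/
noncomputable def out (G : SimpleGraph V) (b : ι → EV V) (i : ι) (e : Sym2 V) : ℤ :=
  if dl G b i = 1 then osum G b i - 3 else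
    if dl G b i = 2 ∧ osum G b i = 5 then
      (if d3 G b i e then (if nd3 G b i = 1 then 2 else 1) else 0) else 0

open Classical in
/-- Charge given by `i` through `e`. -/
noncomputable def qq (G : SimpleGraph V) (b : ι → EV V) (i : ι) (e : Sym2 V) : ℤ :=
  if isT G b i then (if inner G b i e then out G b i e else 0) else
    (if inT G b e then 1 + val G b i else 0)

open Classical in
/-- Charge received by `i` through `e`. -/
noncomputable def rin (G : SimpleGraph V) (b : ι → EV V) (i : ι) (e : Sym2 V) : ℤ :=
  if ∃ j, j ≠ i ∧ b j e ≠ 0 then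
    ∑ j ∈ univ.filter (fun j => j ≠ i ∧ b j e ≠ 0), qq G b j e else 5

variable {G : SimpleGraph V} {b : ι → EV V}

theorem Sys.supp_ne (S : Sys G b) (i : ι) : (supp (b i)).Nonempty := by
  rw [Finset.nonempty_iff_ne_empty]
  intro h
  have := S.ind {i} (by
    rw [Finset.sum_singleton]
    funext e
    by_contra he
    have : e ∈ supp (b i) := mem_supp.2 he
    simp [h] at this)
  simp at this

theorem Sys.cls (S : Sys G b) {l : ι} (hl : ¬ isT G b l) {x y : V} (he : b l s(x, y) ≠ 0) :
    6 ≤ (supp (b l)).card ∨ ((supp (b l)).card = 4 ∧ ∃ s r, Qd G b l x y s r) ∨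
      ((supp (b l)).card = 5 ∧ ∃ s t r, Pn G b l x y s t r) := by
  by_cases h6 : 6 ≤ (supp (b l)).card
  · exact Or.inl h6
  right
  have hm := S.mem l
  rcases small_class hm he (by omega) with h | h | h
  · obtain ⟨s, h1, h2, h3, h4⟩ := h
    exact absurd ⟨x, y, s, h1, h2, h3, h4⟩ hl
  · left
    obtain ⟨s, r, n1, n2, h1, h2, h3, h4, h5⟩ := h
    have hs := supp_quad h1.ne h2.ne h3.ne h4.ne n1 n2
    rw [h5]
    refine ⟨hs.2, s, r, hl, h1, h2, h3, h4, n1, n2, ?_, ?_, ?_, ?_, h5⟩ <;>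
      rw [h5, ← mem_supp, hs.1] <;> simp
  · right
    obtain ⟨s, t, r, n1, n2, n3, n4, n5, h1, h2, h3, h4, h5, h6⟩ := h
    exact ⟨h6, s, t, r, hl, Cyc_adj hm h1, Cyc_adj hm h2, Cyc_adj hm h3, Cyc_adj hm h4,
      Cyc_adj hm h5, n1, n2, n3, n4, n5, h1, h2, h3, h4, h5⟩

theorem val_pos (l : ι) : 1 ≤ val G b l := by
  unfold val; split_ifs <;> norm_num

theorem vv_ge (i : ι) (e : Sym2 V) : 2 ≤ vv G b i e := by
  classical
  unfold vv
  split_ifs with h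
  · obtain ⟨j, hj⟩ := h
    have hv : ∀ j, 1 ≤ val G b j := val_pos
    have := Finset.single_le_sum (s := univ.filter (fun j => j ≠ i ∧ b j e ≠ 0))
      (f := fun j => 1 + val G b j) (fun k _ => by have := hv k; omega) (a := j) (by simpa using hj)
    have h2 := hv j
    have h3 := this
    refine le_trans ?_ h3
    omega
  · norm_num

theorem sum3 {i : ι} {x y z : V} (h : Tr G b i x y z) (f : Sym2 V → ℤ) :
    ∑ e ∈ supp (b i), f e = f s(x, y) + f s(x, z) + f s(y, z) := by
  have h1 := h.a1.ne
  have h2 := h.a2.ne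
  have h3 := h.a3.ne
  rw [h.eq, supp_tri h1 h2 h3, Finset.sum_insert, Finset.sum_insert, Finset.sum_singleton]
  · ring
  · simp [h1, h2, h3, h1.symm, h2.symm, h3.symm]
  · simp [h1, h2, h3, h1.symm, h2.symm, h3.symm]

theorem isT_edge {j : ι} (h : isT G b j) {x y : V} (he : b j s(x, y) ≠ 0) :
    ∃ g, Tr G b j x y g := by
  obtain ⟨p, q, r, ht⟩ := h
  rw [ht.mem] at he
  simp only [Sym2.eq_iff] at he
  rcases he with (⟨rfl, rfl⟩ | ⟨rfl, rfl⟩) | (⟨rfl, rfl⟩ | ⟨rfl, rfl⟩) | (⟨rfl, rfl⟩ | ⟨rfl, rfl⟩)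
  · exact ⟨_, ht⟩
  · exact ⟨_, ht.s12⟩
  · exact ⟨_, ht.s23⟩
  · exact ⟨_, ht.s23.s12⟩
  · exact ⟨_, ht.s12.s23⟩
  · exact ⟨_, ht.s12.s23.s12⟩

theorem Sys.inner_iff (S : Sys G b) {i : ι} {x y z : V} (h : Tr G b i x y z) :
    inner G b i s(x, y) ↔ ∃ g, g ≠ z ∧ T G b x y g := by
  constructor
  · rintro ⟨j, hj, ht, he⟩
    obtain ⟨g, hg⟩ := isT_edge ht he
    refine ⟨g, ?_, j, hg⟩
    rintro rfl
    exact hj (S.inj (by rw [hg.eq, h.eq]))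
  · rintro ⟨g, hg, j, hj⟩
    refine ⟨j, ?_, ⟨_, _, _, hj⟩, hj.e1⟩
    rintro rfl
    exact hg (hj.uniq h rfl)

end base
end ML6

open SimpleGraph Finset

namespace ML6

set_option linter.unusedSectionVars false
set_option linter.unusedSimpArgs false
set_option linter.unusedVariables false
set_option linter.unnecessarySimpa false
set_option linter.style.longLine false

section base
variable {V : Type*} [Fintype V] [DecidableEq V] {ι : Type} [Fintype ι] [DecidableEq ι]
variable {G : SimpleGraph V} {b : ι → EV V}

theorem inT_iff {x y : V} : inT G b s(x, y) ↔ ∃ g, T G b x y g := by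
  constructor
  · rintro ⟨j, hj, he⟩
    obtain ⟨g, hg⟩ := isT_edge hj he
    exact ⟨g, j, hg⟩
  · rintro ⟨g, j, hj⟩
    exact ⟨j, ⟨_, _, _, hj⟩, hj.e1⟩

theorem TwoNT_mm {l : ι} (h : TwoNT G b l) (hc : (supp (b l)).card = 4) : mm G b l ≤ 2 := by
  classical
  obtain ⟨x, y, z, w, hne, h1, h2, h3, h4⟩ := h
  unfold mm
  have hs : (supp (b l)).filter (fun e => inT G b e) ⊆ ((supp (b l)).erase s(x, y)).erase s(z, w) := by
    intro e he
    rw [Finset.mem_filter] at he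
    rw [Finset.mem_erase, Finset.mem_erase]
    refine ⟨?_, ?_, he.1⟩
    · rintro rfl
      obtain ⟨g, hg⟩ := inT_iff.1 he.2
      exact h4 g hg
    · rintro rfl
      obtain ⟨g, hg⟩ := inT_iff.1 he.2
      exact h3 g hg
  have := Finset.card_le_card hs
  rw [Finset.card_erase_of_mem, Finset.card_erase_of_mem (mem_supp.2 h1), hc] at this
  · exact this
  · rw [Finset.mem_erase]
    exact ⟨hne.symm, mem_supp.2 h2⟩

theorem Sys.filt (S : Sys G b) {i j : ι} {e : Sym2 V} (hij : i ≠ j) (h1 : b i e ≠ 0) (h2 : b j e ≠ 0)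
    [DecidablePred fun k => k ≠ i ∧ b k e ≠ 0] :
    univ.filter (fun k => k ≠ i ∧ b k e ≠ 0) = {j} := by
  ext k
  simp only [Finset.mem_filter, Finset.mem_univ, true_and, Finset.mem_singleton]
  constructor
  · rintro ⟨h3, h4⟩
    rcases S.cov i j k e h1 h2 h4 with h | h | h
    · exact absurd h hij
    · exact absurd h.symm h3
    · exact h.symm
  · rintro rfl
    exact ⟨hij.symm, h2⟩

theorem Sys.vv_cases (S : Sys G b) {i : ι} {x y z : V} (h : Tr G b i x y z)
    (ho : ¬ inner G b i s(x, y)) :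
    vv G b i s(x, y) = 5 ∨
    (vv G b i s(x, y) = 3 ∧ ∃ l, (∃ s r, Qd G b l x y s r) ∨ (∃ s t r, Pn G b l x y s t r)) ∨
    (vv G b i s(x, y) = 2 ∧ ∃ l s r, Qd G b l x y s r ∧ ¬ TwoNT G b l) := by
  classical
  by_cases hj : ∃ j, j ≠ i ∧ b j s(x, y) ≠ 0
  · have hv : vv G b i s(x, y) = ∑ j ∈ univ.filter (fun j => j ≠ i ∧ b j s(x, y) ≠ 0), (1 + val G b j) := by
      unfold vv; rw [if_pos hj]
    obtain ⟨l, hl, he⟩ := hj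
    rw [S.filt hl.symm h.e1 he, Finset.sum_singleton] at hv
    have hnt : ¬ isT G b l := fun ht => ho ⟨l, hl, ht, he⟩
    rw [hv]
    rcases S.cls hnt he with hc | ⟨hc, hQ⟩ | ⟨hc, hP⟩
    · left
      unfold val; rw [if_pos hc]; norm_num
    · by_cases hm : mm G b l ≤ 2
      · right; left
        refine ⟨?_, l, Or.inl hQ⟩
        unfold val; rw [if_neg (by omega), if_neg (by omega), if_pos hm]; norm_num
      · right; right
        obtain ⟨s, r, hQ⟩ := hQ
        refine ⟨?_, l, s, r, hQ, fun ht => hm (TwoNT_mm ht hc)⟩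
        unfold val; rw [if_neg (by omega), if_neg (by omega), if_neg hm]; norm_num
    · right; left
      refine ⟨?_, l, Or.inr hP⟩
      unfold val; rw [if_neg (by omega), if_pos hc]; norm_num
  · left
    unfold vv; rw [if_neg hj]

theorem dl3 {i : ι} {x y z : V} (h : Tr G b i x y z) [Decidable (inner G b i s(x, y))]
    [Decidable (inner G b i s(x, z))] [Decidable (inner G b i s(y, z))] :
    dl G b i = (if inner G b i s(x, y) then 1 else 0) + (if inner G b i s(x, z) then 1 else 0) +
      (if inner G b i s(y, z) then 1 else 0) := by
  unfold dl; rw [sum3 h]; congr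

theorem osum3 {i : ι} {x y z : V} (h : Tr G b i x y z) [Decidable (inner G b i s(x, y))]
    [Decidable (inner G b i s(x, z))] [Decidable (inner G b i s(y, z))] :
    osum G b i = (if inner G b i s(x, y) then 0 else vv G b i s(x, y)) +
      (if inner G b i s(x, z) then 0 else vv G b i s(x, z)) +
      (if inner G b i s(y, z) then 0 else vv G b i s(y, z)) := by
  unfold osum; rw [sum3 h]; congr

theorem nd33 {i : ι} {x y z : V} (h : Tr G b i x y z) [Decidable (d3 G b i s(x, y))]
    [Decidable (d3 G b i s(x, z))] [Decidable (d3 G b i s(y, z))] :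
    nd3 G b i = (if d3 G b i s(x, y) then 1 else 0) + (if d3 G b i s(x, z) then 1 else 0) +
      (if d3 G b i s(y, z) then 1 else 0) := by
  unfold nd3; rw [sum3 h]; congr

theorem osum_ge {i : ι} {x y z : V} (h : Tr G b i x y z) (hd : dl G b i = 1) : 4 ≤ osum G b i := by
  classical
  rw [dl3 h] at hd
  rw [osum3 h]
  have h1 := vv_ge (G := G) (b := b) i s(x, y)
  have h2 := vv_ge (G := G) (b := b) i s(x, z)
  have h3 := vv_ge (G := G) (b := b) i s(y, z)
  split_ifs at hd ⊢ <;> omega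

theorem out_nn {i : ι} (h : isT G b i) (e : Sym2 V) : 0 ≤ out G b i e := by
  unfold out
  obtain ⟨x, y, z, h⟩ := h
  split_ifs with h1 <;> first | (have := osum_ge h h1; omega) | norm_num

theorem qq_nn (i : ι) (e : Sym2 V) : 0 ≤ qq G b i e := by
  unfold qq
  have := val_pos (G := G) (b := b) i
  split_ifs with h <;> first | exact out_nn h e | omega

theorem rin_nn (i : ι) (e : Sym2 V) : 0 ≤ rin G b i e := by
  unfold rin
  split_ifs with h
  · exact Finset.sum_nonneg fun j _ => qq_nn j e
  · norm_num

theorem Sys.rin_inner (S : Sys G b) {i j : ι} {e : Sym2 V} (hi : isT G b i) (hj : isT G b j)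
    (hij : i ≠ j) (h1 : b i e ≠ 0) (h2 : b j e ≠ 0) : rin G b i e = out G b j e := by
  classical
  unfold rin
  rw [if_pos ⟨j, hij.symm, h2⟩, S.filt hij h1 h2, Finset.sum_singleton]
  unfold qq
  rw [if_pos hj, if_pos ⟨i, hij, hi, h1⟩]

theorem rin_outer {i : ι} {e : Sym2 V} (hi : isT G b i) (h1 : b i e ≠ 0)
    (ho : ¬ inner G b i e) : rin G b i e = vv G b i e := by
  classical
  unfold rin vv
  split_ifs with h
  · apply Finset.sum_congr rfl
    intro j hj
    rw [Finset.mem_filter] at hj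
    have hnt : ¬ isT G b j := fun ht => ho ⟨j, hj.2.1, ht, hj.2.2⟩
    unfold qq
    rw [if_neg hnt, if_pos ⟨i, hi, h1⟩]
  · rfl

theorem qq_inner {i : ι} {e : Sym2 V} (hi : isT G b i) (ho : inner G b i e) :
    qq G b i e = out G b i e := by
  unfold qq; rw [if_pos hi, if_pos ho]

theorem qq_outer {i : ι} {e : Sym2 V} (hi : isT G b i) (ho : ¬ inner G b i e) :
    qq G b i e = 0 := by
  unfold qq; rw [if_pos hi, if_neg ho]

theorem d3_inner {i : ι} {e : Sym2 V} (h : d3 G b i e) : inner G b i e := by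
  obtain ⟨j, h1, h2, h3, h4⟩ := h
  exact ⟨j, h1, h2, h3⟩

/-- Non-triangular faces keep enough charge. -/
theorem Sys.nontri (S : Sys G b) {i : ι} (hi : ¬ isT G b i) :
    36 ≤ ∑ e ∈ supp (b i), (11 - qq G b i e + rin G b i e) := by
  classical
  have h1 : ∑ e ∈ supp (b i), (11 - qq G b i e) ≤ ∑ e ∈ supp (b i), (11 - qq G b i e + rin G b i e) :=
    Finset.sum_le_sum fun e _ => by have := rin_nn (G := G) (b := b) i e; omega
  refine le_trans ?_ h1
  have h2 : ∑ e ∈ supp (b i), qq G b i e = (mm G b i : ℤ) * (1 + val G b i) := by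
    have : ∀ e ∈ supp (b i), qq G b i e = if inT G b e then 1 + val G b i else 0 := by
      intro e _
      unfold qq; rw [if_neg hi]
    rw [Finset.sum_congr rfl this, ← Finset.sum_filter, Finset.sum_const]
    unfold mm
    simp
  rw [Finset.sum_sub_distrib, h2, Finset.sum_const]
  have hm : mm G b i ≤ (supp (b i)).card := Finset.card_filter_le _ _
  obtain ⟨e, he⟩ := S.supp_ne i
  rw [mem_supp] at he
  induction e using Sym2.ind with
  | _ x y =>
  simp only [nsmul_eq_mul]
  rcases S.cls hi he with hc | ⟨hc, -⟩ | ⟨hc, -⟩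
  · have : val G b i = 4 := by unfold val; rw [if_pos hc]
    rw [this]; omega
  · by_cases h : mm G b i ≤ 2
    · have : val G b i = 2 := by
        unfold val; rw [if_neg (by omega), if_neg (by omega), if_pos h]
      rw [this]; omega
    · have : val G b i = 1 := by
        unfold val; rw [if_neg (by omega), if_neg (by omega), if_neg h]
      rw [this]; omega
  · have : val G b i = 2 := by unfold val; rw [if_neg (by omega), if_pos hc]
    rw [this]; omega

/-- Each edge distributes at most 22. -/
theorem Sys.edge (S : Sys G b) (e : Sym2 V) :
    ∑ i ∈ univ.filter (fun i => b i e ≠ 0), (11 - qq G b i e + rin G b i e) ≤ 22 := by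
  classical
  by_cases h0 : ∃ i, b i e ≠ 0
  · obtain ⟨i, hi⟩ := h0
    by_cases h1 : ∃ j, j ≠ i ∧ b j e ≠ 0
    · obtain ⟨j, hj, hje⟩ := h1
      have : univ.filter (fun i => b i e ≠ 0) = {i, j} := by
        ext k
        simp only [Finset.mem_filter, Finset.mem_univ, true_and, Finset.mem_singleton,
          Finset.mem_insert]
        constructor
        · intro hk
          rcases S.cov i j k e hi hje hk with h | h | h
          · exact absurd h.symm hj
          · exact Or.inl h.symm
          · exact Or.inr h.symm
        · rintro (rfl | rfl) <;> assumption
      rw [this, Finset.sum_pair hj.symm]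
      have e1 : rin G b i e = qq G b j e := by
        unfold rin
        rw [if_pos ⟨j, hj, hje⟩, S.filt hj.symm hi hje, Finset.sum_singleton]
      have e2 : rin G b j e = qq G b i e := by
        unfold rin
        rw [if_pos ⟨i, hj.symm, hi⟩, S.filt hj hje hi, Finset.sum_singleton]
      rw [e1, e2]; omega
    · have : univ.filter (fun i => b i e ≠ 0) = {i} := by
        ext k
        simp only [Finset.mem_filter, Finset.mem_univ, true_and, Finset.mem_singleton]
        constructor
        · intro hk
          by_contra hne
          exact h1 ⟨k, hne, hk⟩
        · rintro rfl; assumption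
      rw [this, Finset.sum_singleton]
      have e1 : rin G b i e = 5 := by
        unfold rin
        rw [if_neg h1]
      have := qq_nn (G := G) (b := b) i e
      omega
  · have : univ.filter (fun i => b i e ≠ 0) = ∅ := by
      ext k
      simp only [Finset.mem_filter, Finset.mem_univ, true_and, Finset.notMem_empty, iff_false]
      intro hk
      exact h0 ⟨k, hk⟩
    rw [this]; simp

end base
end ML6

open SimpleGraph Finset

namespace ML6

set_option linter.unusedSectionVars false
set_option linter.unusedSimpArgs false
set_option linter.unusedVariables false
set_option linter.unnecessarySimpa false
set_option linter.style.longLine false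

section base
variable {V : Type*} [Fintype V] [DecidableEq V] {ι : Type} [Fintype ι] [DecidableEq ι]
variable {G : SimpleGraph V} {b : ι → EV V}

theorem Tr.isT {i : ι} {x y z : V} (h : Tr G b i x y z) : isT G b i := ⟨_, _, _, h⟩

/-- The balance of a triangle at an edge. -/
noncomputable def DD (G : SimpleGraph V) (b : ι → EV V) (i : ι) (e : Sym2 V) : ℤ :=
  rin G b i e - qq G b i e

theorem case1 {i : ι} {x y z : V} (h : Tr G b i x y z) (h1 : inner G b i s(x, y))
    (h2 : ¬ inner G b i s(x, z)) (h3 : ¬ inner G b i s(y, z)) :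
    3 ≤ DD G b i s(x, y) + DD G b i s(x, z) + DD G b i s(y, z) := by
  classical
  unfold DD
  have hd : dl G b i = 1 := by rw [dl3 h, if_pos h1, if_neg h2, if_neg h3]; norm_num
  have ho : osum G b i = vv G b i s(x, z) + vv G b i s(y, z) := by
    rw [osum3 h, if_pos h1, if_neg h2, if_neg h3]; ring
  rw [qq_inner h.isT h1, qq_outer h.isT h2, qq_outer h.isT h3,
    rin_outer h.isT h.s23.e1 h2, rin_outer h.isT h.s12.s23.e1 h3]
  have := rin_nn (G := G) (b := b) i s(x, y)
  unfold out
  rw [if_pos hd, ho]; omega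

/-- A triangle with exactly one inner edge gives at least one. -/
theorem Sys.give1 (S : Sys G b) {i j : ι} {x y z g : V} (hi : Tr G b i x y z) (hj : Tr G b j x y g)
    (hg : g ≠ z) (h2 : ¬ ∃ k, k ≠ y ∧ T G b x g k) (h3 : ¬ ∃ k, k ≠ x ∧ T G b y g k) :
    rin G b i s(x, y) = vv G b j s(x, g) + vv G b j s(y, g) - 3 := by
  classical
  have hij : i ≠ j := fun h => hg (hi.uniq hj h).symm
  rw [S.rin_inner hi.isT hj.isT hij hi.e1 hj.e1]
  have h1 : inner G b j s(x, y) := ⟨i, hij, hi.isT, hi.e1⟩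
  rw [← S.inner_iff hj.s23] at h2
  rw [← S.inner_iff hj.s12.s23] at h3
  have hd : dl G b j = 1 := by rw [dl3 hj, if_pos h1, if_neg h2, if_neg h3]; norm_num
  have ho : osum G b j = vv G b j s(x, g) + vv G b j s(y, g) := by
    rw [osum3 hj, if_pos h1, if_neg h2, if_neg h3]; ring
  unfold out
  rw [if_pos hd, ho]

theorem Sys.case2 (S : Sys G b) {i : ι} {x y z : V} (h : Tr G b i x y z) (h1 : inner G b i s(x, y))
    (h2 : inner G b i s(x, z)) (h3 : ¬ inner G b i s(y, z)) :
    3 ≤ DD G b i s(x, y) + DD G b i s(x, z) + DD G b i s(y, z) := by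
  classical
  unfold DD
  have hd : dl G b i = 2 := by rw [dl3 h, if_pos h1, if_pos h2, if_neg h3]; norm_num
  have ho : osum G b i = vv G b i s(y, z) := by
    rw [osum3 h, if_pos h1, if_pos h2, if_neg h3]; ring
  have hn : nd3 G b i = (if d3 G b i s(x, y) then 1 else 0) + (if d3 G b i s(x, z) then 1 else 0) := by
    rw [nd33 h, if_neg (c := d3 G b i s(y, z)) (fun hh => h3 (d3_inner hh))]; ring
  rw [qq_inner h.isT h1, qq_inner h.isT h2, qq_outer h.isT h3,
    rin_outer h.isT h.s12.s23.e1 h3]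
  have r1 := rin_nn (G := G) (b := b) i s(x, y)
  have r2 := rin_nn (G := G) (b := b) i s(x, z)
  have hout : ∀ e, vv G b i s(y, z) ≠ 5 → out G b i e = 0 := by
    intro e he
    unfold out
    rw [if_neg (by omega), if_neg (by rw [ho]; tauto)]
  rcases S.vv_cases h.s12.s23 h3 with hv | ⟨hv, -⟩ | ⟨hv, l, s, r, hQ, hN⟩
  · have e1 : ∀ e, out G b i e = (if d3 G b i e then (if nd3 G b i = 1 then 2 else 1) else 0) := by
      intro e
      unfold out
      rw [if_neg (by omega), if_pos ⟨hd, by rw [ho, hv]⟩]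
    rw [e1, e1, hn, hv]
    split_ifs <;> omega
  · rw [hout _ (by omega), hout _ (by omega)]; omega
  · rw [hout _ (by omega), hout _ (by omega), hv]
    obtain ⟨g, hg, hTg⟩ := (S.inner_iff h).1 h1
    obtain ⟨k, hk, hTk⟩ := (S.inner_iff h.s23).1 h2
    have hT : T G b x y z := ⟨i, h⟩
    have hgk : k ≠ g := by
      rintro rfl
      exact hN (S.V1 hT hTg hTk hQ)
    by_cases c1 : (∃ g', g' ≠ y ∧ T G b x g g') ∨ (∃ g', g' ≠ x ∧ T G b y g g')
    · by_cases c2 : (∃ g', g' ≠ z ∧ T G b x k g') ∨ (∃ g', g' ≠ x ∧ T G b z k g')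
      · exact (S.V5 hT hTg hTk hg hk hgk hQ c1 c2).elim
      · rw [not_or] at c2
        obtain ⟨j, hj⟩ := hTk
        rw [S.give1 h.s23 hj hk c2.1 c2.2]
        have := vv_ge (G := G) (b := b) j s(x, k)
        have := vv_ge (G := G) (b := b) j s(z, k)
        omega
    · rw [not_or] at c1
      obtain ⟨j, hj⟩ := hTg
      rw [S.give1 h hj hg c1.1 c1.2]
      have := vv_ge (G := G) (b := b) j s(x, g)
      have := vv_ge (G := G) (b := b) j s(y, g)
      omega

theorem Sys.case0 (S : Sys G b) {i : ι} {x y z : V} (h : Tr G b i x y z) (h1 : ¬ inner G b i s(x, y))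
    (h2 : ¬ inner G b i s(x, z)) (h3 : ¬ inner G b i s(y, z)) :
    3 ≤ DD G b i s(x, y) + DD G b i s(x, z) + DD G b i s(y, z) := by
  unfold DD
  rw [qq_outer h.isT h1, qq_outer h.isT h2, qq_outer h.isT h3, rin_outer h.isT h.e1 h1,
    rin_outer h.isT h.s23.e1 h2, rin_outer h.isT h.s12.s23.e1 h3]
  have := vv_ge (G := G) (b := b) i s(x, y)
  have := vv_ge (G := G) (b := b) i s(x, z)
  have := vv_ge (G := G) (b := b) i s(y, z)
  omega

/-- `K5` minus an edge configuration. -/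
theorem Sys.k5 (S : Sys G b) {i : ι} {a p c w z : V} (hi : Tr G b i a p c) (h2 : T G b p c w)
    (h3 : T G b c a w) (h4 : T G b a p z) (h5 : T G b a z w) (hzc : z ≠ c) (hzw : z ≠ w) :
    3 ≤ rin G b i s(a, p) + rin G b i s(p, c) + rin G b i s(c, a) := by
  classical
  have h1 : T G b a p c := ⟨i, hi⟩
  have hwa : w ≠ a := h3.a3.ne'
  have hwp : w ≠ p := h2.a2.ne'
  have hap : a ≠ p := h1.a1.ne
  have hd : dl G b i = 3 := by
    have i1 : inner G b i s(a, p) := (S.inner_iff hi).2 ⟨z, hzc, h4⟩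
    have i2 : inner G b i s(a, c) := (S.inner_iff hi.s23).2 ⟨w, hwp, h3.s12⟩
    have i3 : inner G b i s(p, c) := (S.inner_iff hi.s12.s23).2 ⟨w, hwa, h2⟩
    rw [dl3 hi, if_pos i1, if_pos i2, if_pos i3]; norm_num
  -- the triangle `a p z`
  obtain ⟨j, hj⟩ := h4
  have h4 : T G b a p z := ⟨j, hj⟩
  have hij : i ≠ j := fun h => hzc (hi.uniq hj h).symm
  have e1 : rin G b i s(a, p) = 2 := by
    rw [S.rin_inner hi.isT hj.isT hij hi.e1 hj.e1]
    have i1 : inner G b j s(a, p) := ⟨i, hij, hi.isT, hi.e1⟩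
    have i2 : inner G b j s(a, z) := (S.inner_iff hj.s23).2 ⟨w, hwp, h5⟩
    have i3 : ¬ inner G b j s(z, p) := by
      rw [S.inner_iff hj.s23.s12.s23]
      rintro ⟨g, hg, hT⟩
      exact hg (S.O1 h1 h2 h3 h4 h5 hzc hT)
    have hjs := hj.s23
    have d : dl G b j = 2 := by rw [dl3 hjs, if_pos i1, if_pos i2, if_neg i3]; norm_num
    have hv : vv G b j s(z, p) = 5 := by
      rcases S.vv_cases hj.s23.s12.s23 i3 with hv | ⟨hv, l, ⟨s, r, hQ⟩ | ⟨s, t, r, hP⟩⟩ | ⟨hv, l, s, r, hQ, hN⟩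
      · exact hv
      · exact (S.Q1 h1 h2 h3 h4 h5 hzc hQ).elim
      · exact (S.P1 h1 h2 h3 h4 h5 hzc hP).elim
      · exact (S.Q1 h1 h2 h3 h4 h5 hzc hQ).elim
    have o : osum G b j = 5 := by rw [osum3 hjs, if_pos i1, if_pos i2, if_neg i3, hv]; norm_num
    have t1 : d3 G b j s(a, p) := ⟨i, hij, hi.isT, hi.e1, hd⟩
    have t2 : ¬ d3 G b j s(a, z) := by
      rintro ⟨k, hkj, hk, hke, hkd⟩
      obtain ⟨g, hg⟩ := isT_edge hk hke
      have hgp : g ≠ p := by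
        rintro rfl
        exact hkj (S.inj (by rw [hg.eq, hjs.eq]))
      have hgw : g = w := by
        by_contra hne
        have hgT : T G b a z g := ⟨k, hg⟩
        exact S.blkT a z p w g h4.s23 h5 hgT hwp.symm hgp.symm (Ne.symm hne)
      subst hgw
      have i4 : ¬ inner G b k s(z, g) := by
        rw [S.inner_iff hg.s12.s23]
        rintro ⟨f, hf, hT⟩
        exact hf (S.O1 h3.rot h2.s13 h1.rot2 h5.s23 h4.s23 hzc hT)
      rw [dl3 hg, if_neg i4] at hkd
      split_ifs at hkd <;> omega
    have t3 : ¬ d3 G b j s(z, p) := fun hh => i3 (d3_inner hh)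
    have nd : nd3 G b j = 1 := by rw [nd33 hjs, if_pos t1, if_neg t2, if_neg t3]; norm_num
    unfold out
    rw [if_neg (by omega), if_pos ⟨d, o⟩, if_pos t1, if_pos nd]
  obtain ⟨k, hk⟩ := h2
  have h2 : T G b p c w := ⟨k, hk⟩
  have hi' : Tr G b i p c a := hi.s12.s23
  have hik : i ≠ k := fun h => hwa (hi'.uniq hk h).symm
  have e2 : 1 ≤ rin G b i s(p, c) := by
    rw [S.rin_inner hi.isT hk.isT hik hi'.e1 hk.e1]
    have i1 : inner G b k s(p, c) := ⟨i, hik, hi.isT, hi'.e1⟩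
    have i2 : inner G b k s(c, w) := (S.inner_iff hk.s12.s23).2 ⟨a, hap, h3.s23⟩
    have i3 : ¬ inner G b k s(p, w) := by
      rw [S.inner_iff hk.s23]
      rintro ⟨g, hg, hT⟩
      exact hg (S.O3 h1 h2 h3 h4 h5 hzc hT)
    have d : dl G b k = 2 := by rw [dl3 hk, if_pos i1, if_pos i2, if_neg i3]; norm_num
    have hv : vv G b k s(p, w) = 5 := by
      rcases S.vv_cases hk.s23 i3 with hv | ⟨hv, l, ⟨s, r, hQ⟩ | ⟨s, t, r, hP⟩⟩ | ⟨hv, l, s, r, hQ, hN⟩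
      · exact hv
      · exact (S.Q3 h1 h2 h3 h4 h5 hzc hQ).elim
      · exact (S.P3 h1 h2 h3 h4 h5 hzc hP).elim
      · exact (S.Q3 h1 h2 h3 h4 h5 hzc hQ).elim
    have o : osum G b k = 5 := by rw [osum3 hk, if_pos i1, if_pos i2, if_neg i3, hv]; norm_num
    have t1 : d3 G b k s(p, c) := ⟨i, hik, hi.isT, hi'.e1, hd⟩
    unfold out
    rw [if_neg (by omega), if_pos ⟨d, o⟩, if_pos t1]
    split_ifs <;> norm_num
  have := rin_nn (G := G) (b := b) i s(c, a)
  omega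

end base
end ML6

open SimpleGraph Finset

namespace ML6

set_option linter.unusedSectionVars false
set_option linter.unusedSimpArgs false
set_option linter.unusedVariables false
set_option linter.unnecessarySimpa false
set_option linter.style.longLine false

section base
variable {V : Type*} [Fintype V] [DecidableEq V] {ι : Type} [Fintype ι] [DecidableEq ι]
variable {G : SimpleGraph V} {b : ι → EV V}

theorem Sys.third (S : Sys G b) {a p c w z g : V} (h1 : T G b a p c) (h2 : T G b p c w)
    (h3 : T G b c a w) (h4 : T G b a p z) (hzc : z ≠ c) (hzw : z ≠ w) (hT : T G b a z g)
    (hg : g ≠ p) : g = w := by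
  by_contra hgw
  have hwa : w ≠ a := h3.a3.ne'
  have hwp : w ≠ p := h2.a2.ne'
  by_cases hgc : g = c
  · subst hgc
    exact S.blkT a g p w z h1.s23 h3.s12 hT.s23 hwp.symm h4.a3.ne hzw.symm
  have g1 := h1.a1
  have g2 := h1.a2
  have g3 := h1.a3
  have g4 := h2.a2
  have g5 := h2.a3
  have g6 := h4.a2
  have g7 := h4.a3
  have g8 := hT.a2
  have g9 := hT.a3
  have g10 := h3.a3
  exact hexS S.th a g z p w c (n6 := hgc) (n5 := hgw) (n4 := hg)

/-- Two neighbouring triangles share their apex. -/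
theorem Sys.case3w (S : Sys G b) {i : ι} {a p c w z : V} (hi : Tr G b i a p c) (h2 : T G b p c w)
    (h3 : T G b c a w) (h4 : T G b a p z) (hzc : z ≠ c) (hzw : z ≠ w) :
    3 ≤ rin G b i s(a, p) + rin G b i s(p, c) + rin G b i s(c, a) := by
  have h1 : T G b a p c := ⟨i, hi⟩
  by_cases c1 : ∃ g, g ≠ p ∧ T G b a z g
  · obtain ⟨g, hg, hT⟩ := c1
    have := S.third h1 h2 h3 h4 hzc hzw hT hg
    subst this
    exact S.k5 hi h2 h3 h4 hT hzc hzw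
  by_cases c2 : ∃ g, g ≠ a ∧ T G b p z g
  · obtain ⟨g, hg, hT⟩ := c2
    have := S.third h1.s12 h3.s12 h2.s12 h4.s12 hzc hzw hT hg
    subst this
    have := S.k5 hi.s12 h3.s12 h2.s12 h4.s12 hT hzc hzw
    rw [Sym2.eq_swap (a := a) (b := p), Sym2.eq_swap (a := p) (b := c),
      Sym2.eq_swap (a := c) (b := a)]
    omega
  obtain ⟨j, hj⟩ := h4
  have h4 : T G b a p z := ⟨j, hj⟩
  rw [S.give1 hi hj hzc c1 c2]
  have o1 : ¬ inner G b j s(a, z) := by rw [S.inner_iff hj.s23]; exact c1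
  have o2 : ¬ inner G b j s(p, z) := by rw [S.inner_iff hj.s12.s23]; exact c2
  have v1 : 3 ≤ vv G b j s(a, z) := by
    rcases S.vv_cases hj.s23 o1 with hv | ⟨hv, -⟩ | ⟨hv, l, s, r, hQ, hN⟩
    · omega
    · omega
    · exact (hN (S.V2 h1 h2 h3 h4 hzc hzw hQ.sw)).elim
  have v2 : 3 ≤ vv G b j s(p, z) := by
    rcases S.vv_cases hj.s12.s23 o2 with hv | ⟨hv, -⟩ | ⟨hv, l, s, r, hQ, hN⟩
    · omega
    · omega
    · exact (hN (S.V2 h1.s12 h3.s12 h2.s12 h4.s12 hzc hzw hQ.sw)).elim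
  have := rin_nn (G := G) (b := b) i s(p, c)
  have := rin_nn (G := G) (b := b) i s(c, a)
  omega

theorem Sys.case3 (S : Sys G b) {i : ι} {x y z : V} (h : Tr G b i x y z) (h1 : inner G b i s(x, y))
    (h2 : inner G b i s(x, z)) (h3 : inner G b i s(y, z)) :
    3 ≤ DD G b i s(x, y) + DD G b i s(x, z) + DD G b i s(y, z) := by
  classical
  unfold DD
  have hd : dl G b i = 3 := by rw [dl3 h, if_pos h1, if_pos h2, if_pos h3]; norm_num
  have hout : ∀ e, out G b i e = 0 := by
    intro e
    unfold out
    rw [if_neg (by omega), if_neg (by omega)]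
  rw [qq_inner h.isT h1, qq_inner h.isT h2, qq_inner h.isT h3, hout, hout, hout]
  have hT : T G b x y z := ⟨i, h⟩
  obtain ⟨u, hu, hTu⟩ := (S.inner_iff h).1 h1
  obtain ⟨v, hv, hTv⟩ := (S.inner_iff h.s23).1 h2
  obtain ⟨w, hw, hTw⟩ := (S.inner_iff h.s12.s23).1 h3
  by_cases huv : u = v
  · subst huv
    by_cases huw : u = w
    · subst huw
      exfalso
      obtain ⟨j, hj⟩ := hTu
      obtain ⟨k, hk⟩ := hTv
      obtain ⟨l, hl⟩ := hTw
      have n1 := hj.a2.ne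
      have n2 := hj.a3.ne
      have n3 := hl.a3.ne
      have m1 := h.a1.ne
      have m2 := h.a2.ne
      have m3 := h.a3.ne
      have q1 : i ≠ j := h.ne hj m2.symm m3.symm n3
      have q2 : i ≠ k := h.s23.ne hk m1.symm m3 n2
      have q3 : i ≠ l := h.s12.s23.ne hl m1 m2 n1
      have q4 : j ≠ k := (hj.s23.s12.s23).s12.s12.s23.s12.ne hk m1.symm m3 n2
      have q5 : j ≠ l := hj.s12.s23.ne hl m1 m2 n1
      have q6 : k ≠ l := hk.s12.s23.ne hl m1 m2 n1
      refine S.four q1 q2 q3 q4 q5 q6 ?_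
      rw [h.eq, hj.eq, hk.eq, hl.eq]
      simp only [tri]
      have e1 := zzE (sg x y)
      have e2 := zzE (sg x z)
      have e3 := zzE (sg y z)
      have e4 := zzE (sg x u)
      have e5 := zzE (sg y u)
      have e6 := zzE (sg z u)
      linear_combination e1 + e2 + e3 + e4 + e5 + e6
    · -- apex u for xy, xz ; w for yz
      have := S.case3w (h.s12.s23) (hTv.s12) (hTu) hTw hw (Ne.symm huw)
      rw [Sym2.eq_swap (a := x) (b := z)]
      omega
  · by_cases huw : u = w
    · subst huw
      have := S.case3w (h.s23) hTw.s12 hTu.s12 hTv hv (Ne.symm huv)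
      rw [Sym2.eq_swap (a := x) (b := y), Sym2.eq_swap (a := y) (b := z)]
      omega
    · by_cases hvw : v = w
      · subst hvw
        have := S.case3w h hTw hTv.s12 hTu hu huv
        rw [Sym2.eq_swap (a := x) (b := z)]
        omega
      · exfalso
        have g1 := hT.a1
        have g2 := hT.a2
        have g3 := hT.a3
        have g4 := hTu.a2
        have g5 := hTu.a3
        have g6 := hTv.a2
        have g7 := hTv.a3
        have g8 := hTw.a2
        have g9 := hTw.a3
        exact hexS S.th x u y w z v

theorem Sys.tri_all (S : Sys G b) {i : ι} (hi : isT G b i) :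
    36 ≤ ∑ e ∈ supp (b i), (11 - qq G b i e + rin G b i e) := by
  obtain ⟨x, y, z, h⟩ := hi
  have key : 3 ≤ DD G b i s(x, y) + DD G b i s(x, z) + DD G b i s(y, z) := by
    have sw : ∀ a c : V, s(a, c) = s(c, a) := fun a c => Sym2.eq_swap
    by_cases h1 : inner G b i s(x, y) <;> by_cases h2 : inner G b i s(x, z) <;>
      by_cases h3 : inner G b i s(y, z)
    · exact S.case3 h h1 h2 h3
    · exact S.case2 h h1 h2 h3
    · have := S.case2 h.s12 (by rwa [sw]) h3 h2
      rw [sw y x] at this; omega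
    · exact case1 h h1 h2 h3
    · have := S.case2 h.s23.s12 (by rwa [sw]) (by rwa [sw]) h1
      rw [sw z x, sw z y] at this; omega
    · have := case1 h.s23 h2 h1 (by rwa [sw])
      rw [sw z y] at this; omega
    · have := case1 h.s12.s23 h3 (by rwa [sw]) (by rwa [sw])
      rw [sw y x, sw z x] at this; omega
    · exact S.case0 h h1 h2 h3
  rw [sum3 h]
  unfold DD at key
  omega

/-- The face count. -/
theorem Sys.count (S : Sys G b) : 18 * Fintype.card ι ≤ 11 * G.edgeSet.ncard := by
  classical
  have h1 : (36 : ℤ) * Fintype.card ι ≤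
      ∑ i, ∑ e ∈ supp (b i), (11 - qq G b i e + rin G b i e) := by
    have : ∑ i : ι, (36 : ℤ) = 36 * Fintype.card ι := by simp [mul_comm]
    rw [← this]
    apply Finset.sum_le_sum
    intro i _
    by_cases hi : isT G b i
    · exact S.tri_all hi
    · exact S.nontri hi
  have h2 : ∑ i, ∑ e ∈ supp (b i), (11 - qq G b i e + rin G b i e) =
      ∑ e ∈ G.edgeFinset, ∑ i ∈ univ.filter (fun i => b i e ≠ 0), (11 - qq G b i e + rin G b i e) := by
    apply Finset.sum_comm'
    intro i e
    simp only [Finset.mem_univ, true_and, mem_supp, Finset.mem_filter, SimpleGraph.mem_edgeFinset]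
    constructor
    · intro h
      refine ⟨h, ?_⟩
      induction e using Sym2.ind with
      | _ x y => exact Cyc_adj (S.mem i) h
    · exact fun h => h.1
  have h3 : ∑ e ∈ G.edgeFinset, ∑ i ∈ univ.filter (fun i => b i e ≠ 0),
      (11 - qq G b i e + rin G b i e) ≤ ∑ e ∈ G.edgeFinset, (22 : ℤ) :=
    Finset.sum_le_sum fun e _ => S.edge e
  rw [Finset.sum_const, nsmul_eq_mul] at h3
  have h4 : G.edgeSet.ncard = G.edgeFinset.card := by
    rw [← SimpleGraph.coe_edgeFinset, Set.ncard_coe_finset]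
  rw [h4]
  omega

end base
end ML6

open SimpleGraph Finset

namespace ML6

set_option linter.unusedSectionVars false
set_option linter.unusedSimpArgs false
set_option linter.unusedVariables false
set_option linter.unnecessarySimpa false
set_option linter.style.longLine false

section base
variable {V : Type*} [Fintype V] [DecidableEq V]

/-- The component sums at chosen roots. -/
noncomputable def psi (G : SimpleGraph V) (B : Set V) : (V → ZMod 2) →ₗ[ZMod 2] (B → ZMod 2) := by
  classical
  exact
  { toFun := fun f c => ∑ u, if G.Reachable c u then f u else 0
    map_add' := by
      intro f g; funext c
      simp only [Pi.add_apply, ← Finset.sum_add_distrib]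
      refine Finset.sum_congr rfl fun u _ => ?_
      split_ifs <;> simp
    map_smul' := by
      intro r f; funext c
      simp only [Pi.smul_apply, smul_eq_mul, RingHom.id_apply, Finset.mul_sum]
      refine Finset.sum_congr rfl fun u _ => ?_
      split_ifs <;> simp }

theorem psi_apply (G : SimpleGraph V) (B : Set V) (f : V → ZMod 2) (c : B)
    [DecidablePred fun u => G.Reachable c u] :
    psi G B f c = ∑ u, if G.Reachable c u then f u else 0 := by
  unfold psi
  simp only [LinearMap.coe_mk, AddHom.coe_mk]
  refine Finset.sum_congr rfl fun u _ => ?_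
  congr

theorem psi_bd (G : SimpleGraph V) (B : Set V) (z : EV V) (hz : ∀ e ∉ G.edgeSet, z e = 0) :
    psi G B (bd z) = 0 := by
  classical
  funext c
  rw [psi_apply]
  simp only [bd_apply, Pi.zero_apply]
  have : ∀ u, (if G.Reachable c u then ∑ w, z s(u, w) else 0) =
      ∑ w, if G.Reachable c u then z s(u, w) else 0 := by
    intro u; split_ifs <;> simp
  simp only [this]
  refine symm_sum_zero (fun u w => if G.Reachable c u then z s(u, w) else 0) ?_ ?_
  · intro u w
    by_cases h : G.Adj u w
    · have : G.Reachable c u ↔ G.Reachable c w :=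
        ⟨fun h' => h'.trans h.reachable, fun h' => h'.trans h.symm.reachable⟩
      simp only [this, Sym2.eq_swap]
    · have h1 : z s(u, w) = 0 := hz _ h
      have h2 : z s(w, u) = 0 := by rw [Sym2.eq_swap]; exact h1
      simp [h1, h2]
  · intro u
    have h1 : z s(u, u) = 0 := hz _ (by simp)
    simp [h1]

theorem psi_surj (G : SimpleGraph V) (B : Set V)
    (hB : ∀ x ∈ B, ∀ y ∈ B, G.Reachable x y → x = y) : Function.Surjective (psi G B) := by
  classical
  intro g
  refine ⟨fun u => if h : u ∈ B then g ⟨u, h⟩ else 0, ?_⟩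
  funext c
  rw [psi_apply, Finset.sum_eq_single c.1]
  · simp [SimpleGraph.Reachable.refl]
  · intro u _ hu
    split_ifs with h1 h2
    · exact absurd (hB _ c.2 _ h2 h1).symm hu
    · rfl
    · rfl
  · simp

theorem cyc_dim (G : SimpleGraph V) (B : Set V)
    (hB : ∀ x ∈ B, ∀ y ∈ B, G.Reachable x y → x = y) :
    G.edgeSet.ncard + B.ncard ≤ Fintype.card V + Module.finrank (ZMod 2) (Cyc G) := by
  classical
  let ext := Function.ExtendByZero.linearMap (ZMod 2) (Subtype.val : G.edgeSet → Sym2 V)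
  have ext_on : ∀ (f : G.edgeSet → ZMod 2) (e : G.edgeSet), ext f e = f e := by
    intro f e
    exact Function.Injective.extend_apply Subtype.val_injective _ _ _
  have ext_off : ∀ (f : G.edgeSet → ZMod 2) (e : Sym2 V), e ∉ G.edgeSet → ext f e = 0 := by
    intro f e he
    refine Function.extend_apply' _ _ _ ?_
    rintro ⟨a, rfl⟩
    exact he a.2
  let φ : (G.edgeSet → ZMod 2) →ₗ[ZMod 2] (V → ZMod 2) := bd.comp ext
  have h1 := LinearMap.finrank_range_add_finrank_ker φ
  have h2 := LinearMap.finrank_range_add_finrank_ker (psi G B)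
  rw [LinearMap.range_eq_top.2 (psi_surj G B hB), finrank_top] at h2
  simp only [Module.finrank_fintype_fun_eq_card] at h1 h2
  have h3 : Module.finrank (ZMod 2) φ.range ≤ Module.finrank (ZMod 2) (psi G B).ker := by
    apply Submodule.finrank_mono
    rintro _ ⟨f, rfl⟩
    exact psi_bd G B (ext f) (ext_off f)
  have h4 : Module.finrank (ZMod 2) φ.ker ≤ Module.finrank (ZMod 2) (Cyc G) := by
    let g : φ.ker →ₗ[ZMod 2] Cyc G := (ext.comp φ.ker.subtype).codRestrict (Cyc G) (by
      intro f
      exact mem_Cyc.2 ⟨ext_off f.1, f.2⟩)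
    apply LinearMap.finrank_le_finrank_of_injective (f := g)
    intro f f' hf
    have hf' : ext f.1 = ext f'.1 := congrArg Subtype.val hf
    apply Subtype.ext
    funext e
    have e1 := ext_on f.1 e
    have e2 := ext_on f'.1 e
    rw [← e1, ← e2, hf']
  have h5 : G.edgeSet.ncard = Fintype.card G.edgeSet := by
    rw [← Nat.card_coe_set_eq, Nat.card_eq_fintype_card]
  have h6 : B.ncard = Fintype.card B := by
    rw [← Nat.card_coe_set_eq, Nat.card_eq_fintype_card]
  omega

theorem density (G : SimpleGraph V) (hp : IsPlanar G) (hG : ¬ HasTheta6 G) (B : Set V)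
    (hB : ∀ x ∈ B, ∀ y ∈ B, G.Reachable x y → x = y) :
    7 * G.edgeSet.ncard + 18 * B.ncard ≤ 18 * Fintype.card V := by
  classical
  obtain ⟨ι, _, b, hb⟩ := planar_ML G hp
  obtain ⟨κ, a, ha, hs, hl⟩ := exists_linearIndependent' (ZMod 2) b
  have : Finite κ := Finite.of_injective a ha
  have := Fintype.ofFinite κ
  have hspan : Submodule.span (ZMod 2) (Set.range b) = Cyc G := by
    apply le_antisymm
    · rw [Submodule.span_le]
      rintro _ ⟨i, rfl⟩
      exact hb.mem i
    · intro z hz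
      obtain ⟨c, rfl⟩ := hb.span z hz
      exact Submodule.sum_mem _ fun i _ => Submodule.smul_mem _ _ (Submodule.subset_span ⟨i, rfl⟩)
  have hk : Module.finrank (ZMod 2) (Cyc G) = Fintype.card κ := by
    rw [← hspan, ← hs]
    exact finrank_span_eq_card hl
  have S : Sys G (b ∘ a) := by
    refine ⟨fun i => hb.mem _, ?_, ?_, hG, hp⟩
    · intro i j k e h1 h2 h3
      by_contra hc
      push Not at hc
      have h4 := hb.cov_le e
      have h5 : ({a i, a j, a k} : Finset ι) ⊆ univ.filter (fun i => b i e ≠ 0) := by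
        intro x hx
        simp only [Finset.mem_insert, Finset.mem_singleton] at hx
        simp only [Finset.mem_filter, Finset.mem_univ, true_and]
        rcases hx with rfl | rfl | rfl <;> assumption
      have h6 := Finset.card_le_card h5
      rw [Finset.card_eq_three.2 ⟨a i, a j, a k, ha.ne hc.1, ha.ne hc.2.1, ha.ne hc.2.2, rfl⟩] at h6
      unfold cov at h4
      have : (3 : ℕ) ≤ 2 := le_trans h6 (by convert h4)
      omega
    · intro s hs0
      rw [linearIndependent_iff'] at hl
      by_contra hne
      obtain ⟨i, hi⟩ := Finset.nonempty_iff_ne_empty.2 hne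
      have := hl s (fun _ => 1) (by simpa using hs0) i hi
      exact one_ne_zero this
  have h1 := S.count
  have h2 := cyc_dim G B hB
  omega

end base

section ear
variable {V : Type*}

theorem ear {G : SimpleGraph V} {B : Set V} (hB : IsBlock G B) {x y : V} (hx : x ∈ B) (hy : y ∈ B)
    (p : G.Walk x y) (hp : p.IsPath) : ∀ u ∈ p.support, u ∈ B := by
  classical
  have hsub : B ⊆ B ∪ {u | u ∈ p.support} := Set.subset_union_left
  have pre : ∀ (A D : Set V), A ⊆ D → (G.induce A).Preconnected →
      (∀ u (hu : u ∈ D), ∃ c, ∃ (hc : c ∈ A), ∃ q : G.Walk u c, ∀ t ∈ q.support, t ∈ D) →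
      (G.induce D).Preconnected := by
    intro A D hAD hA hr
    rintro ⟨u, hu⟩ ⟨v, hv⟩
    obtain ⟨c, hc, q, hq⟩ := hr u hu
    obtain ⟨d, hd, q', hq'⟩ := hr v hv
    have r1 : (G.induce D).Reachable ⟨u, hu⟩ ⟨c, hAD hc⟩ := ⟨q.induce D hq⟩
    have r2 : (G.induce D).Reachable ⟨v, hv⟩ ⟨d, hAD hd⟩ := ⟨q'.induce D hq'⟩
    have r3 : (G.induce D).Reachable ⟨c, hAD hc⟩ ⟨d, hAD hd⟩ :=
      (hA ⟨c, hc⟩ ⟨d, hd⟩).map (G.induceHomOfLE hAD).toHom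
    exact (r1.trans r3).trans r2.symm
  have h2 : IsTwoConnSet G (B ∪ {u | u ∈ p.support}) := by
    refine ⟨⟨x, Or.inl hx⟩, ?_, ?_⟩
    · refine pre B _ hsub hB.1.2.1 ?_
      rintro u (hu | hu)
      · exact ⟨u, hu, .nil, by simpa using Or.inl hu⟩
      · refine ⟨x, hx, (p.takeUntil u hu).reverse, ?_⟩
        intro t ht
        rw [SimpleGraph.Walk.support_reverse, List.mem_reverse] at ht
        exact Or.inr (p.support_takeUntil_subset hu ht)
    · intro v _
      have hA : (G.induce (B \ {v})).Preconnected := by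
        by_cases hv : v ∈ B
        · exact hB.1.2.2 v hv
        · rw [Set.diff_singleton_eq_self hv]; exact hB.1.2.1
      refine pre (B \ {v}) _ (Set.diff_subset_diff_left hsub) hA ?_
      rintro u ⟨hu | hu, huv⟩
      · exact ⟨u, ⟨hu, huv⟩, .nil, by
          intro t ht
          simp only [SimpleGraph.Walk.support_nil, List.mem_singleton] at ht
          subst ht
          exact ⟨Or.inl hu, huv⟩⟩
      · have huv' : u ≠ v := huv
        by_cases h1 : v ∈ (p.takeUntil u hu).support
        · have h3 : v ∉ (p.dropUntil u hu).support := by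
            intro h3
            have hn := hp.support_nodup
            rw [← p.take_spec hu, SimpleGraph.Walk.support_append] at hn
            rw [SimpleGraph.Walk.mem_support_iff] at h3
            rcases h3 with h3 | h3
            · exact huv' h3.symm
            · exact (List.nodup_append.1 hn).2.2 v h1 v h3 rfl
          refine ⟨y, ⟨hy, ?_⟩, p.dropUntil u hu, ?_⟩
          · rintro rfl
            exact h3 (SimpleGraph.Walk.end_mem_support _)
          · intro t ht
            refine ⟨Or.inr (p.support_dropUntil_subset hu ht), ?_⟩
            rintro rfl
            exact h3 ht
        · refine ⟨x, ⟨hx, ?_⟩, (p.takeUntil u hu).reverse, ?_⟩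
          · rintro rfl
            exact h1 (SimpleGraph.Walk.start_mem_support _)
          · intro t ht
            rw [SimpleGraph.Walk.support_reverse, List.mem_reverse] at ht
            refine ⟨Or.inr (p.support_takeUntil_subset hu ht), ?_⟩
            rintro rfl
            exact h1 ht
  intro u hu
  rw [hB.2 _ h2 hsub]
  exact Or.inr hu

/-- `G` without the edges inside `B`. -/
def rest (G : SimpleGraph V) (B : Set V) : SimpleGraph V where
  Adj u v := G.Adj u v ∧ ¬ (u ∈ B ∧ v ∈ B)
  symm := ⟨fun u v h => ⟨h.1.symm, fun h' => h.2 ⟨h'.2, h'.1⟩⟩⟩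
  loopless := ⟨fun u h => h.1.ne rfl⟩

theorem rest_le (G : SimpleGraph V) (B : Set V) : rest G B ≤ G := fun _ _ h => h.1

theorem rest_sep {G : SimpleGraph V} {B : Set V} (hB : IsBlock G B) :
    ∀ x ∈ B, ∀ y ∈ B, (rest G B).Reachable x y → x = y := by
  classical
  intro x hx y hy h
  obtain ⟨p, hp⟩ := h.exists_isPath
  by_contra hne
  have h1 := ear hB hx hy (p.mapLe (rest_le G B)) ((SimpleGraph.Walk.mapLe_isPath _).2 hp)
  cases p with
  | nil => exact hne rfl
  | cons h q =>
    refine h.2 ⟨hx, h1 _ ?_⟩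
    simp

theorem edge_le [Finite V] (G : SimpleGraph V) (B : Set V) :
    G.edgeSet.ncard ≤ (G.induce B).edgeSet.ncard + (rest G B).edgeSet.ncard := by
  have h : G.edgeSet ⊆ (Set.image (Sym2.map Subtype.val) (G.induce B).edgeSet) ∪ (rest G B).edgeSet := by
    intro e he
    induction e using Sym2.ind with
    | _ u v =>
    by_cases h : u ∈ B ∧ v ∈ B
    · left
      exact ⟨s(⟨u, h.1⟩, ⟨v, h.2⟩), he, rfl⟩
    · right
      exact ⟨he, h⟩
  have h1 := Set.ncard_le_ncard h (Set.toFinite _)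
  have h2 := Set.ncard_union_le (Set.image (Sym2.map Subtype.val) (G.induce B).edgeSet) (rest G B).edgeSet
  have h3 := Set.ncard_image_le (f := Sym2.map Subtype.val) (s := (G.induce B).edgeSet) (Set.toFinite _)
  omega

end ear
end ML6

theorem theta6_good_block_bound {V : Type*} [Fintype V] (n nb : ℕ)
    (G : SimpleGraph V) (hcard : Fintype.card V = n)
    (hplanar : IsPlanar G) (hfree : ¬ HasTheta6 G)
    (B : Set V) (hB : IsBlock G B) (hnb : B.ncard = nb)
    (hBe : ((G.induce B).edgeSet.ncard : ℚ) ≤ 18 / 7 * nb - 48 / 7) :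
    (G.edgeSet.ncard : ℚ) ≤ 18 / 7 * n - 48 / 7 := by
  classical
  have hle := ML6.rest_le G B
  have hf : ¬ HasTheta6 (ML6.rest G B) := by
    rintro ⟨v, h1, h2, i, j, h3, h4, h5, h6⟩
    exact hfree ⟨v, h1, fun i => hle (h2 i), i, j, h3, h4, h5, hle h6⟩
  have h1 := ML6.density (ML6.rest G B) (ML6.IsPlanar_mono hle hplanar) hf B (ML6.rest_sep hB)
  have h2 := ML6.edge_le G B
  rw [hcard, hnb] at h1
  have h1' : (7 : ℚ) * (ML6.rest G B).edgeSet.ncard + 18 * nb ≤ 18 * n := by exact_mod_cast h1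
  have h2' : (G.edgeSet.ncard : ℚ) ≤ (G.induce B).edgeSet.ncard + (ML6.rest G B).edgeSet.ncard := by
    exact_mod_cast h2
  linarith
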